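/- Let f : ℍ → ℝ be continuous, SL(2,ℤ)-invariant, and compactly supported in the quotient. Let δ > 0 and let α, β : (0,1) → ℝ be functions with β(ε) − α(ε) ≥ ε^{1/2−δ} for all ε ∈ (0,1). Then lim_{ε→0⁺} (1/(β(ε)−α(ε))) · ∫_{α(ε)}^{β(ε)} f(x + iε) dx = (3/π) · ∫_F f(x+iy) · y⁻² dx dy. -/

import Mathlib

open MeasureTheory Complex

/-- The standard fundamental domain for `SL(2,ℤ)` acting on the upper half-plane, viewed as a
subset of `ℝ × ℝ` (coordinates `(x, y)` with `z = x + iy`). -/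
def fundDom : Set (ℝ × ℝ) :=
  {p | |p.1| < 1 / 2 ∧ 1 < p.1 ^ 2 + p.2 ^ 2 ∧ 0 < p.2}

section
namespace Horo

/-! ### Divisor bound -/

lemma pow4_le (v : ℕ) : (v + 1) ^ 4 ≤ 41 * 2 ^ v := by
  by_cases h : v < 10
  · interval_cases v <;> norm_num
  · push Not at h
    induction v, h using Nat.le_induction with
    | base => norm_num
    | succ n hn ih =>
      have : (n + 1 + 1) ^ 4 ≤ 2 * (n + 1) ^ 4 := by
        obtain ⟨k, rfl⟩ := Nat.exists_eq_add_of_le hn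
        ring_nf
        nlinarith [sq_nonneg k, pow_nonneg (Nat.zero_le k) 3, pow_nonneg (Nat.zero_le k) 4]
      calc _ ≤ 2 * (n + 1) ^ 4 := this
        _ ≤ 2 * (41 * 2 ^ n) := by gcongr
        _ = _ := by ring

lemma divisor_bound {n : ℕ} (hn : n ≠ 0) : (n.divisors.card) ^ 4 ≤ 41 ^ 16 * n := by
  rw [Nat.card_divisors hn, ← Finset.prod_pow]
  have h1 : ∀ p ∈ n.primeFactors, (n.factorization p + 1) ^ 4 ≤
      (if p < 16 then 41 else 1) * p ^ n.factorization p := by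
    intro p hp
    have hp2 : 2 ≤ p := (Nat.prime_of_mem_primeFactors hp).two_le
    split_ifs with h
    · exact (pow4_le _).trans (by gcongr)
    · push Not at h
      calc (n.factorization p + 1) ^ 4 ≤ (2 ^ n.factorization p) ^ 4 := by
            gcongr; exact Nat.lt_two_pow_self
        _ = 16 ^ n.factorization p := by rw [← pow_mul, mul_comm, pow_mul]; norm_num
        _ ≤ p ^ n.factorization p := by gcongr
        _ = _ := by ring
  refine (Finset.prod_le_prod' h1).trans ?_
  rw [Finset.prod_mul_distrib]
  have h2 : ∏ p ∈ n.primeFactors, p ^ n.factorization p = n :=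
    Nat.prod_factorization_pow_eq_self hn
  rw [h2]
  gcongr
  rw [Finset.prod_ite, Finset.prod_const_one, mul_one, Finset.prod_const]
  apply Nat.pow_le_pow_right (by norm_num)
  calc _ ≤ (Finset.range 16).card := Finset.card_le_card (by intro p; simp)
    _ = 16 := by simp

lemma le_totient_mul_divisors {n : ℕ} (hn : n ≠ 0) : n ≤ n.totient * n.divisors.card := by
  conv_lhs => rw [← Nat.sum_totient n]
  calc _ ≤ ∑ m ∈ n.divisors, n.totient := by
        apply Finset.sum_le_sum
        intro m hm
        exact Nat.le_of_dvd (Nat.totient_pos.2 (Nat.pos_of_ne_zero hn))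
          (Nat.totient_dvd_of_dvd (Nat.dvd_of_mem_divisors hm))
    _ = _ := by simp [mul_comm]

/-! ### Kloosterman sums -/

noncomputable def kl (c : ℕ) [NeZero c] (a b : ZMod c) : ℂ :=
  ∑ x : (ZMod c)ˣ, ZMod.stdAddChar (a * (x : ZMod c) + b * ((x⁻¹ : (ZMod c)ˣ) : ZMod c))

section
variable {c : ℕ} [NeZero c]

lemma kl_unit (a b : ZMod c) (u : (ZMod c)ˣ) :
    kl c (a * u) (b * ((u⁻¹ : (ZMod c)ˣ) : ZMod c)) = kl c a b := by
  unfold kl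
  refine Fintype.sum_equiv (Equiv.mulLeft u) _ _ ?_
  intro x
  simp only [Equiv.coe_mulLeft, mul_inv_rev, Units.val_mul]
  congr 1
  ring

lemma card_ann_le (k : ℕ) (hk : 0 < k) :
    (Finset.univ.filter fun t : ZMod c => (k : ZMod c) * t = 0).card ≤ k := by
  have := IsAddCyclic.card_nsmul_eq_zero_le (α := ZMod c) hk
  simpa [nsmul_eq_mul] using this

lemma card_sol_le (m : ℤ) (hm : m ≠ 0) (s : ZMod c) :
    (Finset.univ.filter fun t : ZMod c => (m : ZMod c) * t = s).card ≤ m.natAbs := by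
  by_cases h : ∃ t0 : ZMod c, (m : ZMod c) * t0 = s
  · obtain ⟨t0, ht0⟩ := h
    refine le_trans ?_ (card_ann_le (c := c) m.natAbs (by omega))
    refine Finset.card_le_card_of_injOn (fun t => t - t0) ?_ ?_
    · intro t ht
      simp only [Finset.coe_filter, Finset.mem_univ, true_and, Set.mem_ofPred_eq] at ht ⊢
      have : (m : ZMod c) * (t - t0) = 0 := by rw [mul_sub, ht, ht0, sub_self]
      rcases Int.natAbs_eq m with h | h
      · rw [h] at this; simpa using this
      · rw [h] at this; push_cast at this
        rw [neg_mul, neg_eq_zero] at this; simpa using this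
    · intro a _ b _ h
      simpa using h
  · push Not at h
    rw [Finset.filter_eq_empty_iff.2 (fun t _ => h t)]; simp

lemma gcd_ann (a : ℕ) (t : ZMod c) (h : (a : ZMod c) * t = 0) :
    ((Nat.gcd a c : ℕ) : ZMod c) * t = 0 := by
  have h1 : ((Nat.gcd a c : ℕ) : ZMod c) = (a : ZMod c) * (Nat.gcdA a c : ZMod c) := by
    have := congrArg (fun z : ℤ => (z : ZMod c)) (Nat.gcd_eq_gcd_ab a c)
    simpa using this
  rw [h1, mul_right_comm, h, zero_mul]

/-- solutions of `a*t=s` at most gcd -/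
lemma card_sol_le_gcd (a : ℕ) (s : ZMod c) :
    (Finset.univ.filter fun t : ZMod c => (a : ZMod c) * t = s).card ≤ Nat.gcd a c := by
  have hg : 0 < Nat.gcd a c := Nat.gcd_pos_of_pos_right _ (Nat.pos_of_ne_zero (NeZero.ne c))
  by_cases h : ∃ t0 : ZMod c, (a : ZMod c) * t0 = s
  · obtain ⟨t0, ht0⟩ := h
    refine le_trans ?_ (card_ann_le (c := c) _ hg)
    refine Finset.card_le_card_of_injOn (fun t => t - t0) ?_ ?_
    · intro t ht
      simp only [Finset.coe_filter, Finset.mem_univ, true_and, Set.mem_ofPred_eq] at ht ⊢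
      exact gcd_ann a _ (by rw [mul_sub, ht, ht0, sub_self])
    · intro a _ b _ h
      simpa using h
  · push Not at h
    rw [Finset.filter_eq_empty_iff.2 (fun t _ => h t)]; simp

lemma sum_gcd_le : ∑ B : ZMod c, Nat.gcd B.val c ≤ c * c.divisors.card := by
  have hc : c ≠ 0 := NeZero.ne c
  have h0 : ∀ B : ZMod c, Nat.gcd B.val c ≤
      ∑ g ∈ c.divisors, if g ∣ B.val then g else 0 := by
    intro B
    have hm : Nat.gcd B.val c ∈ c.divisors := Nat.mem_divisors.2 ⟨Nat.gcd_dvd_right _ _, hc⟩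
    refine le_trans ?_ (Finset.single_le_sum (f := fun g => if g ∣ B.val then g else 0)
      (fun _ _ => Nat.zero_le _) hm)
    simp [Nat.gcd_dvd_left]
  calc _ ≤ ∑ B : ZMod c, ∑ g ∈ c.divisors, (if g ∣ B.val then g else 0) :=
        Finset.sum_le_sum fun B _ => h0 B
    _ = ∑ g ∈ c.divisors, ∑ B : ZMod c, (if g ∣ B.val then g else 0) := Finset.sum_comm
    _ ≤ ∑ g ∈ c.divisors, c := by
        apply Finset.sum_le_sum
        intro g hg
        obtain ⟨k, hk⟩ := Nat.dvd_of_mem_divisors hg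
        rw [← Finset.sum_filter, Finset.sum_const, smul_eq_mul]
        have : (Finset.univ.filter fun B : ZMod c => g ∣ B.val).card ≤ (Finset.range k).card := by
          have hgpos : 0 < g := Nat.pos_of_mem_divisors hg
          refine Finset.card_le_card_of_injOn (fun B => B.val / g) ?_ ?_
          · intro B _
            simp only [Finset.coe_range, Set.mem_Iio]
            rw [Nat.div_lt_iff_lt_mul hgpos, mul_comm, ← hk]
            exact ZMod.val_lt B
          · intro A hA B hB h
            simp only [Finset.coe_filter, Finset.mem_univ, true_and, Set.mem_ofPred_eq] at hA hB h
            apply ZMod.val_injective c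
            rw [← Nat.div_mul_cancel hA, ← Nat.div_mul_cancel hB, h]
        rw [Finset.card_range] at this
        calc _ ≤ k * g := Nat.mul_le_mul_right _ this
          _ = c := by rw [hk, mul_comm]
    _ = _ := by simp [mul_comm]

lemma triple_count :
    (Finset.univ.filter fun x : ZMod c × ZMod c × ZMod c =>
      (x.1 + x.2.1) * (x.2.2 - x.1) * (x.2.2 - x.2.1) = 0).card ≤
      2 * (c * c.divisors.card) ^ 2 := by
  have hmap : (Finset.univ.filter fun x : ZMod c × ZMod c × ZMod c =>
      (x.1 + x.2.1) * (x.2.2 - x.1) * (x.2.2 - x.2.1) = 0).card ≤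
      ∑ p : ZMod c × ZMod c, (Finset.univ.filter fun t : ZMod c =>
        ((2 * p.1.val * p.2.val : ℕ) : ZMod c) * t = p.1 * p.2 * (p.1 + p.2)).card := by
    rw [← Finset.card_sigma]
    refine Finset.card_le_card_of_injOn
      (fun x => ⟨(x.2.2 - x.1, x.2.2 - x.2.1), x.2.2⟩) ?_ ?_
    · intro x hx
      simp only [Finset.coe_filter, Finset.mem_univ, true_and, Set.mem_ofPred_eq] at hx
      simp only [Finset.coe_sigma, Set.mem_sigma_iff, Finset.coe_univ, Set.mem_univ, true_and,
        Finset.coe_filter, Finset.mem_univ, Set.mem_ofPred_eq]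
      push_cast
      simp only [ZMod.natCast_val, ZMod.cast_id', id_eq]
      linear_combination hx
    · rintro ⟨a, b, d⟩ _ ⟨a', b', d'⟩ _ h
      simp only [Sigma.mk.injEq, Prod.mk.injEq, heq_eq_eq] at h
      obtain ⟨⟨h1, h2⟩, h3⟩ := h
      subst h3
      simp only [sub_right_inj] at h1 h2
      simp [h1, h2]
  refine hmap.trans ?_
  calc _ ≤ ∑ p : ZMod c × ZMod c, 2 * (Nat.gcd p.1.val c * Nat.gcd p.2.val c) := by
        apply Finset.sum_le_sum
        intro p _
        refine (card_sol_le_gcd _ _).trans ?_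
        have hg : 0 < c := Nat.pos_of_ne_zero (NeZero.ne c)
        calc Nat.gcd (2 * p.1.val * p.2.val) c
            ≤ Nat.gcd (2 * p.1.val) c * Nat.gcd p.2.val c :=
              Nat.le_of_dvd (Nat.mul_pos (Nat.gcd_pos_of_pos_right _ hg)
                (Nat.gcd_pos_of_pos_right _ hg)) (Nat.gcd_mul_left_dvd_mul_gcd _ _ _)
          _ ≤ (Nat.gcd 2 c * Nat.gcd p.1.val c) * Nat.gcd p.2.val c := by
              gcongr
              exact Nat.le_of_dvd (Nat.mul_pos (Nat.gcd_pos_of_pos_right _ hg)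
                (Nat.gcd_pos_of_pos_right _ hg)) (Nat.gcd_mul_left_dvd_mul_gcd _ _ _)
          _ ≤ (2 * Nat.gcd p.1.val c) * Nat.gcd p.2.val c := by
              gcongr
              exact Nat.gcd_le_left _ (by norm_num)
          _ = _ := by ring
    _ = 2 * (∑ B : ZMod c, Nat.gcd B.val c) ^ 2 := by
        rw [← Finset.mul_sum, sq, Finset.sum_mul_sum, Fintype.sum_prod_type]
    _ ≤ _ := by gcongr; exact sum_gcd_le

lemma char_sum (t : ZMod c) :
    ∑ a : ZMod c, ZMod.stdAddChar (a * t) = if t = 0 then (c : ℂ) else 0 := by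
  have := AddChar.sum_mulShift (R := ZMod c) t (ZMod.isPrimitive_stdAddChar c)
  simpa [ZMod.card] using this

abbrev Quad (c : ℕ) := ((ZMod c)ˣ × (ZMod c)ˣ) × ((ZMod c)ˣ × (ZMod c)ˣ)

def qs (q : Quad c) : ZMod c := (q.1.1 : ZMod c) + q.1.2 - (q.2.1 + q.2.2)
def qt (q : Quad c) : ZMod c := ((q.1.1⁻¹ : (ZMod c)ˣ) : ZMod c) + ((q.1.2⁻¹ : (ZMod c)ˣ) : ZMod c)
  - (((q.2.1⁻¹ : (ZMod c)ˣ) : ZMod c) + ((q.2.2⁻¹ : (ZMod c)ˣ) : ZMod c))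

lemma kl_pow_four (a b : ZMod c) :
    ((‖kl c a b‖ ^ 4 : ℝ) : ℂ) =
      ∑ q : Quad c, ZMod.stdAddChar (a * qs q) * ZMod.stdAddChar (b * qt q) := by
  have h1 : ((‖kl c a b‖ ^ 4 : ℝ) : ℂ) =
      (kl c a b * kl c a b) * (starRingEnd ℂ (kl c a b) * starRingEnd ℂ (kl c a b)) := by
    have := Complex.mul_conj (kl c a b)
    rw [Complex.normSq_eq_norm_sq] at this
    push_cast at this ⊢
    calc _ = ((‖kl c a b‖ : ℂ) ^ 2) ^ 2 := by ring
      _ = (kl c a b * starRingEnd ℂ (kl c a b)) ^ 2 := by rw [this]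
      _ = _ := by ring
  have h2 : starRingEnd ℂ (kl c a b) = ∑ x : (ZMod c)ˣ,
      ZMod.stdAddChar (-(a * (x : ZMod c) + b * ((x⁻¹ : (ZMod c)ˣ) : ZMod c))) := by
    unfold kl
    rw [map_sum]
    refine Finset.sum_congr rfl fun x _ => ?_
    rw [AddChar.map_neg_eq_conj]
  rw [h1, h2, kl, Finset.sum_mul_sum, Finset.sum_mul_sum, ← Fintype.sum_prod_type',
    ← Fintype.sum_prod_type', Finset.sum_mul_sum, ← Fintype.sum_prod_type']
  refine Finset.sum_congr rfl fun q _ => ?_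
  simp only [← AddChar.map_add_eq_mul]
  congr 1
  unfold qs qt
  ring

lemma fourth_moment :
    ∑ p : ZMod c × ZMod c, ‖kl c p.1 p.2‖ ^ 4 =
      (c : ℝ) ^ 2 * (Finset.univ.filter fun q : Quad c => qs q = 0 ∧ qt q = 0).card := by
  have : ((∑ p : ZMod c × ZMod c, ‖kl c p.1 p.2‖ ^ 4 : ℝ) : ℂ) =
      (c : ℂ) ^ 2 * (Finset.univ.filter fun q : Quad c => qs q = 0 ∧ qt q = 0).card := by
    rw [Complex.ofReal_sum]
    simp_rw [kl_pow_four]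
    rw [Finset.sum_comm]
    have : ∀ q : Quad c, ∑ p : ZMod c × ZMod c,
        ZMod.stdAddChar (p.1 * qs q) * ZMod.stdAddChar (p.2 * qt q) =
        if qs q = 0 ∧ qt q = 0 then (c : ℂ) ^ 2 else 0 := by
      intro q
      rw [Fintype.sum_prod_type]
      simp only
      rw [← Finset.sum_mul_sum, char_sum, char_sum]
      by_cases h1 : qs q = 0 <;> by_cases h2 : qt q = 0 <;> simp [h1, h2, sq]
    simp_rw [this]
    rw [← Finset.sum_filter, Finset.sum_const, nsmul_eq_mul, mul_comm]
  exact_mod_cast this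

lemma quad_count : (Finset.univ.filter fun q : Quad c => qs q = 0 ∧ qt q = 0).card ≤
    2 * (c * c.divisors.card) ^ 2 := by
  refine le_trans ?_ (triple_count (c := c))
  refine Finset.card_le_card_of_injOn
    (fun q => ((q.1.1 : ZMod c), (q.1.2 : ZMod c), (q.2.1 : ZMod c))) ?_ ?_
  · rintro ⟨⟨x, y⟩, ⟨z, w⟩⟩ hq
    replace hq := (Finset.mem_filter.1 (Finset.mem_coe.1 hq)).2
    refine Finset.mem_coe.2 (Finset.mem_filter.2 ⟨Finset.mem_univ _, ?_⟩)
    simp only [qs, qt] at hq ⊢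
    obtain ⟨h1, h2⟩ := hq
    have hx : (x : ZMod c) * ((x⁻¹ : (ZMod c)ˣ) : ZMod c) = 1 := Units.mul_inv x
    have hy : (y : ZMod c) * ((y⁻¹ : (ZMod c)ˣ) : ZMod c) = 1 := Units.mul_inv y
    have hz : (z : ZMod c) * ((z⁻¹ : (ZMod c)ˣ) : ZMod c) = 1 := Units.mul_inv z
    have hw : (w : ZMod c) * ((w⁻¹ : (ZMod c)ˣ) : ZMod c) = 1 := Units.mul_inv w
    generalize ((x⁻¹ : (ZMod c)ˣ) : ZMod c) = X at *
    generalize ((y⁻¹ : (ZMod c)ˣ) : ZMod c) = Y at *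
    generalize ((z⁻¹ : (ZMod c)ˣ) : ZMod c) = Z at *
    generalize ((w⁻¹ : (ZMod c)ˣ) : ZMod c) = W at *
    generalize (x : ZMod c) = x at *
    generalize (y : ZMod c) = y at *
    generalize (z : ZMod c) = z at *
    generalize (w : ZMod c) = w at *
    have hw' : w = x + y - z := by linear_combination -h1
    have e : (x + y) * (x * y - z * w) = 0 := by
      have : x * y * z * w * (X + Y - (Z + W)) = 0 := by rw [h2, mul_zero]
      have e2 : x * y * z * w * (X + Y - (Z + W)) = z * w * (y + x) - x * y * (w + z) := by
        linear_combination (y * z * w) * hx + (x * z * w) * hy - (x * y * w) * hz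
          - (x * y * z) * hw
      have e3 : z * w * (y + x) - x * y * (w + z) = 0 := by rw [← e2, this]
      have e4 : w + z = x + y := by rw [hw']; ring
      rw [e4] at e3
      linear_combination -e3
    rw [hw'] at e
    linear_combination e
  · rintro ⟨⟨x, y⟩, ⟨z, w⟩⟩ hq ⟨⟨x', y'⟩, ⟨z', w'⟩⟩ hq' h
    replace hq := (Finset.mem_filter.1 (Finset.mem_coe.1 hq)).2
    replace hq' := (Finset.mem_filter.1 (Finset.mem_coe.1 hq')).2
    simp only [qs, Prod.mk.injEq, Units.val_inj] at hq hq' h ⊢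
    obtain ⟨rfl, rfl, rfl⟩ := h
    refine ⟨⟨rfl, rfl⟩, rfl, ?_⟩
    apply Units.ext
    linear_combination hq'.1 - hq.1

lemma kl_bound_aux (m n : ℤ) (hm : m ≠ 0) :
    (c.totient : ℝ) * ‖kl c m n‖ ^ 4 ≤
      m.natAbs * ((c : ℝ) ^ 2 * (2 * (c * c.divisors.card) ^ 2 : ℕ)) := by
  have h1 : (c.totient : ℝ) * ‖kl c m n‖ ^ 4 = ∑ u : (ZMod c)ˣ,
      ‖kl c ((m : ZMod c) * u) ((n : ZMod c) * ((u⁻¹ : (ZMod c)ˣ) : ZMod c))‖ ^ 4 := by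
    simp_rw [kl_unit]
    rw [Finset.sum_const, Finset.card_univ, ZMod.card_units_eq_totient, nsmul_eq_mul]
  rw [h1]
  let g : (ZMod c)ˣ → ZMod c × ZMod c := fun u =>
    ((m : ZMod c) * u, (n : ZMod c) * ((u⁻¹ : (ZMod c)ˣ) : ZMod c))
  have h2 : ∑ u : (ZMod c)ˣ, ‖kl c (g u).1 (g u).2‖ ^ 4 =
      ∑ p : ZMod c × ZMod c, ((Finset.univ.filter fun u => g u = p).card : ℝ)
        * ‖kl c p.1 p.2‖ ^ 4 := by
    rw [← Finset.sum_fiberwise (s := Finset.univ) (g := g)]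
    refine Finset.sum_congr rfl fun p _ => ?_
    rw [← nsmul_eq_mul, ← Finset.sum_const]
    refine Finset.sum_congr rfl fun u hu => ?_
    rw [(Finset.mem_filter.1 hu).2]
  calc _ = ∑ p : ZMod c × ZMod c, ((Finset.univ.filter fun u => g u = p).card : ℝ)
        * ‖kl c p.1 p.2‖ ^ 4 := h2
    _ ≤ ∑ p : ZMod c × ZMod c, (m.natAbs : ℝ) * ‖kl c p.1 p.2‖ ^ 4 := by
        gcongr with p _
        refine le_trans ?_ (card_sol_le (c := c) m hm p.1)
        refine Finset.card_le_card_of_injOn (fun u => (u : ZMod c)) ?_ ?_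
        · intro u hu
          simp only [Finset.coe_filter, Finset.mem_univ, true_and, Set.mem_ofPred_eq] at hu ⊢
          rw [← hu]
        · intro u _ v _ h
          exact Units.ext h
    _ = m.natAbs * ((c : ℝ) ^ 2 *
        (Finset.univ.filter fun q : Quad c => qs q = 0 ∧ qt q = 0).card) := by
        rw [← Finset.mul_sum, fourth_moment]
    _ ≤ _ := by
        gcongr
        exact quad_count

lemma kl_bound_pow (m n : ℤ) (hm : m ≠ 0) :
    (‖kl c m n‖ / c) ^ 16 ≤ ((2 * m.natAbs) ^ 4 * (41 ^ 16) ^ 3 : ℝ) / c := by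
  have hc : c ≠ 0 := NeZero.ne c
  have hcpos : (0 : ℝ) < c := by exact_mod_cast Nat.pos_of_ne_zero hc
  have h1 := kl_bound_aux (c := c) m n hm
  have h2 : (c : ℝ) ≤ c.totient * c.divisors.card := by exact_mod_cast le_totient_mul_divisors hc
  have h3 : (c.divisors.card : ℝ) ^ 4 ≤ 41 ^ 16 * c := by exact_mod_cast divisor_bound hc
  set D : ℝ := (c.divisors.card : ℝ)
  set K := ‖kl c m n‖
  have hD : 0 ≤ D := by positivity
  have hK : 0 ≤ K := norm_nonneg _
  push_cast at h1
  have h4 : c * K ^ 4 ≤ 2 * m.natAbs * c ^ 4 * D ^ 3 := by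
    calc (c : ℝ) * K ^ 4 ≤ (c.totient * D) * K ^ 4 := by gcongr
      _ = D * (c.totient * K ^ 4) := by ring
      _ ≤ D * (m.natAbs * (c ^ 2 * (2 * (c * D) ^ 2))) := by gcongr
      _ = _ := by ring
  have h5 : (K / c) ^ 4 ≤ 2 * m.natAbs * D ^ 3 / c := by
    rw [div_pow, div_le_div_iff₀ (by positivity) hcpos]
    linarith
  calc (K / c) ^ 16 = ((K / c) ^ 4) ^ 4 := by ring
    _ ≤ (2 * m.natAbs * D ^ 3 / c) ^ 4 := by gcongr
    _ = (2 * m.natAbs) ^ 4 * (D ^ 4) ^ 3 / c ^ 4 := by ring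
    _ ≤ (2 * m.natAbs) ^ 4 * (41 ^ 16 * c) ^ 3 / c ^ 4 := by gcongr
    _ = _ := by field_simp

end

/-- The Kloosterman sums are `o(c)`. -/
lemma kl_bound (m n : ℤ) (hm : m ≠ 0) (ε : ℝ) (hε : 0 < ε) :
    ∃ N : ℕ, ∀ (c : ℕ) [NeZero c], N ≤ c → ‖kl c m n‖ ≤ ε * c := by
  set A : ℝ := (2 * m.natAbs) ^ 4 * (41 ^ 16) ^ 3
  obtain ⟨N, hN⟩ := exists_nat_gt (A / ε ^ 16)
  refine ⟨N, fun c _ hc => ?_⟩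
  have hcpos : (0 : ℝ) < c := by exact_mod_cast Nat.pos_of_ne_zero (NeZero.ne c)
  have h1 := kl_bound_pow (c := c) m n hm
  have h2 : A / c ≤ ε ^ 16 := by
    rw [div_le_iff₀ hcpos]
    rw [div_lt_iff₀ (by positivity)] at hN
    have : (N : ℝ) ≤ c := by exact_mod_cast hc
    nlinarith [pow_pos hε 16]
  have h3 : ‖kl c m n‖ / c ≤ ε :=
    le_of_pow_le_pow_left₀ (by norm_num) hε.le (h1.trans h2)
  rwa [div_le_iff₀ hcpos] at h3

end Horo
end

section
namespace Horo

/-! ### Joint equidistribution of `(x/c, x⁻¹/c)` -/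

noncomputable def wv (c : ℕ) [NeZero c] (m : ℤ) (g : C(UnitAddCircle, ℂ)) : ℂ :=
  ∑ x : (ZMod c)ˣ, ZMod.stdAddChar ((m : ZMod c) * (x : ZMod c)) *
    g (ZMod.toAddCircle ((x⁻¹ : (ZMod c)ˣ) : ZMod c))

noncomputable def ex (c : ℕ) (m : ℤ) (g : C(UnitAddCircle, ℂ)) : ℂ :=
  if m = 0 then (c.totient : ℂ) * ∫ x in (0 : ℝ)..1, g (x : UnitAddCircle) else 0

lemma fourier_toAddCircle (c : ℕ) [NeZero c] (n : ℤ) (x : ZMod c) :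
    fourier n (ZMod.toAddCircle x) = ZMod.stdAddChar ((n : ZMod c) * x) := by
  obtain ⟨j, rfl⟩ := ZMod.intCast_surjective x
  rw [ZMod.toAddCircle_intCast, ← Int.cast_mul, ZMod.stdAddChar_coe, fourier_coe_apply]
  congr 1
  push_cast
  ring

lemma wv_fourier (c : ℕ) [NeZero c] (m n : ℤ) : wv c m (fourier n) = kl c m n := by
  unfold wv kl
  refine Finset.sum_congr rfl fun x _ => ?_
  rw [fourier_toAddCircle, ← AddChar.map_add_eq_mul]

lemma kl_symm (c : ℕ) [NeZero c] (a b : ZMod c) : kl c a b = kl c b a := by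
  unfold kl
  refine Fintype.sum_equiv (Equiv.inv _) _ _ fun x => ?_
  simp [add_comm]

lemma integral_fourier' (n : ℤ) :
    ∫ x in (0 : ℝ)..1, (fourier n : C(UnitAddCircle, ℂ)) (x : UnitAddCircle) =
      if n = 0 then 1 else 0 := by
  have h := fourierCoeff_eq_intervalIntegral (T := 1)
    (fun x => (fourier n : C(UnitAddCircle, ℂ)) x) 0 0
  have h2 : fourierCoeff (T := 1) (fun x => (fourier n : C(UnitAddCircle, ℂ)) x) 0 =
      if n = 0 then 1 else 0 := by
    rw [fourierCoeff]
    simp only [neg_zero, fourier_zero, one_smul]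
    split_ifs with hn
    · subst hn; simp
    · have h3 := integral_eq_zero_of_add_right_eq_neg (μ := @AddCircle.haarAddCircle 1 _)
        (fourier_add_half_inv_index hn (by norm_num))
      exact h3
  rw [h2] at h
  simpa using h.symm

lemma norm_wv_le (c : ℕ) [NeZero c] (m : ℤ) (g : C(UnitAddCircle, ℂ)) :
    ‖wv c m g‖ ≤ c * ‖g‖ := by
  unfold wv
  refine (norm_sum_le _ _).trans ?_
  calc _ ≤ ∑ x : (ZMod c)ˣ, ‖g‖ := by
        apply Finset.sum_le_sum
        intro x _
        rw [norm_mul, AddChar.norm_apply, one_mul]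
        exact g.norm_coe_le_norm _
    _ = c.totient * ‖g‖ := by
        rw [Finset.sum_const, Finset.card_univ, ZMod.card_units_eq_totient, nsmul_eq_mul]
    _ ≤ _ := by gcongr; exact Nat.totient_le c

lemma norm_ex_le (c : ℕ) (m : ℤ) (g : C(UnitAddCircle, ℂ)) :
    ‖ex c m g‖ ≤ c * ‖g‖ := by
  unfold ex
  split_ifs
  · rw [norm_mul, Complex.norm_natCast]
    gcongr
    · exact Nat.totient_le c
    · have := intervalIntegral.norm_integral_le_of_norm_le_const (a := (0 : ℝ)) (b := 1) (C := ‖g‖)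
        (f := fun x : ℝ => g (x : UnitAddCircle)) (fun x _ => g.norm_coe_le_norm _)
      simpa using this
  · rw [norm_zero]; positivity

lemma intervalIntegrable_circle (g : C(UnitAddCircle, ℂ)) :
    IntervalIntegrable (fun x : ℝ => g (x : UnitAddCircle)) volume 0 1 :=
  (g.continuous.comp (AddCircle.continuous_mk' 1)).intervalIntegrable 0 1

noncomputable def dv (c : ℕ) [NeZero c] (m : ℤ) (g : C(UnitAddCircle, ℂ)) : ℂ := wv c m g - ex c m g

lemma dv_add (c : ℕ) [NeZero c] (m : ℤ) (g h : C(UnitAddCircle, ℂ)) :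
    dv c m (g + h) = dv c m g + dv c m h := by
  have h1 : wv c m (g + h) = wv c m g + wv c m h := by
    simp [wv, mul_add, Finset.sum_add_distrib]
  have h2 : ex c m (g + h) = ex c m g + ex c m h := by
    unfold ex
    split_ifs
    · simp only [ContinuousMap.add_apply]
      rw [intervalIntegral.integral_add (intervalIntegrable_circle g)
        (intervalIntegrable_circle h)]
      ring
    · simp
  rw [dv, dv, dv, h1, h2]; ring

lemma dv_smul (c : ℕ) [NeZero c] (m : ℤ) (a : ℂ) (g : C(UnitAddCircle, ℂ)) :
    dv c m (a • g) = a * dv c m g := by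
  have h1 : wv c m (a • g) = a * wv c m g := by
    simp only [wv, ContinuousMap.smul_apply, smul_eq_mul, Finset.mul_sum]
    refine Finset.sum_congr rfl fun x _ => by ring
  have h2 : ex c m (a • g) = a * ex c m g := by
    unfold ex
    split_ifs
    · simp only [ContinuousMap.smul_apply, smul_eq_mul]
      rw [intervalIntegral.integral_const_mul]
      ring
    · simp
  rw [dv, dv, h1, h2]; ring

lemma dv_sub (c : ℕ) [NeZero c] (m : ℤ) (g h : C(UnitAddCircle, ℂ)) :
    dv c m g - dv c m h = dv c m (g - h) := by
  have : g - h = g + (-1 : ℂ) • h := by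
    ext t; simp [sub_eq_add_neg]
  rw [this, dv_add, dv_smul]; ring

lemma norm_dv_le (c : ℕ) [NeZero c] (m : ℤ) (g : C(UnitAddCircle, ℂ)) :
    ‖dv c m g‖ ≤ 2 * ‖g‖ * c := by
  refine (norm_sub_le _ _).trans ?_
  linarith [norm_wv_le c m g, norm_ex_le c m g]

lemma dv_fourier (m n : ℤ) (ε : ℝ) (hε : 0 < ε) :
    ∃ N : ℕ, ∀ (c : ℕ) [NeZero c], N ≤ c → ‖dv c m (fourier n)‖ ≤ ε * c := by
  by_cases hm : m = 0
  · by_cases hn : n = 0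
    · subst hm hn
      refine ⟨0, fun c _ _ => ?_⟩
      have : dv c 0 (fourier 0) = 0 := by
        unfold dv ex
        rw [integral_fourier']
        simp [wv, Finset.card_univ, ZMod.card_units_eq_totient]
      rw [this, norm_zero]; positivity
    · subst hm
      obtain ⟨N, hN⟩ := kl_bound n 0 hn ε hε
      refine ⟨N, fun c _ hc => ?_⟩
      rw [dv, ex, if_pos rfl, integral_fourier', if_neg hn, mul_zero, sub_zero, wv_fourier,
        kl_symm]
      exact_mod_cast hN c hc
  · obtain ⟨N, hN⟩ := kl_bound m n hm ε hε
    refine ⟨N, fun c _ hc => ?_⟩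
    rw [dv, ex, if_neg hm, sub_zero, wv_fourier]
    exact_mod_cast hN c hc

lemma dv_small (m : ℤ) (g : C(UnitAddCircle, ℂ)) (ε : ℝ) (hε : 0 < ε) :
    ∃ N : ℕ, ∀ (c : ℕ) [NeZero c], N ≤ c → ‖dv c m g‖ ≤ ε * c := by
  have hspan : ∀ g ∈ Submodule.span ℂ (Set.range (fourier (T := (1 : ℝ)))), ∀ ε > 0,
      ∃ N : ℕ, ∀ (c : ℕ) [NeZero c], N ≤ c → ‖dv c m g‖ ≤ ε * c := by
    intro g hg
    induction hg using Submodule.span_induction with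
    | mem x hx =>
      obtain ⟨n, rfl⟩ := hx
      exact fun ε hε => dv_fourier m n ε hε
    | zero =>
      intro ε hε
      refine ⟨0, fun c _ _ => ?_⟩
      have := dv_smul c m 0 0
      have h0 : (0 : ℂ) • (0 : C(UnitAddCircle, ℂ)) = 0 := by ext t; simp
      rw [h0, zero_mul] at this
      rw [this, norm_zero]; positivity
    | add x y _ _ hx hy =>
      intro ε hε
      obtain ⟨N1, h1⟩ := hx (ε / 2) (by positivity)
      obtain ⟨N2, h2⟩ := hy (ε / 2) (by positivity)
      refine ⟨max N1 N2, fun c _ hc => ?_⟩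
      rw [dv_add]
      refine (norm_add_le _ _).trans ?_
      linarith [h1 c ((le_max_left _ _).trans hc), h2 c ((le_max_right _ _).trans hc)]
    | smul a x _ hx =>
      intro ε hε
      obtain ⟨N1, h1⟩ := hx (ε / (‖a‖ + 1)) (by positivity)
      refine ⟨N1, fun c _ hc => ?_⟩
      rw [dv_smul, norm_mul]
      calc ‖a‖ * ‖dv c m x‖ ≤ (‖a‖ + 1) * (ε / (‖a‖ + 1) * c) := by
            gcongr
            · linarith
            · exact h1 c hc
        _ = _ := by field_simp
  have hd : g ∈ closure (Submodule.span ℂ (Set.range (fourier (T := (1 : ℝ)))) :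
      Set C(UnitAddCircle, ℂ)) := by
    have := span_fourier_closure_eq_top (T := (1 : ℝ))
    rw [← Submodule.topologicalClosure_coe, this]; trivial
  obtain ⟨p, hp, hgp⟩ := Metric.mem_closure_iff.1 hd (ε / 4) (by positivity)
  obtain ⟨N, hN⟩ := hspan p hp (ε / 2) (by positivity)
  refine ⟨N, fun c _ hc => ?_⟩
  have h1 := norm_dv_le c m (g - p)
  rw [← dv_sub] at h1
  rw [dist_eq_norm] at hgp
  have h2 := hN c hc
  have h3 := norm_add_le (dv c m g - dv c m p) (dv c m p)
  rw [sub_add_cancel] at h3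
  have : 2 * ‖g - p‖ * c ≤ ε / 2 * c := by gcongr; linarith
  linarith

/-- uniform on compacts -/
lemma dv_small_compact (m : ℤ) (K : Set C(UnitAddCircle, ℂ)) (hK : IsCompact K)
    (ε : ℝ) (hε : 0 < ε) :
    ∃ N : ℕ, ∀ (c : ℕ) [NeZero c], N ≤ c → ∀ g ∈ K, ‖dv c m g‖ ≤ ε * c := by
  obtain ⟨t, -, htf, hcov⟩ := hK.finite_cover_balls (e := ε / 4) (by positivity)
  choose N hN using fun g => dv_small m g (ε / 2) (by positivity)
  refine ⟨htf.toFinset.sup N, fun c _ hc g hg => ?_⟩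
  obtain ⟨p, hp, hgp⟩ := Set.mem_iUnion₂.1 (hcov hg)
  have h1 := norm_dv_le c m (g - p)
  rw [← dv_sub] at h1
  rw [Metric.mem_ball, dist_eq_norm] at hgp
  have h2 := hN p c ((Finset.le_sup (htf.mem_toFinset.2 hp)).trans hc)
  have h3 := norm_add_le (dv c m g - dv c m p) (dv c m p)
  rw [sub_add_cancel] at h3
  have : 2 * ‖g - p‖ * c ≤ ε / 2 * c := by gcongr; linarith
  linarith

end Horo
end

section
open scoped UpperHalfPlane MatrixGroups Modular

namespace Horo

structure Good (f : ℂ → ℝ) (Y : ℝ) : Prop where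
  cont : ContinuousOn f {z : ℂ | 0 < z.im}
  inv : ∀ a b c d : ℤ, a * d - b * c = 1 → ∀ z : ℂ, 0 < z.im →
      f (((a : ℂ) * z + b) / ((c : ℂ) * z + d)) = f z
  Y1 : 1 ≤ Y
  supp : ∀ z : ℂ, Y < z.im → f z = 0

variable {f : ℂ → ℝ} {Y : ℝ}

lemma Good.smul (hf : Good f Y) (γ : SL(2, ℤ)) (z : ℍ) : f ((γ • z : ℍ) : ℂ) = f z := by
  have h := hf.inv (γ 0 0) (γ 0 1) (γ 1 0) (γ 1 1)
    (by have := γ.det_coe; rw [Matrix.det_fin_two] at this; exact this) z z.im_pos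
  rw [← h, UpperHalfPlane.coe_specialLinearGroup_apply]
  simp

lemma Good.per (hf : Good f Y) (z : ℂ) (hz : 0 < z.im) (n : ℤ) : f (z + n) = f z := by
  have h := hf.inv 1 n 0 1 (by ring) z hz
  simpa using h

lemma Good.contH (hf : Good f Y) : Continuous fun z : ℍ => f z :=
  hf.cont.comp_continuous UpperHalfPlane.continuous_coe fun z => z.im_pos

lemma Good.bdd (hf : Good f Y) : ∃ B : ℝ, 0 < B ∧ ∀ z : ℂ, 0 < z.im → |f z| ≤ B := by
  obtain ⟨B, hB⟩ := (ModularGroup.isCompact_truncatedFundamentalDomain Y).exists_bound_of_continuousOn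
    hf.contH.continuousOn
  refine ⟨max B 1, by positivity, fun z hz => ?_⟩
  obtain ⟨γ, hγ⟩ := ModularGroup.exists_smul_mem_fd ⟨z, hz⟩
  have h1 := hf.smul γ ⟨z, hz⟩
  change _ = f z at h1
  rw [← h1]
  by_cases hY : (γ • (⟨z, hz⟩ : ℍ)).im ≤ Y
  · exact (hB _ ⟨hγ, hY⟩).trans (le_max_left _ _)
  · push Not at hY
    rw [hf.supp _ hY]; simp

lemma Good.uc (hf : Good f Y) (η : ℝ) (hη : 0 < η) : ∃ r : ℝ, 0 < r ∧ r ≤ 1 / 2 ∧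
    ∀ z w : ℂ, 0 < w.im → ‖z - w‖ ≤ r * w.im → |f z - f w| ≤ η := by
  have hK := ModularGroup.isCompact_truncatedFundamentalDomain (2 * Y)
  have hU : {x : ℝ × ℝ | dist x.1 x.2 < η} ∈ uniformity ℝ := Metric.dist_mem_uniformity hη
  have := hK.uniformContinuousAt_of_continuousAt (fun z : ℍ => f z)
    (fun z _ => hf.contH.continuousAt) hU
  obtain ⟨ρ, hρ, hρ2⟩ := Metric.mem_uniformity_dist.1 this
  have hl2 : (0 : ℝ) < Real.log 2 := Real.log_pos (by norm_num)
  refine ⟨min (1 / 2) (min (ρ / 4) (Real.log 2 / 4)), by positivity, min_le_left _ _, ?_⟩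
  set r := min (1 / 2) (min (ρ / 4) (Real.log 2 / 4)) with hr
  intro z w hw hzw
  have hr1 : r ≤ 1 / 2 := min_le_left _ _
  have hr0 : 0 < r := by positivity
  have him : (1 / 2) * w.im ≤ z.im := by
    have h1 : |(z - w).im| ≤ ‖z - w‖ := Complex.abs_im_le_norm _
    have h2 := (abs_le.1 h1).1
    rw [Complex.sub_im] at h2
    nlinarith
  have hz : 0 < z.im := by linarith
  let z' : ℍ := ⟨z, hz⟩
  let w' : ℍ := ⟨w, hw⟩
  have hd : dist z' w' ≤ 2 * r := by
    refine (UpperHalfPlane.dist_le_dist_coe_div_sqrt z' w').trans ?_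
    change dist z w / √(z.im * w.im) ≤ _
    have hs : (1 / 2) * w.im ≤ √(z.im * w.im) := by
      apply Real.le_sqrt_of_sq_le
      nlinarith
    rw [div_le_iff₀ (by positivity), dist_eq_norm]
    nlinarith
  obtain ⟨γ, hγ⟩ := ModularGroup.exists_smul_mem_fd w'
  have e1 := hf.smul γ z'
  have e2 := hf.smul γ w'
  change _ = f z at e1
  change _ = f w at e2
  have hd' : dist (γ • z') (γ • w') ≤ 2 * r := by
    have hg : ∀ u : ℍ, γ • u = (γ : SL(2, ℝ)) • u := fun u => by
      ext1
      rw [UpperHalfPlane.coe_specialLinearGroup_apply, UpperHalfPlane.coe_specialLinearGroup_apply]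
      simp
    rwa [hg, hg, dist_smul]
  rw [← e1, ← e2]
  by_cases hY : (γ • w').im ≤ 2 * Y
  · have h3 := hρ2 (a := γ • w') (b := γ • z') (by
      rw [dist_comm]
      have : r ≤ ρ / 4 := (min_le_right _ _).trans (min_le_left _ _)
      linarith) ⟨hγ, hY⟩
    change dist _ _ < η at h3
    rw [dist_comm, Real.dist_eq] at h3
    exact h3.le
  · push Not at hY
    have hY0 := hf.Y1
    have h4 : Y < (γ • z').im := by
      have := UpperHalfPlane.im_div_exp_dist_le (γ • w') (γ • z')
      refine lt_of_lt_of_le ?_ this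
      rw [lt_div_iff₀ (Real.exp_pos _)]
      have h5 : Real.exp (dist (γ • w') (γ • z')) ≤ 2 := by
        rw [← Real.exp_log (show (0 : ℝ) < 2 by norm_num)]
        apply Real.exp_le_exp.2
        rw [dist_comm]
        have : r ≤ Real.log 2 / 4 := (min_le_right _ _).trans (min_le_right _ _)
        linarith
      nlinarith
    rw [hf.supp _ h4, hf.supp _ (show Y < ((γ • w' : ℍ) : ℂ).im by
      change Y < (γ • w').im
      linarith)]
    simp [hη.le]

end Horo
end

section
open scoped UpperHalfPlane MatrixGroups Modular

namespace Horo

noncomputable def rho (w : ℂ) : ℝ := ‖((w.re : ℝ) : UnitAddCircle)‖ ^ 2 + w.im ^ 2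

def FF : Set ℂ := {w | 0 < w.im ∧ 1 < rho w}

noncomputable def hh (f : ℂ → ℝ) : ℂ → ℝ := FF.indicator f

lemma rho_le (w : ℂ) (n : ℤ) : rho w ≤ (w.re + n) ^ 2 + w.im ^ 2 := by
  unfold rho
  rw [UnitAddCircle.norm_eq]
  have := round_le w.re (-n)
  have h2 := sq_le_sq.2 (show |(|w.re - round w.re|)| ≤ |w.re - ((-n : ℤ) : ℝ)| by
    rwa [abs_abs])
  push_cast at h2
  rw [sub_neg_eq_add] at h2
  linarith

lemma rho_eq (w : ℂ) : rho w = (w.re + ((-round w.re : ℤ) : ℝ)) ^ 2 + w.im ^ 2 := by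
  unfold rho
  rw [UnitAddCircle.norm_eq, sq_abs]
  push_cast
  ring

lemma rho_cont : Continuous rho := by
  unfold rho
  refine Continuous.add (Continuous.pow (Continuous.norm ?_) 2) (Complex.continuous_im.pow 2)
  exact (AddCircle.continuous_mk' 1).comp Complex.continuous_re

lemma FF_open : IsOpen FF :=
  (isOpen_lt continuous_const Complex.continuous_im).inter (isOpen_lt continuous_const rho_cont)

lemma FF_im {w : ℂ} (hw : w ∈ FF) : 3 / 4 < w.im ^ 2 := by
  have h1 := hw.2
  rw [rho, UnitAddCircle.norm_eq, sq_abs] at h1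
  have := abs_le.1 (abs_sub_round w.re)
  nlinarith [this.1, this.2]

variable {f : ℂ → ℝ} {Y : ℝ}

lemma hh_abs {B : ℝ} (hB : 0 < B) (h : ∀ z : ℂ, 0 < z.im → |f z| ≤ B) (w : ℂ) : |hh f w| ≤ B := by
  by_cases hw : w ∈ FF
  · rw [hh, Set.indicator_of_mem hw]; exact h w hw.1
  · rw [hh, Set.indicator_of_notMem hw]; simp [hB.le]

lemma hh_meas (hf : Good f Y) : Measurable (hh f) := by
  classical
  have : hh f = FF.piecewise f 0 := by
    ext x; simp [hh, Set.indicator, Set.piecewise]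
  rw [this]
  exact ContinuousOn.measurable_piecewise (hf.cont.mono fun w hw => hw.1) continuousOn_const
    FF_open.measurableSet

lemma hh_contAt (hf : Good f Y) (w : ℂ) (hw : 0 < w.im) (h : rho w ≠ 1) :
    ContinuousAt (hh f) w := by
  rcases lt_or_gt_of_ne h with h | h
  · have : (hh f) =ᶠ[nhds w] fun _ => 0 := by
      filter_upwards [(isOpen_lt rho_cont continuous_const).mem_nhds h] with v hv
      apply Set.indicator_of_notMem
      intro h'
      exact absurd h'.2 (not_lt.2 (le_of_lt hv))
    exact continuousAt_const.congr this.symm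
  · have : (hh f) =ᶠ[nhds w] f := by
      filter_upwards [FF_open.mem_nhds (show w ∈ FF from ⟨hw, h⟩)] with v hv
      exact Set.indicator_of_mem hv _
    refine ContinuousAt.congr ?_ this.symm
    exact hf.cont.continuousAt ((isOpen_lt continuous_const Complex.continuous_im).mem_nhds hw)

lemma rho_per (w : ℂ) (n : ℤ) : rho (w + n) = rho w := by
  unfold rho
  simp

lemma hh_per (hf : Good f Y) (w : ℂ) (n : ℤ) : hh f (w + n) = hh f w := by
  by_cases hw : w ∈ FF
  · have : w + n ∈ FF := ⟨by simpa using hw.1, by rw [rho_per]; exact hw.2⟩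
    rw [hh, Set.indicator_of_mem hw, Set.indicator_of_mem this, hf.per _ hw.1]
  · have : w + n ∉ FF := fun h => hw ⟨by simpa using h.1, by have := h.2; rwa [rho_per] at this⟩
    rw [hh, Set.indicator_of_notMem hw, Set.indicator_of_notMem this]

lemma quad_null (A B C : ℝ) (h : ¬ (A = 0 ∧ B = 0 ∧ C = 0)) :
    ∀ᵐ x : ℝ, A * x ^ 2 + B * x + C ≠ 0 := by
  open Polynomial in
  let p : ℝ[X] := Polynomial.C A * X ^ 2 + Polynomial.C B * X + Polynomial.C C
  have hp : p ≠ 0 := by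
    intro h0
    apply h
    have e0 := congrArg (fun q => Polynomial.coeff q 0) h0
    have e1 := congrArg (fun q => Polynomial.coeff q 1) h0
    have e2 := congrArg (fun q => Polynomial.coeff q 2) h0
    simp [p, Polynomial.coeff_C, Polynomial.coeff_X] at e0 e1 e2
    exact ⟨e2, e1, e0⟩
  rw [ae_iff]
  refine Set.Finite.measure_zero (Set.Finite.subset (p.roots.toFinset.finite_toSet) ?_) _
  intro x hx
  simp only [ne_eq, not_not, Set.mem_ofPred_eq] at hx
  simp [hp, p, hx]

lemma FF_lt {w : ℂ} (hw : w ∈ FF) (C D : ℤ) (hC : C ≠ 0) : 1 < ‖(C : ℂ) * w + D‖ := by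
  have key : 1 < ((C : ℝ) * w.re + D) ^ 2 + ((C : ℝ) * w.im) ^ 2 := by
    have h3 := FF_im hw
    rcases lt_or_ge 1 |C| with h | h
    · have h4 : (4 : ℝ) ≤ (C : ℝ) ^ 2 := by
        have : (2 : ℤ) ^ 2 ≤ C ^ 2 := by
          rw [← sq_abs C]; exact pow_le_pow_left₀ (by norm_num) h 2
        exact_mod_cast this
      nlinarith [sq_nonneg ((C : ℝ) * w.re + D)]
    · have h5 : C = 1 ∨ C = -1 := by
        have := abs_le.1 h; omega
      have h6 := hw.2
      rcases h5 with rfl | rfl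
      · have := rho_le w D
        push_cast
        nlinarith
      · have := rho_le w (-D)
        push_cast at this ⊢
        nlinarith
  rw [← abs_of_nonneg (norm_nonneg ((C : ℂ) * w + D)), ← one_lt_sq_iff_one_lt_abs,
    ← Complex.normSq_eq_norm_sq, Complex.normSq_apply]
  simp
  nlinarith

lemma den_ne (z : ℂ) (hz : 0 < z.im) (a b c d : ℤ) (h : a * d - b * c = 1) :
    (c : ℂ) * z + d ≠ 0 := by
  intro h0
  have h1 := congrArg Complex.im h0
  simp at h1
  rcases h1 with h1 | h1
  · subst h1
    simp at h0
    subst h0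
    simp at h
  · exact hz.ne' h1

lemma uniq_aux (z : ℂ) (hz : 0 < z.im) (a b c d c' d' : ℤ) (h : a * d - b * c = 1)
    (h1 : ((a : ℂ) * z + b) / ((c : ℂ) * z + d) ∈ FF) (hC : c' * d - d' * c ≠ 0) :
    ‖(c : ℂ) * z + d‖ < ‖(c' : ℂ) * z + d'‖ := by
  have h0 := den_ne z hz a b c d h
  have h2 := FF_lt h1 (c' * d - d' * c) (d' * a - c' * b) hC
  have hh : (a * d - b * c : ℂ) = 1 := by exact_mod_cast h
  have e : (c' : ℂ) * z + d' = (((c' * d - d' * c : ℤ) : ℂ) * (((a : ℂ) * z + b) / ((c : ℂ) * z + d))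
      + ((d' * a - c' * b : ℤ) : ℂ)) * ((c : ℂ) * z + d) := by
    push_cast
    rw [add_mul, mul_assoc, div_mul_cancel₀ _ h0]
    linear_combination (-(c' : ℂ) * z - d') * hh
  rw [e, norm_mul]
  have := norm_pos_iff.2 h0
  nlinarith

lemma uniq (z : ℂ) (hz : 0 < z.im) (a b c d a' b' c' d' : ℤ) (h : a * d - b * c = 1)
    (h' : a' * d' - b' * c' = 1)
    (h1 : ((a : ℂ) * z + b) / ((c : ℂ) * z + d) ∈ FF)
    (h2 : ((a' : ℂ) * z + b') / ((c' : ℂ) * z + d') ∈ FF) : c' * d = d' * c := by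
  by_contra hC
  have i1 := uniq_aux z hz a b c d c' d' h h1 (by omega)
  have i2 := uniq_aux z hz a' b' c' d' c d h' h2 (by intro h3; apply hC; linarith)
  linarith


lemma FF_per {w : ℂ} (n : ℤ) (hw : w ∈ FF) : w + n ∈ FF :=
  ⟨by simpa using hw.1, by rw [rho_per]; exact hw.2⟩

noncomputable def wp (c : ℕ) [NeZero c] (u : (ZMod c)ˣ) (z : ℂ) : ℂ :=
  ((((u⁻¹ : (ZMod c)ˣ) : ZMod c).val : ℕ) : ℂ) / c -
    1 / ((c : ℂ) * ((c : ℂ) * z + (((u : ZMod c).val : ℕ) : ℂ)))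

lemma wp_mat (c : ℕ) [NeZero c] (u : (ZMod c)ˣ) (q : ℤ) : ∃ a b : ℤ,
    a * ((u : ZMod c).val + q * c) - b * c = 1 ∧ ∀ z : ℂ, 0 < z.im →
    wp c u (z + q) = ((a : ℂ) * z + b) /
      (((c : ℤ) : ℂ) * z + (((u : ZMod c).val + q * c : ℤ) : ℂ)) := by
  have hdvd : (c : ℤ) ∣ (((u⁻¹ : (ZMod c)ˣ) : ZMod c).val : ℤ) *
      ((u : ZMod c).val + q * c) - 1 := by
    rw [← ZMod.intCast_zmod_eq_zero_iff_dvd]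
    simp
  obtain ⟨b, hb⟩ := hdvd
  refine ⟨(((u⁻¹ : (ZMod c)ˣ) : ZMod c).val : ℤ), b, by linarith, fun z hz => ?_⟩
  have h0 := den_ne z hz (((u⁻¹ : (ZMod c)ˣ) : ZMod c).val : ℤ) b c ((u : ZMod c).val + q * c) (by linarith)
  have hc : (c : ℂ) ≠ 0 := by exact_mod_cast NeZero.ne c
  have hb' := congrArg (fun t : ℤ => (t : ℂ)) hb
  unfold wp
  push_cast at h0 hb' ⊢
  have e : (c : ℂ) * (z + q) + (u : ZMod c).val = c * z + ((u : ZMod c).val + q * c) := by ring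
  rw [e, div_sub_div _ _ hc (mul_ne_zero hc h0), div_eq_div_iff (mul_ne_zero hc (mul_ne_zero hc h0)) h0]
  linear_combination (c * (c * z + ((u : ZMod c).val + q * c)) : ℂ) * hb'

lemma wp_uniq (z : ℂ) (hz : 0 < z.im) (c c' : ℕ) [NeZero c] [NeZero c'] (u : (ZMod c)ˣ)
    (u' : (ZMod c')ˣ) (q q' : ℤ) (h : wp c u (z + q) ∈ FF) (h' : wp c' u' (z + q') ∈ FF) :
    c = c' ∧ ((u : ZMod c).val + q * c : ℤ) = (u' : ZMod c').val + q' * c' := by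
  obtain ⟨a, b, h1, h2⟩ := wp_mat c u q
  obtain ⟨a', b', h1', h2'⟩ := wp_mat c' u' q'
  rw [h2 z hz] at h
  rw [h2' z hz] at h'
  have key := uniq z hz _ _ _ _ _ _ _ _ h1 h1' h h'
  set d : ℤ := (u : ZMod c).val + q * c
  set d' : ℤ := (u' : ZMod c').val + q' * c'
  have co : IsCoprime (c : ℤ) d := ⟨-b, a, by linarith⟩
  have co' : IsCoprime (c' : ℤ) d' := ⟨-b', a', by linarith⟩
  have d1 : (c : ℤ) ∣ c' := co.dvd_of_dvd_mul_right ⟨d', by linarith⟩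
  have d2 : (c' : ℤ) ∣ c := co'.dvd_of_dvd_mul_left ⟨d, by linarith⟩
  have e : c = c' := Nat.dvd_antisymm (by exact_mod_cast d1) (by exact_mod_cast d2)
  refine ⟨e, ?_⟩
  rw [← e] at key
  have : (c : ℤ) ≠ 0 := by exact_mod_cast NeZero.ne c
  apply mul_left_cancel₀ this
  linarith

lemma wp_uniq2 (z : ℂ) (hz : 0 < z.im) (c : ℕ) [NeZero c] (u u' : (ZMod c)ˣ)
    (q q' : ℤ) (h : wp c u (z + q) ∈ FF) (h' : wp c u' (z + q') ∈ FF) : u = u' ∧ q = q' := by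
  have h2 := (wp_uniq z hz c c u u' q q' h h').2
  have e : u = u' := by
    apply Units.ext
    have := congrArg (fun t : ℤ => (t : ZMod c)) h2
    simpa using this
  refine ⟨e, ?_⟩
  subst e
  have : (c : ℤ) ≠ 0 := by exact_mod_cast NeZero.ne c
  apply mul_right_cancel₀ this
  linarith

lemma exists_rep (z : ℂ) (hz : 0 < z.im) (hz2 : z.im ^ 2 < 3 / 4)
    (hg : ∀ a b c d : ℤ, a * d - b * c = 1 →
      ‖(a : ℂ) * z + b‖ ^ 2 ≠ ‖(c : ℂ) * z + d‖ ^ 2) :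
    ∃ (c : ℕ) (u : (ZMod (c + 1))ˣ) (q : ℤ), wp (c + 1) u (z + q) ∈ FF := by
  have main : ∃ a b c d : ℤ, a * d - b * c = 1 ∧ 0 < c ∧
      ((a : ℂ) * z + b) / ((c : ℂ) * z + d) ∈ FF := by
    obtain ⟨γ, hγ⟩ := ModularGroup.exists_smul_mem_fd ⟨z, hz⟩
    have hdet : γ 0 0 * γ 1 1 - γ 0 1 * γ 1 0 = 1 := by
      have := γ.det_coe; rw [Matrix.det_fin_two] at this; exact this
    have hw := UpperHalfPlane.coe_specialLinearGroup_apply γ ⟨z, hz⟩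
    set w := γ • (⟨z, hz⟩ : ℍ) with hwd
    simp only [algebraMap_int_eq, eq_intCast, ofReal_intCast] at hw
    have hn := hg _ _ _ _ hdet
    have h0 := den_ne z hz _ _ _ _ hdet
    have hF : (w : ℂ) ∈ FF := by
      refine ⟨w.im_pos, ?_⟩
      have h1 : 1 ≤ Complex.normSq w := hγ.1
      have h2 : Complex.normSq w ≠ 1 := by
        rw [hw, Complex.normSq_div, Complex.normSq_eq_norm_sq, Complex.normSq_eq_norm_sq]
        intro h3
        rw [div_eq_one_iff_eq (by positivity)] at h3
        exact hn h3
      have h3 : |(w : ℂ).re| ≤ 1 / 2 := hγ.2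
      have h4 : rho w = Complex.normSq w := by
        rw [rho, Complex.normSq_apply]
        have : ‖(((w : ℂ).re : ℝ) : UnitAddCircle)‖ = |(w : ℂ).re| :=
          (AddCircle.norm_coe_eq_abs_iff (p := 1) one_ne_zero).2 (by simpa using h3)
        rw [this, sq_abs]; ring
      rw [h4]
      exact lt_of_le_of_ne h1 (Ne.symm h2)
    have hc : γ 1 0 ≠ 0 := by
      intro hc
      rw [hc] at hdet hw
      have h5 := ModularGroup.three_le_four_mul_im_sq_of_mem_fd hγ
      have h6 : w.im = z.im := by
        have h7 := congrArg Complex.im hw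
        change w.im = _ at h7
        rw [h7]
        rcases Int.eq_one_or_neg_one_of_mul_eq_one
          (show γ 0 0 * γ 1 1 = 1 by linarith) with h8 | h8
        · rw [h8] at hdet ⊢
          have : γ 1 1 = 1 := by linarith
          rw [this]; simp
        · rw [h8] at hdet ⊢
          have : γ 1 1 = -1 := by linarith
          rw [this]; simp [div_neg]
      rw [h6] at h5
      linarith
    rw [hw] at hF
    rcases lt_or_gt_of_ne hc with hc | hc
    · refine ⟨-γ 0 0, -γ 0 1, -γ 1 0, -γ 1 1, by linarith, by linarith, ?_⟩
      convert hF using 1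
      rw [← neg_div_neg_eq]
      push_cast
      congr 1 <;> simp <;> ring
    · exact ⟨_, _, _, _, hdet, hc, hF⟩
  obtain ⟨a, b, c, d, hdet, hc, hF⟩ := main
  obtain ⟨n, rfl⟩ : ∃ n : ℕ, c = ((n + 1 : ℕ) : ℤ) := ⟨(c - 1).toNat, by push_cast; omega⟩
  have hm : (d : ZMod (n + 1)) * (a : ZMod (n + 1)) = 1 := by
    have := congrArg (fun t : ℤ => (t : ZMod (n + 1))) hdet
    push_cast at this
    have e : ((n : ZMod (n + 1)) + 1) = 0 := by
      have := ZMod.natCast_self (n + 1); push_cast at this; exact this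
    rw [e] at this
    linear_combination this
  let u : (ZMod (n + 1))ˣ := ⟨d, a, hm, by rw [mul_comm]; exact hm⟩
  have hq : ∃ q : ℤ, d = (u : ZMod (n + 1)).val + q * ((n + 1 : ℕ) : ℤ) := by
    have : (((n + 1 : ℕ) : ℤ)) ∣ d - (u : ZMod (n + 1)).val := by
      rw [← ZMod.intCast_zmod_eq_zero_iff_dvd]
      simp [u]
    obtain ⟨q, hq⟩ := this
    exact ⟨q, by linarith⟩
  obtain ⟨q, hq⟩ := hq
  refine ⟨n, u, q, ?_⟩
  obtain ⟨a', b', h1, h2⟩ := wp_mat (n + 1) u q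
  rw [h2 z hz]
  rw [← hq] at h1 ⊢
  have co : IsCoprime (((n + 1 : ℕ) : ℤ)) d := ⟨-b, a, by linarith⟩
  obtain ⟨k, hk⟩ : ((n + 1 : ℕ) : ℤ) ∣ a' - a :=
    co.dvd_of_dvd_mul_right ⟨b' - b, by linarith⟩
  have hb : b' = b + k * d := by
    have : (((n + 1 : ℕ) : ℤ)) ≠ 0 := by positivity
    apply mul_right_cancel₀ this
    have : a' = a + k * ((n + 1 : ℕ) : ℤ) := by linarith
    rw [this] at h1
    linarith
  have ha : a' = a + k * ((n + 1 : ℕ) : ℤ) := by linarith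
  have h0 := den_ne z hz _ _ _ _ hdet
  have := FF_per k hF
  convert this using 1
  rw [hb, ha, div_add' _ _ _ h0]
  congr 1
  push_cast
  ring

lemma generic (y : ℝ) : ∀ᵐ x : ℝ, ∀ a b c d : ℤ, a * d - b * c = 1 →
    ‖(a : ℂ) * (x + y * I) + b‖ ^ 2 ≠ ‖(c : ℂ) * (x + y * I) + d‖ ^ 2 := by
  simp only [ae_all_iff]
  intro a b c d h
  have := quad_null ((a : ℝ) ^ 2 - c ^ 2) (2 * (a * b - c * d))
    (b ^ 2 - d ^ 2 + (a ^ 2 - c ^ 2) * y ^ 2) (by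
      rintro ⟨h1, h2, h3⟩
      rw [h1, zero_mul, add_zero] at h3
      have hR : (a * d - b * c : ℝ) = 1 := by exact_mod_cast h
      have e1 : (a : ℝ) ^ 2 = c ^ 2 := by linarith
      have e2 : (b : ℝ) ^ 2 = d ^ 2 := by linarith
      have e3 : (a * b : ℝ) = c * d := by linarith
      have : (a * d - b * c : ℝ) ^ 2 = 0 := by
        have : (a * d - b * c : ℝ) ^ 2 = a ^ 2 * d ^ 2 + b ^ 2 * c ^ 2 - 2 * (a * b) * (c * d) := by
          ring
        rw [this, ← e3, ← e2, ← e1]; ring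
      rw [hR] at this
      norm_num at this)
  filter_upwards [this] with x hx h2
  apply hx
  rw [← Complex.normSq_eq_norm_sq, ← Complex.normSq_eq_norm_sq, Complex.normSq_apply,
    Complex.normSq_apply] at h2
  simp at h2
  linarith

lemma wp_im (c : ℕ) [NeZero c] (u : (ZMod c)ˣ) (z : ℂ) :
    (wp c u z).im = z.im / ‖(c : ℂ) * z + (((u : ZMod c).val : ℕ) : ℂ)‖ ^ 2 := by
  have hc : (c : ℝ) ≠ 0 := by exact_mod_cast NeZero.ne c
  unfold wp
  generalize ((u : ZMod c).val : ℕ) = r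
  generalize (((u⁻¹ : (ZMod c)ˣ) : ZMod c).val : ℕ) = r'
  rw [Complex.sub_im, ← Complex.ofReal_natCast, ← Complex.ofReal_natCast, ← Complex.ofReal_div,
    Complex.ofReal_im, Complex.div_im, Complex.normSq_mul, Complex.normSq_eq_norm_sq
      ((c : ℝ) * z + _)]
  simp
  by_cases h : ‖(c : ℂ) * z + (r : ℂ)‖ = 0
  · rw [h]; simp
  field_simp

lemma FF_lb {w : ℂ} (hw : w ∈ FF) : 3 / 4 < w.im := by
  have := FF_im hw
  have := hw.1
  by_contra h
  nlinarith

lemma wp_FF (c : ℕ) [NeZero c] (u : (ZMod c)ˣ) (z : ℂ) (hz : 0 < z.im) (h : wp c u z ∈ FF) :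
    ‖(c : ℂ) * z + (((u : ZMod c).val : ℕ) : ℂ)‖ ^ 2 < 2 * z.im := by
  have h1 := FF_lb h
  rw [wp_im] at h1
  by_contra h2
  push Not at h2
  have : z.im / ‖(c : ℂ) * z + (((u : ZMod c).val : ℕ) : ℂ)‖ ^ 2 ≤ 1 / 2 := by
    rw [div_le_iff₀ (by linarith)]
    linarith
  linarith

lemma wp_FF_c (c : ℕ) [NeZero c] (u : (ZMod c)ˣ) (z : ℂ) (hz : 0 < z.im) (h : wp c u z ∈ FF) :
    (c : ℝ) ^ 2 * z.im < 2 := by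
  have h1 := wp_FF c u z hz h
  generalize ((u : ZMod c).val : ℕ) = r at h1
  rw [← Complex.normSq_eq_norm_sq, Complex.normSq_apply] at h1
  simp at h1
  have : (c : ℝ) ^ 2 * z.im * z.im < 2 * z.im := by
    nlinarith [mul_self_nonneg ((c : ℝ) * z.re + r)]
  exact lt_of_mul_lt_mul_right this hz.le

lemma unfold_pt (hf : Good f Y) (z : ℂ) (hz : 0 < z.im) (hz2 : z.im ^ 2 < 3 / 4)
    (hg : ∀ a b c d : ℤ, a * d - b * c = 1 →
      ‖(a : ℂ) * z + b‖ ^ 2 ≠ ‖(c : ℂ) * z + d‖ ^ 2) (N : ℕ) (hN : 2 ≤ (N : ℝ) ^ 2 * z.im) :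
    f z = ∑' q : ℤ, ∑ c ∈ Finset.range N, ∑ u : (ZMod (c + 1))ˣ, hh f (wp (c + 1) u (z + q)) := by
  obtain ⟨c, u, q, h⟩ := exists_rep z hz hz2 hg
  have hcN : c < N := by
    have h1 := wp_FF_c (c + 1) u (z + q) (by simpa using hz) h
    by_contra h2
    push Not at h2
    have h3 : (N : ℝ) ≤ ((c + 1 : ℕ) : ℝ) := by exact_mod_cast h2.trans (Nat.le_succ c)
    have h4 : (N : ℝ) ^ 2 ≤ ((c + 1 : ℕ) : ℝ) ^ 2 := by gcongr
    simp only [add_im, intCast_im, add_zero] at h1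
    nlinarith
  rw [tsum_eq_single q, Finset.sum_eq_single_of_mem c (Finset.mem_range.2 hcN),
    Finset.sum_eq_single u]
  · rw [hh, Set.indicator_of_mem h]
    obtain ⟨a, b, h1, h2⟩ := wp_mat (c + 1) u q
    rw [h2 z hz]
    exact (hf.inv _ _ _ _ h1 z hz).symm
  · intro u' _ hu'
    apply Set.indicator_of_notMem
    intro h'
    exact hu' (wp_uniq2 z hz _ _ _ _ _ h' h).1
  · simp
  · intro c' _ hc'
    apply Finset.sum_eq_zero
    intro u' _
    apply Set.indicator_of_notMem
    intro h'
    apply hc'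
    have := (wp_uniq z hz _ _ _ _ _ _ h' h).1
    omega
  · intro q' hq'
    apply Finset.sum_eq_zero
    intro c' _
    apply Finset.sum_eq_zero
    intro u' _
    apply Set.indicator_of_notMem
    intro h'
    have e := (wp_uniq z hz _ _ _ _ _ _ h' h).1
    obtain rfl : c' = c := by omega
    exact hq' (wp_uniq2 z hz _ _ _ _ _ h' h).2

end Horo
end

section
namespace Horo

variable {f : ℂ → ℝ} {Y : ℝ}

lemma bdd_integrable (g : ℝ → ℂ) (hm : Measurable g) (B : ℝ) (hB : ∀ x, ‖g x‖ ≤ B) (R : ℝ)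
    (hR : 0 ≤ R) (h : ∀ x, g x ≠ 0 → |x| ≤ R) : Integrable g ∧ ‖∫ x, g x‖ ≤ 2 * R * B := by
  have hs : Function.support g ⊆ Set.Icc (-R) R := fun x hx => abs_le.1 (h x hx)
  have h1 : IntegrableOn g (Set.Icc (-R) R) :=
    Measure.integrableOn_of_bounded (M := B) (by simp) hm.aestronglyMeasurable
      (Filter.Eventually.of_forall hB)
  refine ⟨(integrableOn_iff_integrable_of_support_subset hs).1 h1, ?_⟩
  rw [← setIntegral_eq_integral_of_forall_compl_eq_zero (s := Set.Icc (-R) R)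
    (fun x hx => by
      by_contra h2
      exact hx (abs_le.1 (h x h2)))]
  refine (norm_setIntegral_le_of_norm_le_const (C := B) (by simp) fun x _ => hB x).trans ?_
  rw [Real.volume_real_Icc_of_le (by linarith)]
  linarith

lemma periodize (G : ℝ → ℂ) (hG : Integrable G) :
    ∫ x in (0 : ℝ)..1, ∑' q : ℤ, G (x + q) = ∫ x, G x := by
  have h1 := hG.hasSum_intervalIntegral_comp_add_int
  have h2 := hG.norm.hasSum_intervalIntegral_comp_add_int
  rw [intervalIntegral.integral_of_le zero_le_one]
  have h3 := hasSum_integral_of_summable_integral_norm (μ := volume.restrict (Set.Ioc (0 : ℝ) 1))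
    (F := fun (q : ℤ) (x : ℝ) => G (x + q)) (fun q => (hG.comp_add_right (q : ℝ)).integrableOn) (by
      have := h2.summable
      simp_rw [intervalIntegral.integral_of_le zero_le_one] at this
      exact this)
  simp_rw [intervalIntegral.integral_of_le zero_le_one] at h1
  exact h3.unique h1

lemma fourier_add_arg (m : ℤ) (x y : UnitAddCircle) :
    fourier m (x + y) = fourier m x * (fourier m y : ℂ) := by
  simp only [fourier_apply, smul_add, AddCircle.toCircle_add, Circle.coe_mul]

lemma fourier_norm (m : ℤ) (x : UnitAddCircle) : ‖(fourier m x : ℂ)‖ = 1 := by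
  exact Circle.norm_coe _

lemma fourier_sub_one (m : ℤ) (x : ℝ) : ‖(fourier m (x : UnitAddCircle) : ℂ) - 1‖ ≤
    2 * Real.pi * |(m : ℝ)| * |x| := by
  rw [fourier_coe_apply]
  have : (2 * Real.pi * I * m * x / (1 : ℝ) : ℂ) = I * ((2 * Real.pi * m * x : ℝ) : ℂ) := by
    push_cast; ring
  rw [this]
  refine (Real.norm_exp_I_mul_ofReal_sub_one_le).trans ?_
  rw [Real.norm_eq_abs, abs_mul, abs_mul, abs_mul, abs_of_pos Real.pi_pos]
  simp

lemma fourier_meas (m : ℤ) (a b : ℝ) :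
    Measurable fun x : ℝ => (fourier m ((a * x + b : ℝ) : UnitAddCircle) : ℂ) := by
  refine Continuous.measurable ?_
  exact (map_continuous (fourier m)).comp ((AddCircle.continuous_mk' 1).comp (by fun_prop))

noncomputable def Im (f : ℂ → ℝ) (m : ℤ) (y : ℝ) : ℂ :=
  ∫ x in (0 : ℝ)..1, fourier m (x : UnitAddCircle) * (f (x + y * I) : ℂ)

noncomputable def GG (f : ℂ → ℝ) (m : ℤ) (y : ℝ) (c : ℕ) [NeZero c] (u : (ZMod c)ˣ) (x : ℝ) : ℂ :=
  fourier m (x : UnitAddCircle) * (hh f (wp c u (x + y * I)) : ℂ)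

lemma wp_meas (c : ℕ) [NeZero c] (u : (ZMod c)ˣ) : Measurable (wp c u) := by
  unfold wp
  fun_prop

lemma GG_int (hf : Good f Y) (m : ℤ) (y : ℝ) (hy : 0 < y) (c : ℕ) [NeZero c] (u : (ZMod c)ˣ) :
    Integrable (GG f m y c u) := by
  obtain ⟨B, hB0, hB⟩ := hf.bdd
  refine (bdd_integrable _ ?_ B ?_ ((u : ZMod c).val + 1 + 2 * y) (by positivity) ?_).1
  · unfold GG
    refine Measurable.mul ?_ ?_
    · simpa using fourier_meas m 1 0
    · refine Complex.measurable_ofReal.comp ((hh_meas hf).comp ((wp_meas c u).comp ?_))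
      fun_prop
  · intro x
    rw [GG, norm_mul, fourier_norm, one_mul, Complex.norm_real]
    exact hh_abs hB0 hB _
  · intro x hx
    have h1 : wp c u (x + y * I) ∈ FF := by
      by_contra h
      apply hx
      rw [GG, hh, Set.indicator_of_notMem h]; simp
    have h2 := wp_FF c u _ (by simpa using hy) h1
    generalize ((u : ZMod c).val : ℕ) = r at h2
    rw [← Complex.normSq_eq_norm_sq, Complex.normSq_apply] at h2
    simp at h2
    have hc : (1 : ℝ) ≤ c := by exact_mod_cast NeZero.one_le
    have h3 : (c * x + r) ^ 2 < 2 * y := by nlinarith [mul_self_nonneg (c * y)]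
    have h4 : |c * x + r| ≤ 1 + 2 * y := by
      rw [abs_le]; constructor <;> nlinarith
    have h5 : |c * x| ≤ r + 1 + 2 * y := by
      have := abs_add_le (c * x + r) (-(r : ℝ))
      rw [add_neg_cancel_right, abs_neg, Nat.abs_cast] at this
      linarith
    rw [abs_mul, Nat.abs_cast] at h5
    nlinarith [abs_nonneg x]

lemma Im_unfold (hf : Good f Y) (m : ℤ) (y : ℝ) (hy : 0 < y) (hy2 : y ^ 2 < 3 / 4) (N : ℕ)
    (hN : 2 ≤ (N : ℝ) ^ 2 * y) :
    Im f m y = ∑ c ∈ Finset.range N, ∑ u : (ZMod (c + 1))ˣ, ∫ x, GG f m y (c + 1) u x := by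
  have h1 : ∀ c : ℕ, Integrable (fun x => ∑ u : (ZMod (c + 1))ˣ, GG f m y (c + 1) u x) := fun c =>
    integrable_finsetSum _ fun u _ => GG_int hf m y hy (c + 1) u
  have h2 : Integrable (fun x => ∑ c ∈ Finset.range N, ∑ u : (ZMod (c + 1))ˣ, GG f m y (c + 1) u x) :=
    integrable_finsetSum _ fun c _ => h1 c
  have h3 := periodize _ h2
  rw [integral_finsetSum _ fun c _ => h1 c] at h3
  simp_rw [integral_finsetSum _ fun u _ => GG_int hf m y hy _ u] at h3
  rw [← h3, Im]
  apply intervalIntegral.integral_congr_ae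
  filter_upwards [generic y] with x hx _
  rw [unfold_pt hf (x + y * I) (by simpa using hy) (by simpa using hy2) hx N (by simpa using hN),
    Complex.ofReal_tsum, ← tsum_mul_left]
  congr 1
  ext q
  push_cast
  rw [Finset.mul_sum]
  refine Finset.sum_congr rfl fun c _ => ?_
  rw [Finset.mul_sum]
  refine Finset.sum_congr rfl fun u _ => ?_
  unfold GG
  congr 2
  · simp
  · push_cast; ring_nf

noncomputable def pp (κ s u : ℝ) : ℂ := u - 1 / ((κ : ℂ) * (s + κ * I))

lemma pp_im (κ s u : ℝ) (hκ : 0 < κ) : (pp κ s u).im = 1 / (s ^ 2 + κ ^ 2) := by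
  unfold pp
  rw [Complex.sub_im, Complex.ofReal_im, Complex.div_im, Complex.normSq_mul, Complex.normSq_ofReal,
    Complex.normSq_add_mul_I]
  simp
  have : s ^ 2 + κ ^ 2 ≠ 0 := by positivity
  field_simp

lemma pp_supp (κ s u : ℝ) (hκ : 0 < κ) (h : hh f (pp κ s u) ≠ 0) : s ^ 2 + κ ^ 2 < 2 := by
  have h1 : pp κ s u ∈ FF := by
    by_contra h'
    exact h (Set.indicator_of_notMem h' _)
  have h2 := FF_lb h1
  rw [pp_im _ _ _ hκ, lt_div_iff₀ (by positivity)] at h2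
  linarith

lemma GG_subst (m : ℤ) (δ : ℝ) (hδ : 0 < δ) (c : ℕ) [NeZero c] (u : (ZMod c)ˣ) :
    ∫ x, GG f m (δ ^ 2) c u x = ((δ / c : ℝ) : ℂ) *
      (ZMod.stdAddChar (((-m : ℤ) : ZMod c) * (u : ZMod c)) *
        ∫ s : ℝ, fourier m ((δ / c * s : ℝ) : UnitAddCircle) *
          (hh f (pp (c * δ) s ((((u⁻¹ : (ZMod c)ˣ) : ZMod c).val : ℕ) / c)) : ℂ)) := by
  have hc : (0 : ℝ) < c := by exact_mod_cast NeZero.pos c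
  have hd : (0 : ℝ) < δ / c := by positivity
  have h1 := Measure.integral_comp_mul_left
    (fun t => GG f m (δ ^ 2) c u (t - ((u : ZMod c).val : ℝ) / c)) (δ / c)
  rw [integral_sub_right_eq_self, abs_of_pos (inv_pos.2 hd)] at h1
  have h2 : ∫ x, GG f m (δ ^ 2) c u x = (δ / c) • ∫ s,
      GG f m (δ ^ 2) c u (δ / c * s - ((u : ZMod c).val : ℝ) / c) := by
    rw [h1, smul_smul, mul_inv_cancel₀ hd.ne', one_smul]
  rw [h2, Complex.real_smul]
  congr 1
  rw [← integral_const_mul]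
  congr 1
  ext s
  unfold GG
  have e1 : fourier m ((δ / c * s - ((u : ZMod c).val : ℝ) / c : ℝ) : UnitAddCircle) =
      ZMod.stdAddChar (((-m : ℤ) : ZMod c) * (u : ZMod c)) *
        fourier m ((δ / c * s : ℝ) : UnitAddCircle) := by
    have e2 : ((δ / c * s - ((u : ZMod c).val : ℝ) / c : ℝ) : UnitAddCircle) =
      ((δ / c * s : ℝ) : UnitAddCircle) + ZMod.toAddCircle (-(u : ZMod c)) := by
      rw [AddCircle.coe_sub, sub_eq_add_neg, map_neg, ZMod.toAddCircle_apply]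
    rw [e2, fourier_add_arg, fourier_toAddCircle, mul_comm]
    congr 2
    push_cast
    ring
  rw [e1, mul_assoc]
  congr 3
  congr 1
  unfold wp pp
  push_cast
  congr 2
  have hc' : (c : ℂ) ≠ 0 := by exact_mod_cast hc.ne'
  field_simp
  ring

end Horo
end

section
namespace Horo

variable {f : ℂ → ℝ} {Y : ℝ}

noncomputable def HH (f : ℂ → ℝ) (κ u : ℝ) : ℝ := ∫ s, hh f (pp κ s u)

lemma pp_re (κ s u : ℝ) (hκ : 0 < κ) : (pp κ s u).re = u - s / (κ * (s ^ 2 + κ ^ 2)) := by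
  unfold pp
  rw [Complex.sub_re, Complex.ofReal_re, Complex.div_re, Complex.normSq_mul, Complex.normSq_ofReal,
    Complex.normSq_add_mul_I]
  simp
  have : s ^ 2 + κ ^ 2 ≠ 0 := by positivity
  field_simp

lemma pp_generic (κ u : ℝ) (hκ : 0 < κ) : ∀ᵐ s : ℝ, rho (pp κ s u) ≠ 1 := by
  have h : ∀ᵐ s : ℝ, ∀ n : ℤ, ((u + n) ^ 2 - 1) * κ ^ 2 * s ^ 2 + (- (2 * (u + n) * κ)) * s +
      (1 + ((u + n) ^ 2 - 1) * κ ^ 4) ≠ 0 := by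
    rw [ae_all_iff]
    intro n
    refine quad_null _ _ _ ?_
    rintro ⟨h1, h2, h3⟩
    have hk : κ ^ 2 ≠ 0 := by positivity
    have h4 : (u + n) ^ 2 - 1 = 0 := by simpa [hκ.ne'] using h1
    rw [h4] at h3
    simp at h3
  filter_upwards [h] with s hs h1
  apply hs (-round (pp κ s u).re)
  rw [rho_eq, pp_im _ _ _ hκ] at h1
  generalize (-round (pp κ s u).re) = n at h1
  rw [pp_re _ _ _ hκ] at h1
  have hD : 0 < s ^ 2 + κ ^ 2 := by positivity
  field_simp at h1
  have h2 : (s ^ 2 + κ ^ 2) * (((u + n) ^ 2 - 1) * κ ^ 2 * s ^ 2 + (- (2 * (u + n) * κ)) * s +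
      (1 + ((u + n) ^ 2 - 1) * κ ^ 4)) = 0 := by
    linear_combination h1
  exact (mul_eq_zero.1 h2).resolve_left hD.ne'

lemma pp_meas (κ u : ℝ) : Measurable fun s : ℝ => pp κ s u := by
  unfold pp; fun_prop

lemma hhpp_meas (hf : Good f Y) (κ u : ℝ) : Measurable fun s : ℝ => hh f (pp κ s u) :=
  (hh_meas hf).comp (pp_meas κ u)

lemma pp_abs (κ s u : ℝ) (hκ : 0 < κ) (h : hh f (pp κ s u) ≠ 0) : |s| ≤ 2 := by
  have := pp_supp κ s u hκ h
  rw [abs_le]; constructor <;> nlinarith [sq_nonneg κ]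

lemma HH_cont (hf : Good f Y) : ContinuousOn (fun p : ℝ × ℝ => HH f p.1 p.2) {p | 0 < p.1} := by
  obtain ⟨B, hB0, hB⟩ := hf.bdd
  intro p0 hp0
  apply ContinuousAt.continuousWithinAt
  unfold HH
  have hop : ∀ᶠ p : ℝ × ℝ in nhds p0, 0 < p.1 :=
    (isOpen_lt continuous_const continuous_fst).mem_nhds hp0
  refine continuousAt_of_dominated (bound := (Set.Icc (-2 : ℝ) 2).indicator fun _ => B) ?_ ?_ ?_ ?_
  · exact Filter.Eventually.of_forall fun p => (hhpp_meas hf _ _).aestronglyMeasurable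
  · filter_upwards [hop] with p hp
    refine Filter.Eventually.of_forall fun s => ?_
    by_cases hs : s ∈ Set.Icc (-2 : ℝ) 2
    · rw [Set.indicator_of_mem hs]; exact hh_abs hB0 hB _
    · rw [Set.indicator_of_notMem hs]
      by_contra h
      apply hs
      apply abs_le.1
      apply pp_abs _ _ _ hp
      intro h0
      rw [h0] at h
      simp at h
  · rw [integrable_indicator_iff measurableSet_Icc]
    exact integrableOn_const (by simp)
  · filter_upwards [pp_generic p0.1 p0.2 hp0] with s hs
    have hp0' : 0 < p0.1 := hp0
    refine ContinuousAt.comp (f := fun p : ℝ × ℝ => pp p.1 s p.2) (g := hh f) ?_ ?_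
    · refine hh_contAt hf _ ?_ hs
      rw [pp_im _ _ _ hp0]
      positivity
    · unfold pp
      refine ContinuousAt.sub (by fun_prop) (ContinuousAt.div₀ (by fun_prop) (by fun_prop) ?_)
      apply mul_ne_zero
      · exact_mod_cast hp0'.ne'
      · intro h
        have := congrArg Complex.im h
        simp at this
        exact hp0'.ne' this

lemma HH_per (hf : Good f Y) (κ u : ℝ) (n : ℤ) : HH f κ (u + n) = HH f κ u := by
  unfold HH
  congr 1
  ext s
  rw [← hh_per hf (pp κ s u) n]
  congr 1
  unfold pp
  push_cast
  ring

lemma HH_zero (κ u : ℝ) (hκ : 0 < κ) (h : 2 ≤ κ ^ 2) : HH f κ u = 0 := by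
  unfold HH
  convert integral_zero ℝ ℝ with s
  by_contra h1
  have := pp_supp κ s u hκ h1
  nlinarith [sq_nonneg s]

lemma HH_bdd (hf : Good f Y) {B : ℝ} (hB0 : 0 < B) (hB : ∀ z : ℂ, 0 < z.im → |f z| ≤ B) (κ u : ℝ)
    (hκ : 0 < κ) : |HH f κ u| ≤ 4 * B := by
  have := (bdd_integrable (fun s => (hh f (pp κ s u) : ℂ))
    (Complex.measurable_ofReal.comp (hhpp_meas hf κ u)) B (fun x => by
      rw [Complex.norm_real]; exact hh_abs hB0 hB _) 2 (by norm_num) (fun s hs => by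
        apply pp_abs κ s u hκ; exact_mod_cast hs)).2
  rw [integral_complex_ofReal, Complex.norm_real] at this
  unfold HH
  rw [← Real.norm_eq_abs]
  linarith

noncomputable def HL (f : ℂ → ℝ) (κ : ℝ) (t : UnitAddCircle) : ℂ :=
  (HH f κ (AddCircle.equivIco (1 : ℝ) 0 t : ℝ) : ℂ)

lemma HL_coe (hf : Good f Y) (κ x : ℝ) : HL f κ (x : UnitAddCircle) = (HH f κ x : ℂ) := by
  unfold HL
  congr 1
  have h : (AddCircle.equivIco (1 : ℝ) 0 (x : UnitAddCircle) : ℝ) = x + ((-⌊x⌋ : ℤ) : ℝ) := by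
    refine (AddCircle.coe_equivIco_mk_apply (1 : ℝ) x).trans ?_
    rw [div_one, mul_one, Int.fract]
    push_cast
    ring
  rw [h, HH_per hf]

lemma HL_cont (hf : Good f Y) :
    Continuous fun p : (Set.Ioi (0 : ℝ)) × UnitAddCircle => HL f p.1 p.2 := by
  have hq : IsOpenQuotientMap (Prod.map (id : Set.Ioi (0 : ℝ) → Set.Ioi (0 : ℝ))
      ((↑) : ℝ → UnitAddCircle)) :=
    IsOpenQuotientMap.id.prodMap QuotientAddGroup.isOpenQuotientMap_mk
  rw [hq.isQuotientMap.continuous_iff]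
  have : ((fun p : (Set.Ioi (0 : ℝ)) × UnitAddCircle => HL f p.1 p.2) ∘
      (Prod.map (id : Set.Ioi (0 : ℝ) → Set.Ioi (0 : ℝ)) ((↑) : ℝ → UnitAddCircle))) =
      fun p => (HH f p.1 p.2 : ℂ) := by
    ext p
    exact HL_coe hf _ _
  rw [this]
  apply Complex.continuous_ofReal.comp
  exact (HH_cont hf).comp_continuous (f := fun p : (Set.Ioi (0 : ℝ)) × ℝ => ((p.1 : ℝ), p.2))
    (by fun_prop) fun p => p.1.2

open Classical in
noncomputable def HC (f : ℂ → ℝ) (κ : ℝ) : C(UnitAddCircle, ℂ) :=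
  if h : Continuous (HL f κ) then ⟨HL f κ, h⟩ else 0

lemma HC_apply (hf : Good f Y) (κ : ℝ) (hκ : 0 < κ) (t : UnitAddCircle) : HC f κ t = HL f κ t := by
  have : Continuous (HL f κ) :=
    (HL_cont hf).comp (f := fun t => ((⟨κ, hκ⟩ : Set.Ioi (0 : ℝ)), t)) (by fun_prop)
  rw [HC, dif_pos this]
  rfl

lemma HC_coe (hf : Good f Y) (κ : ℝ) (hκ : 0 < κ) (x : ℝ) :
    HC f κ (x : UnitAddCircle) = (HH f κ x : ℂ) := by
  rw [HC_apply hf κ hκ, HL_coe hf]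

lemma HC_compact (hf : Good f Y) (η : ℝ) (hη : 0 < η) : IsCompact (HC f '' Set.Icc η 3) := by
  have h1 : Continuous fun κ : Set.Ioi (0 : ℝ) => HC f κ := by
    apply ContinuousMap.continuous_of_continuous_uncurry
    convert HL_cont hf using 1
    ext p
    exact HC_apply hf _ p.1.2 _
  have h2 : ContinuousOn (HC f) (Set.Ioi 0) := continuousOn_iff_continuous_domRestrict.2 h1
  exact isCompact_Icc.image_of_continuousOn (h2.mono fun x hx => lt_of_lt_of_le hη hx.1)

lemma HC_norm (hf : Good f Y) {B : ℝ} (hB0 : 0 < B) (hB : ∀ z : ℂ, 0 < z.im → |f z| ≤ B) (κ : ℝ)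
    (hκ : 0 < κ) : ‖HC f κ‖ ≤ 4 * B := by
  rw [ContinuousMap.norm_le _ (by positivity)]
  intro t
  rw [HC_apply hf κ hκ, HL, Complex.norm_real]
  exact HH_bdd hf hB0 hB _ _ hκ

lemma term_approx (hf : Good f Y) {B : ℝ} (hB0 : 0 < B) (hB : ∀ z : ℂ, 0 < z.im → |f z| ≤ B)
    (m : ℤ) (δ : ℝ) (hδ : 0 < δ) (c : ℕ) [NeZero c] :
    ‖(∑ u : (ZMod c)ˣ, ∫ x, GG f m (δ ^ 2) c u x) - ((δ / c : ℝ) : ℂ) * wv c (-m) (HC f (c * δ))‖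
      ≤ 16 * Real.pi * |(m : ℝ)| * B * δ ^ 2 := by
  have hc : (0 : ℝ) < c := by exact_mod_cast NeZero.pos c
  have hκ : 0 < c * δ := by positivity
  rw [wv, Finset.mul_sum, ← Finset.sum_sub_distrib]
  have hu : ∀ u : (ZMod c)ˣ, ‖(∫ x, GG f m (δ ^ 2) c u x) - ((δ / c : ℝ) : ℂ) *
      (ZMod.stdAddChar (((-m : ℤ) : ZMod c) * (u : ZMod c)) *
        HC f (c * δ) (ZMod.toAddCircle ((u⁻¹ : (ZMod c)ˣ) : ZMod c)))‖ ≤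
        δ / c * (16 * Real.pi * |(m : ℝ)| * B * δ / c) := by
    intro u
    rw [GG_subst m δ hδ c u, ← mul_sub, ← mul_sub, norm_mul, norm_mul, AddChar.norm_apply, one_mul,
      Complex.norm_real, Real.norm_of_nonneg (by positivity)]
    gcongr
    rw [ZMod.toAddCircle_apply, HC_coe hf _ hκ, HH, ← integral_complex_ofReal]
    set v : ℝ := (((u⁻¹ : (ZMod c)ˣ) : ZMod c).val : ℕ) / c
    have hm1 : Measurable fun s => ((hh f (pp (c * δ) s v) : ℝ) : ℂ) :=
      Complex.measurable_ofReal.comp (hhpp_meas hf (c * δ) v)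
    have hm2 : Measurable fun s : ℝ => (fourier m ((δ / c * s : ℝ) : UnitAddCircle) : ℂ) := by
      simpa using fourier_meas m (δ / c) 0
    have hb : ∀ s, ‖((hh f (pp (c * δ) s v) : ℝ) : ℂ)‖ ≤ B := fun s => by
      rw [Complex.norm_real]; exact hh_abs hB0 hB _
    have hs : ∀ s, ((hh f (pp (c * δ) s v) : ℝ) : ℂ) ≠ 0 → |s| ≤ 2 := fun s hs => by
      apply pp_abs (c * δ) s v hκ; exact_mod_cast hs
    have i1 := (bdd_integrable _ hm1 B hb 2 (by norm_num) hs).1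
    have i2 := (bdd_integrable (fun s => (fourier m ((δ / c * s : ℝ) : UnitAddCircle) : ℂ) *
        ((hh f (pp (c * δ) s v) : ℝ) : ℂ)) (hm2.mul hm1) B (fun s => by
      rw [norm_mul, fourier_norm, one_mul]; exact hb s) 2 (by norm_num) (fun s h => hs s (by
        intro h0; apply h; rw [h0, mul_zero]))).1
    have i3 := (bdd_integrable (fun s => ((fourier m ((δ / c * s : ℝ) : UnitAddCircle) : ℂ) - 1) *
        ((hh f (pp (c * δ) s v) : ℝ) : ℂ)) ((hm2.sub measurable_const).mul hm1)
        (2 * Real.pi * |(m : ℝ)| * (δ / c * 2) * B) (fun s => by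
      by_cases h0 : ((hh f (pp (c * δ) s v) : ℝ) : ℂ) = 0
      · rw [h0]; simp; positivity
      · rw [norm_mul]
        gcongr
        · refine (fourier_sub_one m _).trans ?_
          rw [abs_mul, abs_of_pos (show 0 < δ / c by positivity)]
          have := hs s h0
          gcongr
        · exact hb s) 2 (by norm_num) (fun s h => hs s (by
        intro h0; apply h; rw [h0, mul_zero]))).2
    rw [← integral_sub i2 i1]
    simp_rw [sub_mul, one_mul] at i3
    refine i3.trans (le_of_eq ?_)
    ring
  refine (norm_sum_le _ _).trans ?_
  calc _ ≤ ∑ u : (ZMod c)ˣ, δ / c * (16 * Real.pi * |(m : ℝ)| * B * δ / c) :=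
        Finset.sum_le_sum fun u _ => hu u
    _ = c.totient * (δ / c * (16 * Real.pi * |(m : ℝ)| * B * δ / c)) := by
        simp [ZMod.card_units_eq_totient]
    _ ≤ c * (δ / c * (16 * Real.pi * |(m : ℝ)| * B * δ / c)) := by
        gcongr
        exact_mod_cast Nat.totient_le c
    _ = 16 * Real.pi * |(m : ℝ)| * B * δ ^ 2 / c := by field_simp
    _ ≤ 16 * Real.pi * |(m : ℝ)| * B * δ ^ 2 := by
        apply div_le_self (by positivity)
        exact_mod_cast NeZero.one_le

lemma dv_part (hf : Good f Y) (m : ℤ) (ε : ℝ) (hε : 0 < ε) : ∃ δ₀ > 0, ∀ δ, 0 < δ → δ < δ₀ →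
    ∑ c ∈ Finset.range ⌈2 / δ⌉₊, δ / (c + 1 : ℕ) * ‖dv (c + 1) m (HC f ((c + 1 : ℕ) * δ))‖ ≤ ε := by
  obtain ⟨B, hB0, hB⟩ := hf.bdd
  set η : ℝ := ε / (16 * B) with hη
  have hη0 : 0 < η := by positivity
  obtain ⟨N₀, hN₀⟩ := dv_small_compact m _ (HC_compact hf η hη0) (ε / 6) (by positivity)
  refine ⟨min 1 (η / (N₀ + 1)), by positivity, fun δ hδ hδ' => ?_⟩
  have hδ1 : δ < 1 := hδ'.trans_le (min_le_left _ _)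
  have hδ2 : δ < η / (N₀ + 1) := hδ'.trans_le (min_le_right _ _)
  have hNle : (⌈2 / δ⌉₊ : ℝ) * δ ≤ 3 := by
    have := (Nat.ceil_lt_add_one (show 0 ≤ 2 / δ by positivity)).le
    calc (⌈2 / δ⌉₊ : ℝ) * δ ≤ (2 / δ + 1) * δ := by gcongr
      _ = 2 + δ := by field_simp
      _ ≤ 3 := by linarith
  have hterm : ∀ c ∈ Finset.range ⌈2 / δ⌉₊,
      δ / (c + 1 : ℕ) * ‖dv (c + 1) m (HC f ((c + 1 : ℕ) * δ))‖ ≤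
      δ * (ε / 6) + if c < ⌊η / δ⌋₊ then 8 * B * δ else 0 := by
    intro c hc
    have hc0 : (0 : ℝ) < (c + 1 : ℕ) := by positivity
    have hκ : 0 < ((c + 1 : ℕ) : ℝ) * δ := by positivity
    by_cases hlt : c < ⌊η / δ⌋₊
    · rw [if_pos hlt]
      have h1 := (norm_dv_le (c + 1) m (HC f ((c + 1 : ℕ) * δ)))
      have h2 := HC_norm hf hB0 hB _ hκ
      calc _ ≤ δ / (c + 1 : ℕ) * (2 * (4 * B) * (c + 1 : ℕ)) := by
            gcongr
            refine h1.trans ?_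
            gcongr
        _ = 8 * B * δ := by field_simp; norm_num
        _ ≤ _ := by
          have : 0 ≤ δ * (ε / 6) := by positivity
          linarith
    · rw [if_neg hlt, add_zero]
      have h1 : η ≤ ((c + 1 : ℕ) : ℝ) * δ := by
        have h2 : η / δ < ⌊η / δ⌋₊ + 1 := Nat.lt_floor_add_one _
        rw [div_lt_iff₀ hδ] at h2
        have h3 : (⌊η / δ⌋₊ : ℝ) + 1 ≤ (c + 1 : ℕ) := by push_cast; gcongr; omega
        nlinarith
      have h2 : ((c + 1 : ℕ) : ℝ) * δ ≤ 3 := by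
        have h3 : ((c + 1 : ℕ) : ℝ) ≤ ⌈2 / δ⌉₊ := by
          exact_mod_cast Finset.mem_range.1 hc
        nlinarith
      have h3 : N₀ ≤ c + 1 := by
        rw [lt_div_iff₀ (by positivity)] at hδ2
        have : (N₀ : ℝ) + 1 < (c + 1 : ℕ) := by
          by_contra h
          push Not at h
          nlinarith
        have h5 : (N₀ : ℝ) < (c + 1 : ℕ) := by linarith
        exact (by exact_mod_cast h5 : N₀ < c + 1).le
      have h4 := hN₀ (c + 1) h3 _ ⟨_, ⟨h1, h2⟩, rfl⟩
      calc _ ≤ δ / (c + 1 : ℕ) * (ε / 6 * (c + 1 : ℕ)) := by gcongr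
        _ = δ * (ε / 6) := by field_simp
  refine (Finset.sum_le_sum hterm).trans ?_
  rw [Finset.sum_add_distrib, Finset.sum_const, Finset.card_range, nsmul_eq_mul,
    ← Finset.sum_filter, Finset.sum_const, nsmul_eq_mul]
  have h5 : ((Finset.filter (fun c => c < ⌊η / δ⌋₊) (Finset.range ⌈2 / δ⌉₊)).card : ℝ) ≤ η / δ := by
    refine le_trans ?_ (Nat.floor_le (show 0 ≤ η / δ by positivity))
    have : Finset.filter (fun c => c < ⌊η / δ⌋₊) (Finset.range ⌈2 / δ⌉₊) ⊆
        Finset.range ⌊η / δ⌋₊ := fun c hc => Finset.mem_range.2 (Finset.mem_filter.1 hc).2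
    have := Finset.card_le_card this
    rw [Finset.card_range] at this
    exact_mod_cast this
  calc _ ≤ 3 * (ε / 6) + η / δ * (8 * B * δ) := by
        rw [← mul_assoc]
        gcongr
    _ = ε := by rw [hη]; field_simp; norm_num

lemma Im_approx (hf : Good f Y) (m : ℤ) (ε : ℝ) (hε : 0 < ε) : ∃ δ₀ > 0, ∀ δ, 0 < δ → δ < δ₀ →
    ‖Im f m (δ ^ 2) - ∑ c ∈ Finset.range ⌈2 / δ⌉₊, ((δ / (c + 1 : ℕ) : ℝ) : ℂ) *
      ex (c + 1) (-m) (HC f ((c + 1 : ℕ) * δ))‖ ≤ ε := by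
  obtain ⟨B, hB0, hB⟩ := hf.bdd
  obtain ⟨δ₁, hδ₁, h1⟩ := dv_part hf (-m) (ε / 2) (by positivity)
  set C : ℝ := 16 * Real.pi * |(m : ℝ)| * B with hC
  have hC0 : 0 ≤ C := by positivity
  refine ⟨min (min (1 / 2) δ₁) (ε / (6 * C + 1)), by positivity, fun δ hδ hδ' => ?_⟩
  have hδ1 : δ < 1 / 2 := hδ'.trans_le ((min_le_left _ _).trans (min_le_left _ _))
  have hδ2 : δ < δ₁ := hδ'.trans_le ((min_le_left _ _).trans (min_le_right _ _))
  have hδ3 : δ < ε / (6 * C + 1) := hδ'.trans_le (min_le_right _ _)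
  specialize h1 δ hδ hδ2
  have hNle : (⌈2 / δ⌉₊ : ℝ) * δ ≤ 3 := by
    have := (Nat.ceil_lt_add_one (show 0 ≤ 2 / δ by positivity)).le
    calc (⌈2 / δ⌉₊ : ℝ) * δ ≤ (2 / δ + 1) * δ := by gcongr
      _ = 2 + δ := by field_simp
      _ ≤ 3 := by linarith
  have hNge : 2 ≤ (⌈2 / δ⌉₊ : ℝ) ^ 2 * δ ^ 2 := by
    have := Nat.le_ceil (2 / δ)
    rw [div_le_iff₀ hδ] at this
    nlinarith
  rw [Im_unfold hf m (δ ^ 2) (by positivity) (by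
    have : δ ^ 2 < 1 / 4 := by nlinarith
    nlinarith [sq_nonneg δ]) _ hNge, ← Finset.sum_sub_distrib]
  refine (norm_sum_le _ _).trans ?_
  calc _ ≤ ∑ c ∈ Finset.range ⌈2 / δ⌉₊, (C * δ ^ 2 +
        δ / (c + 1 : ℕ) * ‖dv (c + 1) (-m) (HC f ((c + 1 : ℕ) * δ))‖) := by
        apply Finset.sum_le_sum
        intro c hc
        have h2 := term_approx hf hB0 hB m δ hδ (c + 1)
        have h3 : ‖((δ / (c + 1 : ℕ) : ℝ) : ℂ) * dv (c + 1) (-m) (HC f ((c + 1 : ℕ) * δ))‖ =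
          δ / (c + 1 : ℕ) * ‖dv (c + 1) (-m) (HC f ((c + 1 : ℕ) * δ))‖ := by
          rw [norm_mul, Complex.norm_real, Real.norm_of_nonneg (by positivity)]
        rw [← h3]
        refine le_trans (le_of_eq ?_) ((norm_add_le _ _).trans (add_le_add h2 le_rfl))
        congr 1
        rw [dv]
        ring
    _ ≤ ε := by
        rw [Finset.sum_add_distrib, Finset.sum_const, Finset.card_range, nsmul_eq_mul]
        rw [lt_div_iff₀ (by positivity)] at hδ3
        nlinarith [mul_nonneg hC0 hδ.le]

lemma Im_ne (hf : Good f Y) (m : ℤ) (hm : m ≠ 0) (ε : ℝ) (hε : 0 < ε) :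
    ∃ δ₀ > 0, ∀ δ, 0 < δ → δ < δ₀ → ‖Im f m (δ ^ 2)‖ ≤ ε := by
  obtain ⟨δ₀, h0, h⟩ := Im_approx hf m ε hε
  refine ⟨δ₀, h0, fun δ h1 h2 => ?_⟩
  have := h δ h1 h2
  simpa [ex, hm] using this

end Horo
end

section
namespace Horo

lemma totient_div (n : ℕ) (hn : 0 < n) :
    (n.totient : ℝ) / n = ∑ k ∈ n.divisors, (ArithmeticFunction.moebius k : ℝ) / k := by
  have h := (ArithmeticFunction.sum_eq_iff_sum_mul_moebius_eq (R := ℝ)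
    (f := fun n => (n.totient : ℝ)) (g := fun n => (n : ℝ))).1 (fun n _ => by
      exact_mod_cast Nat.sum_totient n) n hn
  rw [← h, Nat.sum_divisorsAntidiagonal (f := fun x y => (ArithmeticFunction.moebius x : ℝ) * (y : ℝ)),
    Finset.sum_div]
  refine Finset.sum_congr rfl fun k hk => ?_
  have hk' := Nat.dvd_of_mem_divisors hk
  have hk0 : (k : ℝ) ≠ 0 := by
    have := Nat.pos_of_mem_divisors hk
    positivity
  rw [Nat.cast_div hk' hk0]
  field_simp

lemma sum_moebius : ∑' k : ℕ, (ArithmeticFunction.moebius (k + 1) : ℝ) / ((k + 1 : ℕ) : ℝ) ^ 2 =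
    6 / Real.pi ^ 2 := by
  have h := ArithmeticFunction.LSeries_zeta_mul_Lseries_moebius (s := 2) (by norm_num)
  rw [ArithmeticFunction.LSeries_zeta_eq_riemannZeta (by norm_num), riemannZeta_two] at h
  have hs : LSeriesSummable (fun n => (ArithmeticFunction.moebius n : ℂ)) 2 :=
    ArithmeticFunction.LSeriesSummable_moebius_iff.2 (by norm_num)
  rw [LSeries, hs.tsum_eq_zero_add] at h
  rw [LSeries.term_zero, zero_add] at h
  have h2 : ∀ k : ℕ, LSeries.term (fun n => (ArithmeticFunction.moebius n : ℂ)) 2 (k + 1) =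
      (((ArithmeticFunction.moebius (k + 1) : ℝ) / ((k + 1 : ℕ) : ℝ) ^ 2 : ℝ) : ℂ) := by
    intro k
    rw [LSeries.term_of_ne_zero (by omega)]
    push_cast
    norm_num
  simp_rw [h2] at h
  rw [← Complex.ofReal_tsum] at h
  have h3 : (Real.pi : ℝ) ^ 2 / 6 * ∑' k : ℕ, (ArithmeticFunction.moebius (k + 1) : ℝ) /
      ((k + 1 : ℕ) : ℝ) ^ 2 = 1 := by
    exact_mod_cast h
  have := Real.pi_pos
  field_simp at h3 ⊢
  linarith

noncomputable def TT (K : ℝ → ℝ) (t : ℝ) : ℝ := t * ∑' j : ℕ, K ((j + 1 : ℕ) * t)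

variable {K : ℝ → ℝ} {B : ℝ}

lemma TT_sum (h0 : ∀ x, 2 ≤ x → K x = 0) (t : ℝ) (ht : 0 < t) (M : ℕ) (hM : 2 ≤ (M + 1) * t) :
    TT K t = t * ∑ j ∈ Finset.range M, K ((j + 1 : ℕ) * t) := by
  rw [TT, tsum_eq_sum]
  intro j hj
  apply h0
  have : (M : ℝ) ≤ j := by
    rw [Finset.mem_range] at hj; push Not at hj; exact_mod_cast hj
  push_cast
  nlinarith

lemma TT_bdd (h0 : ∀ x, 2 ≤ x → K x = 0) (hB0 : 0 ≤ B) (hB : ∀ x, 0 < x → |K x| ≤ B) (t : ℝ)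
    (ht : 0 < t) : |TT K t| ≤ 2 * B := by
  rw [TT_sum h0 t ht ⌊2 / t⌋₊ (by
    have := Nat.lt_floor_add_one (2 / t)
    rw [div_lt_iff₀ ht] at this
    exact this.le), abs_mul, abs_of_pos ht]
  have h1 : |∑ j ∈ Finset.range ⌊2 / t⌋₊, K ((j + 1 : ℕ) * t)| ≤ ⌊2 / t⌋₊ * B := by
    refine (Finset.abs_sum_le_sum_abs _ _).trans ?_
    refine (Finset.sum_le_sum fun j _ => hB _ (by positivity)).trans ?_
    simp
  have h2 : (⌊2 / t⌋₊ : ℝ) ≤ 2 / t := Nat.floor_le (by positivity)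
  rw [le_div_iff₀ ht] at h2
  nlinarith

lemma TT_zero (h0 : ∀ x, 2 ≤ x → K x = 0) (t : ℝ) (ht : 2 ≤ t) : TT K t = 0 := by
  rw [TT_sum h0 t (by linarith) 0 (by simpa using ht)]
  simp

lemma TT_lim (h0 : ∀ x, 2 ≤ x → K x = 0) (hB0 : 0 ≤ B) (hB : ∀ x, 0 < x → |K x| ≤ B)
    (hc : ContinuousOn K (Set.Ioi 0)) :
    Filter.Tendsto (TT K) (nhdsWithin 0 (Set.Ioi 0)) (nhds (∫ x in (0 : ℝ)..4, K x)) := by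
  have key : ∀ t, 0 < t → t < 1 → TT K t = ∫ x in (0 : ℝ)..4, K (⌈x / t⌉₊ * t) := by
    intro t ht ht1
    have hM : 2 ≤ (⌈2 / t⌉₊ : ℝ) * t := by
      have := Nat.le_ceil (2 / t); rwa [div_le_iff₀ ht] at this
    have hM2 : (⌈2 / t⌉₊ : ℝ) * t ≤ 4 := by
      have := (Nat.ceil_lt_add_one (show 0 ≤ 2 / t by positivity)).le
      calc (⌈2 / t⌉₊ : ℝ) * t ≤ (2 / t + 1) * t := by gcongr
        _ = 2 + t := by field_simp
        _ ≤ 4 := by linarith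
    set M := ⌈2 / t⌉₊
    rw [TT_sum h0 t ht M (by nlinarith)]
    have hceil : ∀ (j : ℕ) (x : ℝ), x ∈ Set.Ioc (j * t) ((j + 1 : ℕ) * t) → ⌈x / t⌉₊ = j + 1 := by
      intro j x hx
      rw [Nat.ceil_eq_iff (by omega)]
      constructor
      · rw [lt_div_iff₀ ht]; simpa using hx.1
      · rw [div_le_iff₀ ht]; exact hx.2
    have hle : ∀ j : ℕ, (j : ℝ) * t ≤ ((j + 1 : ℕ) : ℝ) * t := fun j => by
      push_cast; nlinarith
    have hint : ∀ j : ℕ, ∫ x in ((j : ℝ) * t)..((j + 1 : ℕ) * t), K (⌈x / t⌉₊ * t) =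
        t * K ((j + 1 : ℕ) * t) := by
      intro j
      have : ∫ x in ((j : ℝ) * t)..((j + 1 : ℕ) * t), K (⌈x / t⌉₊ * t) =
          ∫ x in ((j : ℝ) * t)..((j + 1 : ℕ) * t), K ((j + 1 : ℕ) * t) := by
        apply intervalIntegral.integral_congr_ae
        refine Filter.Eventually.of_forall fun x hx => ?_
        rw [Set.uIoc_of_le (hle j)] at hx
        rw [hceil j x hx]
      rw [this, intervalIntegral.integral_const, smul_eq_mul]
      push_cast
      ring
    have hii : ∀ j : ℕ, IntervalIntegrable (fun x => K (⌈x / t⌉₊ * t)) volume ((j : ℝ) * t)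
        ((j + 1 : ℕ) * t) := by
      intro j
      refine (intervalIntegrable_const (c := K ((j + 1 : ℕ) * t))).congr ?_
      intro x hx
      rw [Set.uIoc_of_le (hle j)] at hx
      simp only
      rw [hceil j x hx]
    have h1 := intervalIntegral.sum_integral_adjacent_intervals (n := M) (a := fun j => (j : ℝ) * t)
      (fun j _ => hii j)
    have hz : ∀ x, (M : ℝ) * t < x → K (⌈x / t⌉₊ * t) = 0 := by
      intro x hx
      apply h0
      have := Nat.le_ceil (x / t)
      rw [div_le_iff₀ ht] at this
      linarith
    have h2 : ∫ x in ((M : ℝ) * t)..4, K (⌈x / t⌉₊ * t) = 0 := by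
      rw [← intervalIntegral.integral_zero (a := (M : ℝ) * t) (b := 4) (μ := volume)]
      apply intervalIntegral.integral_congr_ae
      refine Filter.Eventually.of_forall fun x hx => ?_
      rw [Set.uIoc_of_le hM2] at hx
      exact hz x hx.1
    have h3 : IntervalIntegrable (fun x => K (⌈x / t⌉₊ * t)) volume ((M : ℝ) * t) 4 := by
      refine (intervalIntegrable_const (c := (0 : ℝ))).congr ?_
      intro x hx
      rw [Set.uIoc_of_le hM2] at hx
      exact (hz x hx.1).symm
    have h4 : IntervalIntegrable (fun x => K (⌈x / t⌉₊ * t)) volume ((0 : ℕ) * t) ((M : ℝ) * t) :=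
      IntervalIntegrable.trans_iterate (a := fun j : ℕ => (j : ℝ) * t) (fun j _ => hii j)
    simp only [Nat.cast_zero, zero_mul] at h1 h4
    rw [← intervalIntegral.integral_add_adjacent_intervals h4 h3, h2, add_zero, ← h1,
      Finset.mul_sum]
    exact Finset.sum_congr rfl fun j _ => (hint j).symm
  have hlim : Filter.Tendsto (fun t : ℝ => ∫ x in (0 : ℝ)..4, K (⌈x / t⌉₊ * t))
      (nhdsWithin 0 (Set.Ioi 0)) (nhds (∫ x in (0 : ℝ)..4, K x)) := by
    have hpos : ∀ᶠ t : ℝ in nhdsWithin 0 (Set.Ioi 0), 0 < t := self_mem_nhdsWithin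
    refine intervalIntegral.tendsto_integral_filter_of_dominated_convergence (fun _ => B) ?_ ?_ ?_ ?_
    · refine Filter.Eventually.of_forall fun t => ?_
      have : Measurable (fun n : ℕ => K (n * t)) := measurable_from_top
      exact (this.comp (Nat.measurable_ceil.comp (measurable_id.div_const t))).aestronglyMeasurable
    · filter_upwards [hpos] with t ht
      refine Filter.Eventually.of_forall fun x hx => ?_
      rw [Set.uIoc_of_le (by norm_num)] at hx
      apply hB
      have : 0 < ⌈x / t⌉₊ := Nat.ceil_pos.2 (div_pos hx.1 ht)
      positivity
    · exact intervalIntegrable_const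
    · refine Filter.Eventually.of_forall fun x hx => ?_
      rw [Set.uIoc_of_le (by norm_num)] at hx
      have hcx : ContinuousAt K x := hc.continuousAt (Ioi_mem_nhds hx.1)
      refine hcx.tendsto.comp ?_
      have hu : Filter.Tendsto (fun t : ℝ => x + t) (nhdsWithin 0 (Set.Ioi 0)) (nhds x) := by
        have : Filter.Tendsto (fun t : ℝ => x + t) (nhds 0) (nhds (x + 0)) :=
          (continuous_const.add continuous_id).tendsto 0
        rw [add_zero] at this
        exact this.mono_left nhdsWithin_le_nhds
      refine tendsto_of_tendsto_of_tendsto_of_le_of_le' tendsto_const_nhds hu ?_ ?_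
      · filter_upwards [hpos] with t ht
        have := Nat.le_ceil (x / t)
        rwa [div_le_iff₀ ht] at this
      · filter_upwards [hpos] with t ht
        have := (Nat.ceil_lt_add_one (show 0 ≤ x / t from (div_pos hx.1 ht).le)).le
        calc (⌈x / t⌉₊ : ℝ) * t ≤ (x / t + 1) * t := by gcongr
          _ = x + t := by field_simp
  refine hlim.congr' ?_
  filter_upwards [Ioo_mem_nhdsGT (show (0 : ℝ) < 1 by norm_num)] with t ht
  exact (key t ht.1 ht.2).symm

lemma swap_sum (h0 : ∀ x, 2 ≤ x → K x = 0) (δ : ℝ) (hδ : 0 < δ) :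
    ∑ c ∈ Finset.range ⌈2 / δ⌉₊, δ / (c + 1 : ℕ) * ((c + 1).totient * K ((c + 1 : ℕ) * δ)) =
    ∑' k : ℕ, (ArithmeticFunction.moebius (k + 1) : ℝ) / ((k + 1 : ℕ) : ℝ) ^ 2 *
      TT K ((k + 1 : ℕ) * δ) := by
  have hN : 2 ≤ (⌈2 / δ⌉₊ : ℝ) * δ := by
    have := Nat.le_ceil (2 / δ); rwa [div_le_iff₀ hδ] at this
  set N := ⌈2 / δ⌉₊
  rw [tsum_eq_sum (s := Finset.range N)]
  swap
  · intro k hk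
    rw [TT_zero h0, mul_zero]
    have : (N : ℝ) ≤ k := by
      rw [Finset.mem_range] at hk; push Not at hk; exact_mod_cast hk
    push_cast
    nlinarith
  have e1 : ∀ c ∈ Finset.range N, δ / (c + 1 : ℕ) * ((c + 1).totient * K ((c + 1 : ℕ) * δ)) =
      ∑ k ∈ Finset.range N, if (k + 1) ∣ (c + 1) then
        (ArithmeticFunction.moebius (k + 1) : ℝ) / (k + 1 : ℕ) * (δ * K ((c + 1 : ℕ) * δ)) else 0 := by
    intro c hc
    have h1 := totient_div (c + 1) (by omega)
    have h2 : (c + 1).divisors = ((Finset.range N).filter fun k => (k + 1) ∣ (c + 1)).image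
        (fun k => k + 1) := by
      ext d
      simp only [Nat.mem_divisors, Finset.mem_image, Finset.mem_filter, Finset.mem_range]
      rw [Finset.mem_range] at hc
      constructor
      · rintro ⟨hd, _⟩
        have := Nat.le_of_dvd (by omega) hd
        have := Nat.pos_of_dvd_of_pos hd (by omega)
        exact ⟨d - 1, ⟨by omega, by rwa [Nat.sub_add_cancel this]⟩, by omega⟩
      · rintro ⟨k, ⟨_, h⟩, rfl⟩
        exact ⟨h, by omega⟩
    rw [h2, Finset.sum_image (by intro a _ b _ h; simpa using h)] at h1
    rw [← Finset.sum_filter, ← Finset.sum_mul, ← h1]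
    ring
  rw [Finset.sum_congr rfl e1, Finset.sum_comm]
  refine Finset.sum_congr rfl fun k hk => ?_
  have hk0 : (0 : ℝ) < (k + 1 : ℕ) := by positivity
  have hlt : N < (N / (k + 1) + 1) * (k + 1) := by
    rw [mul_comm]; exact Nat.lt_mul_div_succ N (by omega)
  have hlt' : (N : ℝ) < ((N / (k + 1) : ℕ) + 1) * ((k + 1 : ℕ) : ℝ) := by exact_mod_cast hlt
  rw [TT_sum h0 _ (by positivity) (N / (k + 1)) (by nlinarith), ← Finset.sum_filter,
    ← Finset.mul_sum, ← Finset.mul_sum]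
  have : ∑ c ∈ Finset.range N with (k + 1) ∣ (c + 1), K ((c + 1 : ℕ) * δ) =
      ∑ j ∈ Finset.range (N / (k + 1)), K ((j + 1 : ℕ) * ((k + 1 : ℕ) * δ)) := by
    symm
    refine Finset.sum_bij (fun j _ => (j + 1) * (k + 1) - 1) ?_ ?_ ?_ ?_
    · intro j hj
      rw [Finset.mem_range] at hj
      have h1 : (j + 1) * (k + 1) ≤ N := by
        calc (j + 1) * (k + 1) ≤ (N / (k + 1)) * (k + 1) := by gcongr; omega
          _ ≤ N := Nat.div_mul_le_self _ _
      have h2 : 0 < (j + 1) * (k + 1) := by positivity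
      rw [Finset.mem_filter, Finset.mem_range, Nat.sub_add_cancel h2]
      exact ⟨by omega, Dvd.intro_left _ rfl⟩
    · intro a _ b _ h
      have h1 : 0 < (a + 1) * (k + 1) := by positivity
      have h2 : 0 < (b + 1) * (k + 1) := by positivity
      have h3 : (a + 1) * (k + 1) = (b + 1) * (k + 1) := by omega
      have := Nat.eq_of_mul_eq_mul_right (by omega) h3
      omega
    · intro c hc
      rw [Finset.mem_filter, Finset.mem_range] at hc
      obtain ⟨hc, j, hj⟩ := hc
      have hj0 : 0 < j := by
        rcases Nat.eq_zero_or_pos j with rfl | h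
        · simp at hj
        · exact h
      refine ⟨j - 1, ?_, ?_⟩
      · rw [Finset.mem_range]
        have : j ≤ N / (k + 1) := by
          rw [Nat.le_div_iff_mul_le (by omega), mul_comm]; omega
        omega
      · rw [Nat.sub_add_cancel hj0, mul_comm, ← hj]; omega
    · intro j _
      have h2 : 0 < (j + 1) * (k + 1) := by positivity
      rw [Nat.sub_add_cancel h2]
      push_cast
      ring_nf
  rw [this]
  field_simp

lemma main_term (h0 : ∀ x, 2 ≤ x → K x = 0) (hB0 : 0 ≤ B) (hB : ∀ x, 0 < x → |K x| ≤ B)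
    (hc : ContinuousOn K (Set.Ioi 0)) :
    Filter.Tendsto (fun δ : ℝ => ∑ c ∈ Finset.range ⌈2 / δ⌉₊,
      δ / (c + 1 : ℕ) * ((c + 1).totient * K ((c + 1 : ℕ) * δ)))
      (nhdsWithin 0 (Set.Ioi 0)) (nhds (6 / Real.pi ^ 2 * ∫ x in (0 : ℝ)..4, K x)) := by
  have hpos : ∀ᶠ t : ℝ in nhdsWithin 0 (Set.Ioi 0), 0 < t := self_mem_nhdsWithin
  rw [← sum_moebius, ← tsum_mul_right]
  have : Filter.Tendsto (fun δ : ℝ =>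
      ∑' k : ℕ, (ArithmeticFunction.moebius (k + 1) : ℝ) / ((k + 1 : ℕ) : ℝ) ^ 2 *
      TT K ((k + 1 : ℕ) * δ)) (nhdsWithin 0 (Set.Ioi 0)) (nhds (∑' k : ℕ,
        (ArithmeticFunction.moebius (k + 1) : ℝ) / ((k + 1 : ℕ) : ℝ) ^ 2 *
          ∫ x in (0 : ℝ)..4, K x)) := by
    refine tendsto_tsum_of_dominated_convergence
      (bound := fun k : ℕ => 1 / ((k + 1 : ℕ) : ℝ) ^ 2 * (2 * B)) ?_ ?_ ?_
    · apply Summable.mul_right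
      exact (summable_nat_add_iff 1).2 (Real.summable_one_div_nat_pow.2 (by norm_num))
    · intro k
      apply Filter.Tendsto.const_mul
      refine (TT_lim h0 hB0 hB hc).comp ?_
      rw [tendsto_nhdsWithin_iff]
      constructor
      · have : Filter.Tendsto (fun t : ℝ => ((k + 1 : ℕ) : ℝ) * t) (nhds 0) (nhds (((k + 1 : ℕ) : ℝ) * 0)) :=
          (continuous_const.mul continuous_id).tendsto 0
        rw [mul_zero] at this
        exact this.mono_left nhdsWithin_le_nhds
      · filter_upwards [hpos] with t ht
        change (0 : ℝ) < _
        positivity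
    · filter_upwards [hpos] with t ht k
      rw [norm_mul, norm_div, Real.norm_eq_abs, Real.norm_eq_abs, Real.norm_eq_abs]
      have h1 : |(ArithmeticFunction.moebius (k + 1) : ℝ)| ≤ 1 := by
        exact_mod_cast ArithmeticFunction.abs_moebius_le_one (n := k + 1)
      rw [abs_of_nonneg (show (0 : ℝ) ≤ ((k + 1 : ℕ) : ℝ) ^ 2 by positivity)]
      gcongr
      exact TT_bdd h0 hB0 hB _ (by positivity)
  refine this.congr' ?_
  filter_upwards [hpos] with δ hδ
  exact (swap_sum h0 δ hδ).symm

end Horo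
end

section
namespace Horo
variable {f : ℂ → ℝ} {Y : ℝ}

noncomputable def KK (f : ℂ → ℝ) (κ : ℝ) : ℝ := ∫ u in (0 : ℝ)..1, HH f κ u

noncomputable def hb (f : ℂ → ℝ) (v : ℝ) : ℝ := ∫ u in (0 : ℝ)..1, hh f (u + v * I)

lemma hb_meas (hf : Good f Y) : Measurable (hb f) := by
  have : hb f = fun v : ℝ => ∫ u in Set.Ioc (0 : ℝ) 1, hh f (u + v * I) := by
    ext v
    unfold hb
    rw [intervalIntegral.integral_of_le zero_le_one]
  rw [this]
  apply StronglyMeasurable.measurable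
  apply StronglyMeasurable.integral_prod_right (f := fun v u : ℝ => hh f (u + v * I))
  apply Measurable.stronglyMeasurable
  apply (hh_meas hf).comp
  apply Continuous.measurable
  fun_prop

lemma hb_zero (v : ℝ) (h : v ≤ 3 / 4) : hb f v = 0 := by
  unfold hb
  have : ∀ u : ℝ, hh f (u + v * I) = 0 := fun u => by
    unfold hh
    rw [Set.indicator_of_notMem]
    intro h1
    have := FF_lb h1
    simp at this
    linarith
  simp [this]

lemma hb_abs {B : ℝ} (hB0 : 0 < B) (hB : ∀ z : ℂ, 0 < z.im → |f z| ≤ B) (v : ℝ) :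
    |hb f v| ≤ B := by
  have := intervalIntegral.norm_integral_le_of_norm_le_const (a := 0) (b := 1)
    (f := fun u : ℝ => hh f (u + v * I)) (C := B) (fun x _ => hh_abs hB0 hB _)
  unfold hb
  simpa using this

lemma KK_abs (hf : Good f Y) {B : ℝ} (hB0 : 0 < B) (hB : ∀ z : ℂ, 0 < z.im → |f z| ≤ B) (κ : ℝ)
    (hκ : 0 < κ) : |KK f κ| ≤ 4 * B := by
  have := intervalIntegral.norm_integral_le_of_norm_le_const (a := 0) (b := 1)
    (f := fun u : ℝ => HH f κ u) (C := 4 * B) (fun x _ => HH_bdd hf hB0 hB _ _ hκ)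
  unfold KK
  simpa using this

lemma KK_zero (κ : ℝ) (hκ : 2 ≤ κ) : KK f κ = 0 := by
  unfold KK
  simp [HH_zero (f := f) κ _ (by linarith) (by nlinarith)]

lemma KK_cont (hf : Good f Y) : ContinuousOn (KK f) (Set.Ioi 0) := by
  rw [continuousOn_iff_continuous_domRestrict]
  apply intervalIntegral.continuous_parametric_intervalIntegral_of_continuous'
    (f := fun (κ : Set.Ioi (0 : ℝ)) (u : ℝ) => HH f κ u)
  unfold Function.uncurry
  exact (HH_cont hf).comp_continuous (f := fun p : (Set.Ioi (0 : ℝ)) × ℝ => ((p.1 : ℝ), p.2))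
    (by fun_prop) fun p => p.1.2

lemma KK_eq (hf : Good f Y) (κ : ℝ) (hκ : 0 < κ) :
    KK f κ = ∫ s : ℝ, hb f (1 / (s ^ 2 + κ ^ 2)) := by
  obtain ⟨B, hB0, hB⟩ := hf.bdd
  unfold KK HH
  rw [intervalIntegral_integral_swap]
  · congr 1
    ext s
    have h1 : ∀ u : ℝ, hh f (pp κ s u) = (fun t : ℝ => hh f (t + (1 / (s ^ 2 + κ ^ 2) : ℝ) * I))
        (u + (- (s / (κ * (s ^ 2 + κ ^ 2))))) := fun u => by
      congr 1
      apply Complex.ext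
      · rw [pp_re _ _ _ hκ, Complex.add_re, Complex.re_ofReal_mul, Complex.ofReal_re, Complex.I_re]
        ring
      · rw [pp_im _ _ _ hκ, Complex.add_im, Complex.im_ofReal_mul, Complex.ofReal_im, Complex.I_im]
        ring
    rw [intervalIntegral.integral_congr (fun u _ => h1 u)]
    rw [intervalIntegral.integral_comp_add_right (fun t : ℝ => hh f (t + (1 / (s ^ 2 + κ ^ 2) : ℝ) * I)), zero_add, add_comm (1 : ℝ)]
    rw [Function.Periodic.intervalIntegral_add_eq (T := 1) (t := _) (s := 0), zero_add]
    · rfl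
    · intro x
      have := hh_per hf (x + (1 / (s ^ 2 + κ ^ 2) : ℝ) * I) 1
      refine Eq.trans ?_ this
      simp only
      congr 1
      push_cast
      ring
  · have hs : Function.support (Function.uncurry fun u s : ℝ => hh f (pp κ s u)) ⊆
        Set.univ ×ˢ Set.Icc (-2) 2 := by
      rintro ⟨u, s⟩ h
      refine ⟨trivial, ?_⟩
      exact abs_le.1 (pp_abs κ s u hκ h)
    rw [← integrableOn_iff_integrable_of_support_subset hs]
    apply Measure.integrableOn_of_bounded (M := B)
    · rw [Measure.prod_prod]; simp [ENNReal.mul_eq_top]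
    · apply Measurable.aestronglyMeasurable
      apply (hh_meas hf).comp
      unfold pp
      fun_prop
    · exact Filter.Eventually.of_forall fun p => hh_abs hB0 hB _

lemma rad_int (hf : Good f Y) : Integrable (fun p : ℝ × ℝ => hb f (1 / (p.2 ^ 2 + p.1 ^ 2)))
    (volume.prod volume) := by
  obtain ⟨B, hB0, hB⟩ := hf.bdd
  have hs : Function.support (fun p : ℝ × ℝ => hb f (1 / (p.2 ^ 2 + p.1 ^ 2))) ⊆
      Set.Icc (-2) 2 ×ˢ Set.Icc (-2) 2 := by
    rintro ⟨u, s⟩ h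
    have h1 : 3 / 4 < 1 / (s ^ 2 + u ^ 2) := by
      by_contra h2
      exact h (hb_zero _ (not_lt.1 h2))
    have h2 : 0 < s ^ 2 + u ^ 2 := by
      by_contra h3
      have : s ^ 2 + u ^ 2 = 0 := le_antisymm (not_lt.1 h3) (by positivity)
      rw [this] at h1
      norm_num at h1
    rw [lt_div_iff₀ h2] at h1
    refine ⟨⟨?_, ?_⟩, ⟨?_, ?_⟩⟩ <;> simp only <;> nlinarith
  rw [← integrableOn_iff_integrable_of_support_subset hs]
  apply Measure.integrableOn_of_bounded (M := B)
  · rw [Measure.prod_prod]; simp [ENNReal.mul_eq_top]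
  · apply Measurable.aestronglyMeasurable
    apply (hb_meas hf).comp
    fun_prop
  · exact Filter.Eventually.of_forall fun p => hb_abs hB0 hB _

lemma KK_int (hf : Good f Y) :
    ∫ x in (0 : ℝ)..4, KK f x = Real.pi / 2 * ∫ v in Set.Ioi (0 : ℝ), hb f v / v ^ 2 := by
  have h1 : ∫ x in (0 : ℝ)..4, KK f x = ∫ x in Set.Ioi (0 : ℝ), KK f x := by
    rw [intervalIntegral.integral_of_le (by norm_num)]
    symm
    refine setIntegral_eq_of_subset_of_forall_sdiff_eq_zero measurableSet_Ioi
      (fun x hx => hx.1) fun x hx => ?_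
    apply KK_zero
    by_contra h
    exact hx.2 ⟨hx.1, by linarith⟩
  have h2 : ∫ x in Set.Ioi (0 : ℝ), KK f x =
      ∫ x in Set.Ioi (0 : ℝ), ∫ s : ℝ, hb f (1 / (s ^ 2 + x ^ 2)) :=
    setIntegral_congr_fun measurableSet_Ioi fun x hx => KK_eq hf x hx
  have h3 := integral_comp_abs (f := fun x => ∫ s : ℝ, hb f (1 / (s ^ 2 + x ^ 2)))
  simp only [sq_abs] at h3
  have h4 : ∫ x : ℝ, ∫ s : ℝ, hb f (1 / (s ^ 2 + x ^ 2)) =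
      ∫ z : ℂ, hb f (1 / ‖z‖ ^ 2) := by
    rw [← integral_prod _ (rad_int hf)]
    have := Complex.volume_preserving_equiv_real_prod.integral_comp'
      (fun p : ℝ × ℝ => hb f (1 / (p.2 ^ 2 + p.1 ^ 2)))
    rw [Measure.volume_eq_prod] at this
    rw [← this]
    congr 1
    ext z
    rw [← Complex.normSq_eq_norm_sq, Complex.normSq_apply]
    simp only [Complex.measurableEquivRealProd_apply]
    congr 2
    ring
  have h5 := integral_fun_norm_addHaar (volume : Measure ℂ) (fun r => hb f (1 / r ^ 2))
  rw [Complex.finrank_real_complex] at h5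
  have h6 : (volume : Measure ℂ).real (Metric.ball 0 1) = Real.pi := by
    rw [Measure.real, Complex.volume_ball]; simp
  rw [h6] at h5
  have h7 := integral_comp_rpow_Ioi (fun v => hb f v / v ^ 2) (p := -2) (by norm_num)
  have h8 : ∫ x in Set.Ioi (0 : ℝ), (|(-2 : ℝ)| * x ^ ((-2 : ℝ) - 1)) •
      (hb f (x ^ (-2 : ℝ)) / (x ^ (-2 : ℝ)) ^ 2) =
      2 * ∫ x in Set.Ioi (0 : ℝ), x * hb f (1 / x ^ 2) := by
    rw [← integral_const_mul]
    refine setIntegral_congr_fun measurableSet_Ioi fun x hx => ?_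
    have hx : 0 < x := hx
    have e1 : x ^ (-2 : ℝ) = 1 / x ^ 2 := by
      rw [Real.rpow_neg hx.le]; norm_num
    have e2 : x ^ ((-2 : ℝ) - 1) = 1 / x ^ 3 := by
      rw [show ((-2 : ℝ) - 1) = -((3 : ℕ) : ℝ) by norm_num, Real.rpow_neg hx.le, Real.rpow_natCast]
      norm_num
    simp only [e1, e2, smul_eq_mul]
    rw [abs_of_neg (by norm_num)]
    field_simp
  rw [h8] at h7
  rw [h4, h5] at h3
  simp only [smul_eq_mul, nsmul_eq_mul] at h3
  norm_num at h3
  rw [h1, h2, ← h7]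
  norm_num
  linarith

lemma FF_iff (x y : ℝ) (hx : |x| < 1 / 2) :
    ((x : ℂ) + y * I) ∈ FF ↔ (x, y) ∈ {p : ℝ × ℝ | |p.1| < 1 / 2 ∧ 1 < p.1 ^ 2 + p.2 ^ 2 ∧ 0 < p.2} := by
  have h1 : ‖(x : UnitAddCircle)‖ = |x| := by
    rw [AddCircle.norm_coe_eq_abs_iff 1 one_ne_zero]
    simp; linarith
  unfold FF rho
  simp only [Set.mem_ofPred_eq, Complex.add_re, Complex.add_im, Complex.re_ofReal_mul,
    Complex.im_ofReal_mul, Complex.ofReal_re, Complex.ofReal_im, Complex.I_re, Complex.I_im,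
    mul_zero, add_zero, mul_one, zero_add, h1, sq_abs]
  tauto

noncomputable def MM (f : ℂ → ℝ) : ℝ := (3 / Real.pi) * ∫ p in
  {p : ℝ × ℝ | |p.1| < 1 / 2 ∧ 1 < p.1 ^ 2 + p.2 ^ 2 ∧ 0 < p.2},
    f ((p.1 : ℂ) + p.2 * Complex.I) / p.2 ^ 2

lemma fd_int (hf : Good f Y) : ∫ p in
    {p : ℝ × ℝ | |p.1| < 1 / 2 ∧ 1 < p.1 ^ 2 + p.2 ^ 2 ∧ 0 < p.2},
    f ((p.1 : ℂ) + p.2 * Complex.I) / p.2 ^ 2 = ∫ v in Set.Ioi (0 : ℝ), hb f v / v ^ 2 := by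
  obtain ⟨B, hB0, hB⟩ := hf.bdd
  set S := {p : ℝ × ℝ | |p.1| < 1 / 2 ∧ 1 < p.1 ^ 2 + p.2 ^ 2 ∧ 0 < p.2} with hS
  have hSm : MeasurableSet S := by
    apply IsOpen.measurableSet
    refine IsOpen.and (isOpen_lt ?_ ?_) (IsOpen.and (isOpen_lt ?_ ?_) (isOpen_lt ?_ ?_)) <;> fun_prop
  have hsub : S ⊆ Set.Ioc (-(1 / 2) : ℝ) (1 / 2) ×ˢ Set.Ioi (0 : ℝ) := fun p hp =>
    ⟨⟨(abs_lt.1 hp.1).1, (abs_lt.1 hp.1).2.le⟩, hp.2.2⟩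
  have h1 : ∫ p in S, f ((p.1 : ℂ) + p.2 * Complex.I) / p.2 ^ 2 =
      ∫ p in S, hh f ((p.1 : ℂ) + p.2 * Complex.I) / p.2 ^ 2 := by
    refine setIntegral_congr_fun hSm fun p hp => ?_
    unfold hh
    simp only [Set.indicator_of_mem ((FF_iff _ _ hp.1).2 hp)]
  have h2 : ∫ p in S, hh f ((p.1 : ℂ) + p.2 * Complex.I) / p.2 ^ 2 =
      ∫ p in Set.Ioo (-(1 / 2) : ℝ) (1 / 2) ×ˢ Set.Ioi (0 : ℝ),
        hh f ((p.1 : ℂ) + p.2 * Complex.I) / p.2 ^ 2 := by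
    symm
    refine setIntegral_eq_of_subset_of_forall_sdiff_eq_zero
      (measurableSet_Ioo.prod measurableSet_Ioi) (fun p hp => ⟨abs_lt.1 hp.1, hp.2.2⟩)
      fun p hp => ?_
    unfold hh
    rw [Set.indicator_of_notMem, zero_div]
    intro h
    exact hp.2 ((FF_iff _ _ (abs_lt.2 hp.1.1)).1 h)
  have hint : IntegrableOn (fun p : ℝ × ℝ => hh f ((p.1 : ℂ) + p.2 * Complex.I) / p.2 ^ 2)
      (Set.Ioo (-(1 / 2) : ℝ) (1 / 2) ×ˢ Set.Ioi (0 : ℝ)) (volume.prod volume) := by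
    have : IntegrableOn (fun p : ℝ × ℝ => hh f ((p.1 : ℂ) + p.2 * Complex.I) / p.2 ^ 2)
      (Set.Ioo (-(1 / 2) : ℝ) (1 / 2) ×ˢ Set.Icc (3 / 4 : ℝ) Y) (volume.prod volume) := by
      apply Measure.integrableOn_of_bounded (M := B * 2)
      · rw [Measure.prod_prod]; simp [ENNReal.mul_eq_top]
      · apply Measurable.aestronglyMeasurable
        apply Measurable.div
        · apply (hh_meas hf).comp
          fun_prop
        · fun_prop
      · apply ae_restrict_of_forall_mem (measurableSet_Ioo.prod measurableSet_Icc)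
        intro p hp
        have := hh_abs hB0 hB (p.1 + p.2 * I)
        rw [norm_div, Real.norm_eq_abs, Real.norm_eq_abs, abs_of_nonneg (by positivity : 0 ≤ p.2 ^ 2)]
        have h3 : (1 / 2 : ℝ) ≤ p.2 ^ 2 := by nlinarith [hp.2.1]
        rw [div_le_iff₀ (by linarith)]
        nlinarith
    apply this.of_forall_sdiff_eq_zero (measurableSet_Ioo.prod measurableSet_Ioi)
    intro p hp
    have : hh f (p.1 + p.2 * I) = 0 := by
      by_contra h
      have h1 : ((p.1 : ℂ) + p.2 * I) ∈ FF := Set.mem_of_indicator_ne_zero h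
      have h2 := FF_lb h1
      have h3 : hh f (p.1 + p.2 * I) = f (p.1 + p.2 * I) := Set.indicator_of_mem h1 _
      simp at h2
      refine hp.2 ⟨hp.1.1, h2.le, ?_⟩
      by_contra h4
      rw [h3] at h
      exact h (hf.supp _ (by simpa using h4))
    rw [this, zero_div]
  rw [h1, h2]
  rw [Measure.volume_eq_prod, setIntegral_prod _ hint]
  rw [integral_integral_swap (by rw [Measure.prod_restrict]; exact hint)]
  refine setIntegral_congr_fun measurableSet_Ioi fun v hv => ?_
  simp only
  rw [integral_div]
  congr 1
  rw [← integral_Ioc_eq_integral_Ioo, ← intervalIntegral.integral_of_le (by norm_num)]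
  unfold hb
  have := Function.Periodic.intervalIntegral_add_eq (T := 1) (f := fun u : ℝ => hh f (u + v * I))
    (fun x => by
      have := hh_per hf (x + v * I) 1
      refine Eq.trans ?_ this
      simp only
      congr 1
      push_cast
      ring) (-(1/2)) 0
  rw [show (-(1/2) + 1 : ℝ) = 1 / 2 by norm_num, zero_add] at this
  exact this

lemma Im_zero (hf : Good f Y) (ε : ℝ) (hε : 0 < ε) : ∃ δ₀ > 0, ∀ δ, 0 < δ → δ < δ₀ →
    ‖Im f 0 (δ ^ 2) - (MM f : ℂ)‖ ≤ ε := by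
  obtain ⟨B, hB0, hB⟩ := hf.bdd
  have h1 := main_term (K := KK f) (B := 4 * B) KK_zero (by linarith) (KK_abs hf hB0 hB) (KK_cont hf)
  rw [KK_int hf] at h1
  have hM : 6 / Real.pi ^ 2 * (Real.pi / 2 * ∫ v in Set.Ioi (0 : ℝ), hb f v / v ^ 2) = MM f := by
    unfold MM
    rw [fd_int hf]
    have := Real.pi_ne_zero
    field_simp
    ring
  rw [hM] at h1
  obtain ⟨δ₁, hδ₁, h2⟩ := Im_approx hf 0 (ε / 2) (by linarith)
  have h3 := (Metric.tendsto_nhds.1 h1) (ε / 2) (by linarith)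
  rw [eventually_nhdsWithin_iff, Metric.eventually_nhds_iff] at h3
  obtain ⟨δ₂, hδ₂, h3⟩ := h3
  refine ⟨min δ₁ δ₂, lt_min hδ₁ hδ₂, fun δ h0 hδ => ?_⟩
  have h4 := h2 δ h0 (hδ.trans_le (min_le_left _ _))
  have h5 := h3 (y := δ) (by rw [Real.dist_eq, sub_zero, abs_of_pos h0]; exact hδ.trans_le (min_le_right _ _)) h0
  have h6 : (∑ c ∈ Finset.range ⌈2 / δ⌉₊, ((δ / (c + 1 : ℕ) : ℝ) : ℂ) *
      ex (c + 1) (-0) (HC f ((c + 1 : ℕ) * δ))) = ((∑ c ∈ Finset.range ⌈2 / δ⌉₊,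
      δ / (c + 1 : ℕ) * ((c + 1).totient * KK f ((c + 1 : ℕ) * δ)) : ℝ) : ℂ) := by
    rw [Complex.ofReal_sum]
    refine Finset.sum_congr rfl fun c _ => ?_
    rw [Complex.ofReal_mul]
    congr 1
    unfold ex KK
    rw [if_pos neg_zero, Complex.ofReal_mul, Complex.ofReal_natCast,
      ← intervalIntegral.integral_ofReal]
    congr 2
    ext u
    rw [HC_coe hf _ (by positivity)]
  rw [h6] at h4
  rw [Real.dist_eq, ← Real.norm_eq_abs, ← Complex.norm_real, Complex.ofReal_sub] at h5
  have := norm_sub_le_norm_sub_add_norm_sub (Im f 0 (δ ^ 2)) ((∑ c ∈ Finset.range ⌈2 / δ⌉₊,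
      δ / (c + 1 : ℕ) * ((c + 1).totient * KK f ((c + 1 : ℕ) * δ)) : ℝ) : ℂ) (MM f : ℂ)
  linarith

end Horo
end

section
namespace Horo
variable {f : ℂ → ℝ} {Y : ℝ}

noncomputable def gg (f : ℂ → ℝ) (y t : ℝ) : ℝ := f (t + y * I) - MM f

lemma ff_cont (hf : Good f Y) (y : ℝ) (hy : 0 < y) : Continuous fun t : ℝ => f (t + y * I) :=
  hf.cont.comp_continuous (by fun_prop) fun t => by simpa using hy

lemma gg_cont (hf : Good f Y) (y : ℝ) (hy : 0 < y) : Continuous (gg f y) :=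
  (ff_cont hf y hy).sub continuous_const

lemma gg_per (hf : Good f Y) (y : ℝ) (hy : 0 < y) (t : ℝ) : gg f y (t + 1) = gg f y t := by
  unfold gg
  have := hf.per (t + y * I) (by simpa using hy) 1
  rw [← this]
  congr 2
  push_cast
  ring

lemma gg_bdd (hf : Good f Y) : ∃ C : ℝ, 0 < C ∧ ∀ y, 0 < y → ∀ t, |gg f y t| ≤ C := by
  obtain ⟨B, hB0, hB⟩ := hf.bdd
  refine ⟨B + |MM f|, by positivity, fun y hy t => ?_⟩
  have := hB (t + y * I) (by simpa using hy)
  unfold gg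
  exact (abs_sub _ _).trans (by linarith)

def Sm (f : ℂ → ℝ) (φ : C(UnitAddCircle, ℂ)) : Prop := ∀ η : ℝ, 0 < η → ∃ y₀ : ℝ, 0 < y₀ ∧
  ∀ y, 0 < y → y < y₀ → ∀ s : ℝ,
    ‖∫ τ in (-(1 / 2) : ℝ)..(1 / 2), φ (τ : UnitAddCircle) * (gg f y (s + τ) : ℂ)‖ ≤ η

lemma Sm_int (hf : Good f Y) (φ : C(UnitAddCircle, ℂ)) (y s : ℝ) (hy : 0 < y) (a b : ℝ) :
    IntervalIntegrable (fun τ : ℝ => φ (τ : UnitAddCircle) * (gg f y (s + τ) : ℂ)) volume a b := by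
  apply Continuous.intervalIntegrable
  have := gg_cont hf y hy
  have h2 : Continuous fun τ : ℝ => φ (τ : UnitAddCircle) :=
    φ.continuous.comp (AddCircle.continuous_mk' _)
  fun_prop

lemma Sm_fourier (hf : Good f Y) (m : ℤ) : Sm f (fourier m) := by
  intro η hη
  have key : ∃ δ₀ > 0, ∀ δ, 0 < δ → δ < δ₀ →
      ‖Im f m (δ ^ 2) - (if m = 0 then (MM f : ℂ) else 0)‖ ≤ η := by
    by_cases hm : m = 0
    · subst hm
      simpa using Im_zero hf η hη
    · simpa [hm] using Im_ne hf m hm η hη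
  obtain ⟨δ₀, hδ₀, h⟩ := key
  refine ⟨δ₀ ^ 2, by positivity, fun y hy hy2 s => ?_⟩
  have h1 := h (Real.sqrt y) (Real.sqrt_pos.2 hy) (by rw [Real.sqrt_lt' hδ₀]; exact hy2)
  rw [Real.sq_sqrt hy.le] at h1
  refine le_trans (le_of_eq ?_) h1
  have e1 : ∀ τ : ℝ, (fourier m (τ : UnitAddCircle) : ℂ) * (gg f y (s + τ) : ℂ) =
      fourier m ((-s : ℝ) : UnitAddCircle) *
        ((fun x : ℝ => (fourier m (x : UnitAddCircle) : ℂ) * (gg f y x : ℂ)) (τ + s)) := by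
    intro τ
    have : (τ : UnitAddCircle) = ((-s : ℝ) : UnitAddCircle) + ((τ + s : ℝ) : UnitAddCircle) := by
      rw [← AddCircle.coe_add]; congr 1; ring
    rw [this, fourier_add_arg, add_comm s]
    ring
  rw [intervalIntegral.integral_congr (fun τ _ => e1 τ), intervalIntegral.integral_const_mul,
    norm_mul, fourier_norm, one_mul, intervalIntegral.integral_comp_add_right
    (fun x : ℝ => (fourier m (x : UnitAddCircle) : ℂ) * (gg f y x : ℂ)),
    show (1 / 2 + s : ℝ) = (-(1 / 2) + s) + 1 by ring]
  rw [Function.Periodic.intervalIntegral_add_eq (T := 1) (t := _) (s := 0), zero_add]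
  · congr 1
    unfold Im gg
    simp_rw [Complex.ofReal_sub, mul_sub]
    have hc : Continuous fun τ : ℝ => (fourier m (τ : UnitAddCircle) : ℂ) :=
      (fourier m).continuous.comp (AddCircle.continuous_mk' _)
    have hc2 := ff_cont hf y hy
    rw [intervalIntegral.integral_sub]
    · rw [intervalIntegral.integral_mul_const, integral_fourier']
      congr 1
      split_ifs <;> simp
    · apply Continuous.intervalIntegrable
      exact hc.mul (Complex.continuous_ofReal.comp hc2)
    · apply Continuous.intervalIntegrable
      fun_prop
  · intro x
    simp only [gg_per hf y hy]
    congr 2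
    rw [AddCircle.coe_add]
    simp

lemma Sm_all (hf : Good f Y) (φ : C(UnitAddCircle, ℂ)) : Sm f φ := by
  obtain ⟨C, hC0, hC⟩ := gg_bdd hf
  have h1 : ∀ ψ ∈ Submodule.span ℂ (Set.range (fourier (T := (1 : ℝ)))), Sm f ψ := by
    intro ψ hψ
    induction hψ using Submodule.span_induction with
    | mem x h =>
      obtain ⟨m, rfl⟩ := h
      exact Sm_fourier hf m
    | zero =>
      intro η hη
      refine ⟨1, one_pos, fun y _ _ s => ?_⟩
      simp [hη.le]
    | add x z _ _ hx hz =>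
      intro η hη
      obtain ⟨y1, hy1, h1⟩ := hx (η / 2) (by linarith)
      obtain ⟨y2, hy2, h2⟩ := hz (η / 2) (by linarith)
      refine ⟨min y1 y2, lt_min hy1 hy2, fun y h0 hy s => ?_⟩
      have h3 := h1 y h0 (hy.trans_le (min_le_left _ _)) s
      have h4 := h2 y h0 (hy.trans_le (min_le_right _ _)) s
      simp only [ContinuousMap.add_apply, add_mul]
      rw [intervalIntegral.integral_add (Sm_int hf x y s h0 _ _) (Sm_int hf z y s h0 _ _)]
      exact (norm_add_le _ _).trans (by linarith)
    | smul a x _ hx =>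
      intro η hη
      obtain ⟨y1, hy1, h1⟩ := hx (η / (‖a‖ + 1)) (by positivity)
      refine ⟨y1, hy1, fun y h0 hy s => ?_⟩
      have h3 := h1 y h0 hy s
      simp only [ContinuousMap.smul_apply, smul_eq_mul, mul_assoc]
      rw [intervalIntegral.integral_const_mul, norm_mul]
      rw [le_div_iff₀ (by positivity)] at h3
      nlinarith [norm_nonneg (∫ τ in (-(1 / 2) : ℝ)..(1 / 2), x (τ : UnitAddCircle) * (gg f y (s + τ) : ℂ))]
  intro η hη
  have hφ : φ ∈ closure ((Submodule.span ℂ (Set.range (fourier (T := (1 : ℝ)))) : Submodule ℂ C(UnitAddCircle, ℂ)) : Set C(UnitAddCircle, ℂ)) := by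
    rw [← Submodule.topologicalClosure_coe, span_fourier_closure_eq_top]
    trivial
  obtain ⟨ψ, hψ, hd⟩ := Metric.mem_closure_iff.1 hφ (η / (2 * C)) (by positivity)
  obtain ⟨y1, hy1, h2⟩ := h1 ψ hψ (η / 2) (by linarith)
  refine ⟨y1, hy1, fun y h0 hy s => ?_⟩
  have h3 := h2 y h0 hy s
  have h4 : ‖∫ τ in (-(1 / 2) : ℝ)..(1 / 2), (φ (τ : UnitAddCircle) * (gg f y (s + τ) : ℂ) -
      ψ (τ : UnitAddCircle) * (gg f y (s + τ) : ℂ))‖ ≤ (η / (2 * C) * C) * |1 / 2 - (-(1 / 2))| := by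
    apply intervalIntegral.norm_integral_le_of_norm_le_const
    intro τ _
    rw [← sub_mul, norm_mul, Complex.norm_real]
    apply mul_le_mul _ (hC y h0 _) (abs_nonneg _) (by positivity)
    rw [← dist_eq_norm]
    exact (ContinuousMap.dist_apply_le_dist _).trans hd.le
  rw [intervalIntegral.integral_sub (Sm_int hf _ y s h0 _ _) (Sm_int hf _ y s h0 _ _)] at h4
  rw [show (1 / 2 - (-(1 / 2)) : ℝ) = 1 by norm_num, abs_one, mul_one,
    show η / (2 * C) * C = η / 2 by field_simp] at h4
  have := norm_le_norm_sub_add (∫ τ in (-(1 / 2) : ℝ)..(1 / 2), φ (τ : UnitAddCircle) * (gg f y (s + τ) : ℂ))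
    (∫ τ in (-(1 / 2) : ℝ)..(1 / 2), ψ (τ : UnitAddCircle) * (gg f y (s + τ) : ℂ))
  linarith

lemma shift_bd (g : ℝ → ℝ) (hg : Continuous g) (C : ℝ) (hC : ∀ t, |g t| ≤ C) (a b τ : ℝ) :
    |(∫ s in a..b, g s) - ∫ s in a..b, g (s + τ)| ≤ 2 * C * |τ| := by
  rw [intervalIntegral.integral_comp_add_right]
  have hi : ∀ a b, IntervalIntegrable g volume a b := fun a b => hg.intervalIntegrable a b
  rw [intervalIntegral.integral_interval_sub_interval_comm (hi _ _) (hi _ _) (hi _ _)]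
  have h1 := intervalIntegral.norm_integral_le_of_norm_le_const (a := a) (b := a + τ) (f := g)
    (C := C) fun x _ => hC x
  have h2 := intervalIntegral.norm_integral_le_of_norm_le_const (a := b) (b := b + τ) (f := g)
    (C := C) fun x _ => hC x
  rw [add_sub_cancel_left, Real.norm_eq_abs] at h1 h2
  exact (abs_sub _ _).trans (by linarith)

lemma swap_cont (F : ℝ → ℝ → ℝ) (hF : Continuous (Function.uncurry F)) (a b c d : ℝ) (hcd : c ≤ d) :
    ∫ x in a..b, ∫ y in c..d, F x y = ∫ y in c..d, ∫ x in a..b, F x y := by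
  simp_rw [intervalIntegral.integral_of_le hcd]
  apply intervalIntegral_integral_swap
  rw [Measure.prod_restrict]
  have : IntegrableOn (Function.uncurry F) (Set.uIcc a b ×ˢ Set.Icc c d) (volume.prod volume) :=
    hF.continuousOn.integrableOn_compact (isCompact_uIcc.prod isCompact_Icc)
  exact this.mono_set (Set.prod_mono Set.uIoc_subset_uIcc Set.Ioc_subset_Icc_self)

/-- fixed-interval equidistribution, uniformly in the interval -/
lemma equi (hf : Good f Y) (η : ℝ) (hη : 0 < η) : ∃ y₀ : ℝ, 0 < y₀ ∧ ∀ y, 0 < y → y < y₀ →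
    ∀ a b : ℝ, a ≤ b → |∫ t in a..b, gg f y t| ≤ η * (1 + (b - a)) := by
  obtain ⟨C, hC0, hC⟩ := gg_bdd hf
  set r : ℝ := η / (2 * C) with hr
  have hr0 : 0 < r := by positivity
  set T : UnitAddCircle → ℝ := fun t => max 0 (1 - ‖t‖ / r) with hT
  have hTc : Continuous T := by fun_prop
  have hTr : Continuous fun τ : ℝ => T (τ : UnitAddCircle) :=
    hTc.comp (AddCircle.continuous_mk' _)
  set φ : C(UnitAddCircle, ℂ) := ⟨fun t => (T t : ℂ), by fun_prop⟩ with hφ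
  set N : ℝ := ∫ τ in (-(1 / 2) : ℝ)..(1 / 2), T (τ : UnitAddCircle) with hN
  have hN0 : 0 < N := by
    apply intervalIntegral.integral_pos (by norm_num) hTr.continuousOn
    · intro x _
      exact le_max_left _ _
    · exact ⟨0, ⟨by norm_num, by norm_num⟩, by simp [hT]⟩
  obtain ⟨y₀, hy₀, h⟩ := Sm_all hf φ (η * N) (by positivity)
  refine ⟨y₀, hy₀, fun y h0 hy a b hab => ?_⟩
  have hg := gg_cont hf y h0
  have h1 : ∀ s : ℝ, |∫ τ in (-(1 / 2) : ℝ)..(1 / 2), T (τ : UnitAddCircle) * gg f y (s + τ)| ≤ η * N := by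
    intro s
    have := h y h0 hy s
    rw [← Real.norm_eq_abs, ← Complex.norm_real, ← intervalIntegral.integral_ofReal]
    simpa [hφ] using this
  have h2 : |∫ s in a..b, ∫ τ in (-(1 / 2) : ℝ)..(1 / 2), T (τ : UnitAddCircle) * gg f y (s + τ)| ≤
      η * N * (b - a) := by
    have := intervalIntegral.norm_integral_le_of_norm_le_const (a := a) (b := b) (C := η * N)
      (f := fun s => ∫ τ in (-(1 / 2) : ℝ)..(1 / 2), T (τ : UnitAddCircle) * gg f y (s + τ))
      fun s _ => h1 s
    rwa [abs_of_nonneg (sub_nonneg.2 hab)] at this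
  have h3 : (∫ s in a..b, ∫ τ in (-(1 / 2) : ℝ)..(1 / 2), T (τ : UnitAddCircle) * gg f y (s + τ)) =
      ∫ τ in (-(1 / 2) : ℝ)..(1 / 2), T (τ : UnitAddCircle) * ∫ s in a..b, gg f y (s + τ) := by
    rw [swap_cont _ (by unfold Function.uncurry; fun_prop) _ _ _ _ (by norm_num)]
    simp_rw [intervalIntegral.integral_const_mul]
  rw [h3] at h2
  have hcs : Continuous fun τ : ℝ => ∫ s in a..b, gg f y (s + τ) :=
    intervalIntegral.continuous_parametric_intervalIntegral_of_continuous'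
      (f := fun τ s : ℝ => gg f y (s + τ)) (by fun_prop) a b
  have h4 : |(∫ τ in (-(1 / 2) : ℝ)..(1 / 2), T (τ : UnitAddCircle) * ∫ s in a..b, gg f y s) -
      ∫ τ in (-(1 / 2) : ℝ)..(1 / 2), T (τ : UnitAddCircle) * ∫ s in a..b, gg f y (s + τ)| ≤ η * N := by
    rw [← intervalIntegral.integral_sub]
    · rw [hN, ← intervalIntegral.integral_const_mul, ← Real.norm_eq_abs]
      apply intervalIntegral.norm_integral_le_of_norm_le (by norm_num)
      · refine Filter.Eventually.of_forall fun τ hτ => ?_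
        have hn : ‖(τ : UnitAddCircle)‖ = |τ| := by
          rw [AddCircle.norm_coe_eq_abs_iff 1 one_ne_zero, abs_le]
          simp only [abs_one]
          exact ⟨hτ.1.le, hτ.2⟩
        rw [← mul_sub, norm_mul, Real.norm_eq_abs, Real.norm_eq_abs,
          abs_of_nonneg (le_max_left _ _ : 0 ≤ T (τ : UnitAddCircle)), mul_comm]
        by_cases hτr : |τ| ≤ r
        · apply mul_le_mul_of_nonneg_right _ (le_max_left _ _)
          refine (shift_bd _ hg C (hC y h0) a b τ).trans ?_
          calc 2 * C * |τ| ≤ 2 * C * r := by gcongr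
            _ = η := by rw [hr]; field_simp
        · have : T (τ : UnitAddCircle) = 0 := by
            simp only [hT, hn]
            apply max_eq_left
            rw [sub_nonpos, le_div_iff₀ hr0]
            linarith
          rw [this, mul_zero, show max 0 (1 - ‖(τ : UnitAddCircle)‖ / r) = 0 from this, mul_zero]
      · apply Continuous.intervalIntegrable
        fun_prop
    · apply Continuous.intervalIntegrable
      fun_prop
    · apply Continuous.intervalIntegrable
      fun_prop
  rw [intervalIntegral.integral_mul_const, ← hN] at h4
  have h5 : N * |∫ s in a..b, gg f y s| ≤ N * (η * (1 + (b - a))) := by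
    rw [← abs_of_pos hN0, ← abs_mul, abs_of_pos hN0]
    have := abs_le.1 h4
    have := abs_le.1 h2
    rw [abs_le]
    constructor <;> nlinarith
  exact le_of_mul_le_mul_left h5 hN0

end Horo
end

section
namespace Horo
variable {f : ℂ → ℝ} {Y : ℝ}

lemma dirich (x L : ℝ) (hL : 0 < L) (hL1 : L ≤ 1) : ∃ p q : ℤ, IsCoprime p q ∧ 0 < q ∧
    (q : ℝ) ^ 2 * L ≤ 1 ∧ (q * x - p) ^ 2 ≤ L := by
  set s := Real.sqrt L with hs
  have hs0 : 0 < s := Real.sqrt_pos.2 hL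
  have hs1 : s ≤ 1 := Real.sqrt_le_one.2 hL1
  have hs2 : s ^ 2 = L := Real.sq_sqrt hL.le
  set n := ⌊1 / s⌋₊ with hn
  have hn0 : 0 < n := by
    rw [hn, Nat.floor_pos, le_div_iff₀ hs0]; linarith
  obtain ⟨r, hr1, hr2⟩ := Real.exists_rat_abs_sub_le_and_den_le x hn0
  have hd : (0 : ℝ) < r.den := by exact_mod_cast r.den_pos
  refine ⟨r.num, r.den, ?_, by exact_mod_cast r.den_pos, ?_, ?_⟩
  · exact Rat.isCoprime_num_den r
  · have h1 : (n : ℝ) ≤ 1 / s := Nat.floor_le (by positivity)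
    have h2 : (r.den : ℝ) ≤ n := by exact_mod_cast hr2
    have h3 : (r.den : ℝ) * s ≤ 1 := by
      rw [← le_div_iff₀ hs0]; linarith
    push_cast
    rw [← hs2, ← mul_pow]
    exact pow_le_one₀ (by positivity) h3
  · have h1 : 1 / s < n + 1 := Nat.lt_floor_add_one _
    have hr : (r : ℝ) = r.num / r.den := by exact_mod_cast (Rat.num_div_den r).symm
    have h2 : |(r.den : ℝ) * x - r.num| ≤ s := by
      have : (r.den : ℝ) * x - r.num = r.den * (x - r) := by
        rw [hr]; field_simp
      rw [this, abs_mul, abs_of_pos hd]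
      calc (r.den : ℝ) * |x - r| ≤ r.den * (1 / ((n + 1) * r.den)) := by gcongr
        _ = 1 / (n + 1) := by field_simp
        _ ≤ s := by
          rw [div_le_iff₀ (by positivity)]
          rw [div_lt_iff₀ hs0] at h1
          linarith
    push_cast
    rw [← hs2]
    exact sq_le_sq' (by linarith [(abs_le.1 h2).1]) (abs_le.1 h2).2

lemma pt_approx (A P q ε k θ θ' : ℝ) (hε : 0 < ε) (hP : P ≠ 0)
    (h1 : |A - P| ≤ θ * |P|) (hθ : θ ≤ 1 / 2) (h2 : |q * ε| ≤ θ' * |P|) :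
    (|1 - P ^ 2 / A ^ 2| ≤ 10 * θ ∧ P ^ 2 / A ^ 2 ≤ 4 ∧ A ≠ 0) ∧
    ‖((ε : ℂ) * I / (A * (A + q * ε * I))) - (ε / P ^ 2 : ℝ) * I‖ ≤ (10 * θ + 6 * θ') * (ε / P ^ 2) := by
  have hP0 : 0 < |P| := abs_pos.2 hP
  have hθ0 : 0 ≤ θ := by
    by_contra h
    have := abs_nonneg (A - P)
    nlinarith
  have hA : |P| / 2 ≤ |A| := by
    have := abs_sub_abs_le_abs_sub P A
    rw [abs_sub_comm] at this
    nlinarith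
  have hA0 : 0 < |A| := by linarith
  have hA' : |A| ≤ 3 / 2 * |P| := by
    have := abs_sub_abs_le_abs_sub A P
    nlinarith
  have hAP : |P ^ 2 - A ^ 2| ≤ 5 / 2 * θ * |P| ^ 2 := by
    rw [show P ^ 2 - A ^ 2 = (P - A) * (P + A) by ring, abs_mul, abs_sub_comm]
    have h3 : |P + A| ≤ 5 / 2 * |P| := (abs_add_le _ _).trans (by linarith)
    calc |A - P| * |P + A| ≤ (θ * |P|) * (5 / 2 * |P|) := by gcongr
      _ = _ := by ring
  have hA2 : P ^ 2 / 4 ≤ A ^ 2 := by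
    rw [← sq_abs P, ← sq_abs A]; nlinarith
  have hP2 : 0 < P ^ 2 := by positivity
  have hAne : A ≠ 0 := abs_pos.1 hA0
  refine ⟨⟨?_, ?_, hAne⟩, ?_⟩
  · rw [show 1 - P ^ 2 / A ^ 2 = (A ^ 2 - P ^ 2) / A ^ 2 by field_simp, abs_div, abs_sub_comm,
      abs_of_nonneg (sq_nonneg A), div_le_iff₀ (by linarith)]
    rw [sq_abs] at hAP
    nlinarith
  · rw [div_le_iff₀ (by linarith)]; linarith
  · have hne : ((A : ℂ) + q * ε * I) ≠ 0 := by
      intro h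
      have := congrArg Complex.re h
      simp at this
      exact hAne this
    have hAc : (A : ℂ) ≠ 0 := by exact_mod_cast hAne
    have hPc : (P : ℂ) ≠ 0 := by exact_mod_cast hP
    have e : ((ε : ℂ) * I / (A * (A + q * ε * I))) - (ε / P ^ 2 : ℝ) * I =
        ((ε / P ^ 2 : ℝ) : ℂ) * I * ((((P ^ 2 - A ^ 2 : ℝ) : ℂ) - ((q * ε * A : ℝ) : ℂ) * I) / (A * (A + q * ε * I))) := by
      push_cast
      obtain ⟨D, hD⟩ : ∃ D : ℂ, D = (A : ℂ) + q * ε * I := ⟨_, rfl⟩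
      rw [show (q * ε * A : ℂ) * I = A * (D - A) by rw [hD]; ring, ← hD]
      rw [← hD] at hne
      field_simp
      ring
    have hy : 0 < ε / P ^ 2 := by positivity
    rw [e, norm_mul, norm_mul, Complex.norm_I, mul_one, Complex.norm_real, Real.norm_eq_abs,
      abs_of_pos hy, mul_comm]
    apply mul_le_mul_of_nonneg_right _ hy.le
    have hden : |A| ≤ ‖(A : ℂ) + q * ε * I‖ := by
      have := Complex.abs_re_le_norm ((A : ℂ) + q * ε * I)
      simpa using this
    have hden2 : P ^ 2 / 4 ≤ ‖(A : ℂ) * (A + q * ε * I)‖ := by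
      rw [norm_mul, Complex.norm_real, Real.norm_eq_abs]
      calc P ^ 2 / 4 ≤ A ^ 2 := hA2
        _ = |A| * |A| := by rw [← sq_abs]; ring
        _ ≤ _ := by gcongr
    have hnum : ‖(((P ^ 2 - A ^ 2 : ℝ) : ℂ) - ((q * ε * A : ℝ) : ℂ) * I)‖ ≤
        5 / 2 * θ * P ^ 2 + 3 / 2 * θ' * P ^ 2 := by
      refine (norm_sub_le _ _).trans ?_
      rw [norm_mul, Complex.norm_I, mul_one, Complex.norm_real, Complex.norm_real,
        Real.norm_eq_abs, Real.norm_eq_abs]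
      rw [sq_abs] at hAP
      apply add_le_add hAP
      rw [abs_mul]
      calc |q * ε| * |A| ≤ (θ' * |P|) * (3 / 2 * |P|) := by
            apply mul_le_mul h2 hA' (abs_nonneg _) ((abs_nonneg _).trans h2)
        _ = 3 / 2 * θ' * |P| ^ 2 := by ring
        _ = _ := by rw [sq_abs]
    rw [norm_div, div_le_iff₀ (by linarith)]
    have hθ'0 : 0 ≤ θ' := by
      by_contra h
      have := abs_nonneg (q * ε)
      nlinarith
    nlinarith

lemma window (hf : Good f Y) (k σ : ℝ) (hk : 0 < k) (hk1 : k ≤ 1) (hσ : 0 < σ) :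
    ∃ ρ e : ℝ, 0 < ρ ∧ ρ ≤ 1 ∧ 0 < e ∧ ∀ (L ε x : ℝ) (p q : ℤ), 0 < L → 0 < ε → ε ≤ e * L →
      IsCoprime p q → 0 < q → (q : ℝ) ^ 2 * L ≤ 1 → k ^ 2 * L ≤ (q * x - p) ^ 2 →
      (q * x - p) ^ 2 ≤ L → |∫ τ in (0 : ℝ)..ρ * L, gg f ε (x + τ)| ≤ σ * (ρ * L) := by
  obtain ⟨C, hC0, hC⟩ := gg_bdd hf
  obtain ⟨r, hr0, hr1, hr⟩ := hf.uc (σ / 3) (by linarith)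
  set θ : ℝ := min (1 / 2) (min (r / 20) (σ / (30 * C))) with hθ
  have hθ0 : 0 < θ := by positivity
  have hθ1 : θ ≤ 1 / 2 := min_le_left _ _
  have hθ2 : θ ≤ r / 20 := (min_le_right _ _).trans (min_le_left _ _)
  have hθ3 : θ ≤ σ / (30 * C) := (min_le_right _ _).trans (min_le_right _ _)
  set ρ := k * θ with hρ
  have hρ0 : 0 < ρ := by positivity
  obtain ⟨y₀, hy₀, hE⟩ := equi hf (σ / 3 / (1 / ρ + 4)) (by positivity)
  set e := min (k * (r / 12)) (k ^ 2 * y₀ / 2) with he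
  have he0 : 0 < e := by positivity
  refine ⟨ρ, e, hρ0, by nlinarith, he0, ?_⟩
  intro L ε x p q hL hε hεL hpq hq hqL hk2 hPL
  set P : ℝ := q * x - p with hP
  have hP2 : 0 < P ^ 2 := lt_of_lt_of_le (by positivity) hk2
  have hP0 : P ≠ 0 := by
    intro h; rw [h] at hP2; norm_num at hP2
  have hPa : 0 < |P| := abs_pos.2 hP0
  have hq0 : (0 : ℝ) < q := by exact_mod_cast hq
  have hqP : k * (q * L) ≤ |P| := by
    apply le_of_sq_le_sq _ hPa.le
    rw [sq_abs]
    calc (k * (q * L)) ^ 2 = k ^ 2 * L * (q ^ 2 * L) := by ring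
      _ ≤ k ^ 2 * L * 1 := by gcongr
      _ ≤ _ := by linarith
  have hR0 : 0 < ρ * L := by positivity
  -- local facts
  have hloc : ∀ τ ∈ Set.Icc 0 (ρ * L), |(P + q * τ) - P| ≤ θ * |P| := by
    intro τ hτ
    rw [add_sub_cancel_left, abs_of_nonneg (mul_nonneg hq0.le hτ.1)]
    calc q * τ ≤ q * (ρ * L) := by gcongr; exact hτ.2
      _ = θ * (k * (q * L)) := by rw [hρ]; ring
      _ ≤ _ := by gcongr
  have hqε : |q * ε| ≤ (r / 12) * |P| := by
    rw [abs_of_pos (by positivity)]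
    calc q * ε ≤ q * (k * (r / 12) * L) := by
          gcongr
          exact hεL.trans (by gcongr; exact min_le_left _ _)
      _ = (r / 12) * (k * (q * L)) := by ring
      _ ≤ _ := by gcongr
  set y := ε / P ^ 2 with hy
  have hy0 : 0 < y := by positivity
  have hyy : y < y₀ := by
    rw [hy, div_lt_iff₀ hP2]
    calc ε ≤ (k ^ 2 * y₀ / 2) * L := hεL.trans (by gcongr; exact min_le_right _ _)
      _ < y₀ * (k ^ 2 * L) := by
        have : 0 < k ^ 2 * y₀ * L := by positivity
        linarith
      _ ≤ _ := by gcongr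
  obtain ⟨a', b', hab⟩ := hpq
  set a : ℤ := -a' with ha
  set b : ℤ := -b' with hb
  set X : ℝ → ℝ := fun τ => a / q - 1 / (q * (P + q * τ)) with hX
  have hpt : ∀ τ ∈ Set.Icc 0 (ρ * L), |gg f ε (x + τ) - gg f y (X τ)| ≤ σ / 3 := by
    intro τ hτ
    obtain ⟨⟨-, -, hA⟩, h3⟩ := pt_approx (P + q * τ) P q ε k θ (r / 12) hε hP0 (hloc τ hτ) hθ1 hqε
    have hz : 0 < (((x + τ : ℝ) : ℂ) + ε * I).im := by simpa using hε
    have h4 := hf.inv a b q (-p) (by rw [ha, hb]; linarith) _ hz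
    unfold gg
    rw [sub_sub_sub_cancel_right, ← h4]
    apply hr
    · simpa using hy0
    · have hw : (((X τ : ℝ) : ℂ) + y * I).im = y := by simp
      rw [hw]
      have hqc : (q : ℂ) ≠ 0 := by exact_mod_cast hq0.ne'
      have hAc : ((P : ℂ) + q * τ) ≠ 0 := by exact_mod_cast hA
      have hne : ((P : ℂ) + q * τ + q * ε * I) ≠ 0 := by
        intro h
        have := congrArg Complex.re h
        simp at this
        exact hA this
      have hden : (q : ℂ) * (((x + τ : ℝ) : ℂ) + ε * I) + (-p : ℤ) = (P : ℂ) + q * τ + q * ε * I := by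
        rw [hP]; push_cast; ring
      have hnum : (q : ℂ) * ((a : ℂ) * (((x + τ : ℝ) : ℂ) + ε * I) + b) =
          a * ((P : ℂ) + q * τ + q * ε * I) - 1 := by
        have : ((a' : ℂ) * p + b' * q) = 1 := by exact_mod_cast hab
        rw [← this, hP, ha, hb]; push_cast; ring
      have e1 : ((a : ℂ) * (((x + τ : ℝ) : ℂ) + ε * I) + b) /
          ((q : ℂ) * (((x + τ : ℝ) : ℂ) + ε * I) + (-p : ℤ)) - ((X τ : ℝ) + y * I) =
          ((ε : ℂ) * I / ((P + q * τ : ℝ) * ((P + q * τ : ℝ) + (q : ℝ) * ε * I))) - (ε / P ^ 2 : ℝ) * I := by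
        rw [hden, show (a : ℂ) * (((x + τ : ℝ) : ℂ) + ε * I) + b =
          (a * ((P : ℂ) + q * τ + q * ε * I) - 1) / q by rw [← hnum]; field_simp]
        rw [hX, hy]
        have hPc : (P : ℂ) ≠ 0 := by exact_mod_cast hP0
        push_cast
        rw [sub_eq_iff_eq_add]
        have : ((a * ((P : ℂ) + q * τ + q * ε * I) - 1) / q / ((P : ℂ) + q * τ + q * ε * I)) =
          a / q - 1 / (q * ((P : ℂ) + q * τ + q * ε * I)) := by field_simp
        rw [this]
        have h5 : (ε : ℂ) * I / (((P : ℂ) + q * τ) * ((P : ℂ) + q * τ + q * ε * I)) =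
          1 / (q * ((P : ℂ) + q * τ)) - 1 / (q * ((P : ℂ) + q * τ + q * ε * I)) := by
          obtain ⟨D, hD⟩ : ∃ D : ℂ, D = (P : ℂ) + q * τ + q * ε * I := ⟨_, rfl⟩
          rw [show (ε : ℂ) * I = (D - (P + q * τ)) / q by rw [hD]; field_simp; ring, ← hD]
          rw [← hD] at hne
          field_simp
        rw [h5]
        ring
      rw [e1]
      refine h3.trans ?_
      apply mul_le_mul_of_nonneg_right _ hy0.le
      linarith
  have hIcc : Set.uIcc 0 (ρ * L) = Set.Icc 0 (ρ * L) := Set.uIcc_of_le hR0.le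
  have hAne : ∀ τ ∈ Set.Icc 0 (ρ * L), P + q * τ ≠ 0 := fun τ hτ =>
    (pt_approx (P + q * τ) P q ε k θ (r / 12) hε hP0 (hloc τ hτ) hθ1 hqε).1.2.2
  have hXd : ∀ τ ∈ Set.uIcc 0 (ρ * L), HasDerivAt X (1 / (P + q * τ) ^ 2) τ := by
    intro τ hτ
    rw [hIcc] at hτ
    have hA := hAne τ hτ
    have h1 : HasDerivAt (fun τ : ℝ => P + q * τ) q τ := by
      simpa using ((hasDerivAt_id τ).const_mul (q : ℝ)).const_add P
    have h2 := (((h1.const_mul (q : ℝ)).inv (by positivity)).const_sub ((a : ℝ) / q))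
    have e1 : X = fun x => (a : ℝ) / q - (fun y => (q : ℝ) * (P + q * y))⁻¹ x := by
      ext t; simp [hX]
    have e2 : 1 / (P + q * τ) ^ 2 = -(-((q : ℝ) * q) / (q * (P + q * τ)) ^ 2) := by
      field_simp
    rw [e1, e2]
    exact h2
  have hDc : ContinuousOn (fun τ : ℝ => 1 / (P + q * τ) ^ 2) (Set.uIcc 0 (ρ * L)) := by
    apply ContinuousOn.div continuousOn_const (by fun_prop)
    intro τ hτ
    rw [hIcc] at hτ
    exact pow_ne_zero _ (hAne τ hτ)
  have hXc : ContinuousOn X (Set.uIcc 0 (ρ * L)) := fun τ hτ => (hXd τ hτ).continuousAt.continuousWithinAt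
  have hGc := gg_cont hf y hy0
  have hgc := gg_cont hf ε hε
  have hGX : ContinuousOn (fun τ => gg f y (X τ)) (Set.uIcc 0 (ρ * L)) := hGc.comp_continuousOn hXc
  have hGi : IntervalIntegrable (fun τ => gg f y (X τ)) volume 0 (ρ * L) := hGX.intervalIntegrable
  have hgi : IntervalIntegrable (fun τ => gg f ε (x + τ)) volume 0 (ρ * L) :=
    Continuous.intervalIntegrable (by fun_prop) _ _
  have hDi : IntervalIntegrable (fun τ => gg f y (X τ) * (1 / (P + q * τ) ^ 2)) volume 0 (ρ * L) :=
    (hGX.mul hDc).intervalIntegrable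
  have hsub : ∀ τ ∈ Set.uIoc 0 (ρ * L), τ ∈ Set.Icc 0 (ρ * L) := fun τ hτ => by
    rw [← hIcc]; exact Set.uIoc_subset_uIcc hτ
  have s1 : |(∫ τ in (0 : ℝ)..ρ * L, gg f ε (x + τ)) - ∫ τ in (0 : ℝ)..ρ * L, gg f y (X τ)| ≤
      σ / 3 * (ρ * L) := by
    rw [← intervalIntegral.integral_sub hgi hGi]
    have := intervalIntegral.norm_integral_le_of_norm_le_const (a := 0) (b := ρ * L) (C := σ / 3)
      (f := fun τ => gg f ε (x + τ) - gg f y (X τ)) fun τ hτ => hpt τ (hsub τ hτ)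
    rwa [sub_zero, abs_of_pos hR0] at this
  have s2 : |(∫ τ in (0 : ℝ)..ρ * L, gg f y (X τ)) -
      P ^ 2 * ∫ τ in (0 : ℝ)..ρ * L, gg f y (X τ) * (1 / (P + q * τ) ^ 2)| ≤
      σ / 3 * (ρ * L) := by
    rw [← intervalIntegral.integral_const_mul, ← intervalIntegral.integral_sub hGi (hDi.const_mul _)]
    have := intervalIntegral.norm_integral_le_of_norm_le_const (a := 0) (b := ρ * L) (C := σ / 3)
      (f := fun τ => gg f y (X τ) - P ^ 2 * (gg f y (X τ) * (1 / (P + q * τ) ^ 2))) fun τ hτ => by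
        obtain ⟨⟨h5, -, -⟩, -⟩ := pt_approx (P + q * τ) P q ε k θ (r / 12) hε hP0 (hloc τ (hsub τ hτ)) hθ1 hqε
        rw [show gg f y (X τ) - P ^ 2 * (gg f y (X τ) * (1 / (P + q * τ) ^ 2)) =
          gg f y (X τ) * (1 - P ^ 2 / (P + q * τ) ^ 2) by ring, norm_mul, Real.norm_eq_abs,
          Real.norm_eq_abs]
        calc |gg f y (X τ)| * |1 - P ^ 2 / (P + q * τ) ^ 2| ≤ C * (10 * θ) := by
              apply mul_le_mul (hC y hy0 _) h5 (abs_nonneg _) hC0.le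
          _ ≤ C * (10 * (σ / (30 * C))) := by gcongr
          _ = σ / 3 := by field_simp; norm_num
    rwa [sub_zero, abs_of_pos hR0] at this
  have s3 := intervalIntegral.integral_comp_mul_deriv hXd hDc hGc
  have s4 := intervalIntegral.integral_eq_sub_of_hasDerivAt hXd hDc.intervalIntegrable
  have s5 : 0 ≤ X (ρ * L) - X 0 := by
    rw [← s4]
    apply intervalIntegral.integral_nonneg hR0.le
    intro τ _
    positivity
  have s6 : P ^ 2 * (X (ρ * L) - X 0) ≤ 4 * (ρ * L) := by
    rw [← s4, ← intervalIntegral.integral_const_mul]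
    have := intervalIntegral.norm_integral_le_of_norm_le_const (a := 0) (b := ρ * L) (C := 4)
      (f := fun τ => P ^ 2 * (1 / (P + q * τ) ^ 2)) fun τ hτ => by
        obtain ⟨⟨-, h5, -⟩, -⟩ := pt_approx (P + q * τ) P q ε k θ (r / 12) hε hP0 (hloc τ (hsub τ hτ)) hθ1 hqε
        rw [mul_one_div, Real.norm_eq_abs, abs_of_nonneg (by positivity)]
        exact h5
    rw [sub_zero, abs_of_pos hR0, Real.norm_eq_abs] at this
    exact (le_abs_self _).trans this
  have s7 := hE y hy0 hyy (X 0) (X (ρ * L)) (by linarith)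
  have s8 : |P ^ 2 * ∫ τ in (0 : ℝ)..ρ * L, gg f y (X τ) * (1 / (P + q * τ) ^ 2)| ≤ σ / 3 * (ρ * L) := by
    have : (∫ τ in (0 : ℝ)..ρ * L, gg f y (X τ) * (1 / (P + q * τ) ^ 2)) = ∫ t in X 0..X (ρ * L), gg f y t := s3
    rw [this, abs_mul, abs_of_pos hP2]
    calc P ^ 2 * |∫ t in X 0..X (ρ * L), gg f y t| ≤
        P ^ 2 * (σ / 3 / (1 / ρ + 4) * (1 + (X (ρ * L) - X 0))) := by gcongr
      _ = σ / 3 / (1 / ρ + 4) * (P ^ 2 + P ^ 2 * (X (ρ * L) - X 0)) := by ring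
      _ ≤ σ / 3 / (1 / ρ + 4) * (L + 4 * (ρ * L)) := by gcongr
      _ = σ / 3 * (ρ * L) := by field_simp
  have := abs_le.1 s1
  have := abs_le.1 s2
  have := abs_le.1 s8
  rw [abs_le]
  constructor <;> linarith

end Horo
end

section
namespace Horo
variable {f : ℂ → ℝ} {Y : ℝ}

lemma bad (L k a b : ℝ) (hL : 0 < L) (hL1 : L ≤ 1) (hk : 0 < k) (hk1 : k ≤ 1) (hab : a ≤ b) :
    ∃ S : Set ℝ, MeasurableSet S ∧ volume S ≠ ⊤ ∧ (∀ x ∈ Set.Icc a b, ∀ p q : ℤ, 0 < q →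
      (q : ℝ) ^ 2 * L ≤ 1 → (q * x - p) ^ 2 < k ^ 2 * L → x ∈ S) ∧
      volume.real S ≤ 2 * k * (b - a) + 6 * k * (Real.sqrt L * (1 + Real.log (1 / Real.sqrt L))) := by
  set s := Real.sqrt L with hs
  have hs0 : 0 < s := Real.sqrt_pos.2 hL
  have hs1 : s ≤ 1 := Real.sqrt_le_one.2 hL1
  have hs2 : s ^ 2 = L := Real.sq_sqrt hL.le
  set n := ⌊1 / s⌋₊ with hn
  have hn0 : 0 < n := by
    rw [hn, Nat.floor_pos, le_div_iff₀ hs0]; linarith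
  have hn1 : (n : ℝ) ≤ 1 / s := Nat.floor_le (by positivity)
  set J : ℕ → ℤ → Set ℝ := fun q p => Set.Ioo ((p : ℝ) / q - k * s / q) ((p : ℝ) / q + k * s / q) with hJ
  set R : ℕ → Finset ℤ := fun q => Finset.Icc ⌈(q : ℝ) * a - 1⌉ ⌊(q : ℝ) * b + 1⌋ with hR
  refine ⟨⋃ q ∈ Finset.Icc 1 n, ⋃ p ∈ R q, J q p, ?_, ?_, ?_, ?_⟩
  · refine Finset.measurableSet_biUnion _ fun q _ => Finset.measurableSet_biUnion _ fun p _ => ?_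
    exact measurableSet_Ioo
  · refine (measure_biUnion_lt_top (Finset.finite_toSet _) fun q _ => ?_).ne
    refine measure_biUnion_lt_top (Finset.finite_toSet _) fun p _ => ?_
    simp [hJ]
  · intro x hx p q hq hqL hlt
    have hq0 : (0 : ℝ) < q := by exact_mod_cast hq
    have h1 : |q * x - p| < k * s := by
      apply abs_lt_of_sq_lt_sq _ (by positivity)
      rw [mul_pow, hs2]; exact hlt
    have h2 := abs_lt.1 h1
    have hks : k * s ≤ 1 := mul_le_one₀ hk1 hs0.le hs1
    lift q to ℕ using hq.le
    simp only [Int.cast_natCast] at *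
    have hqs : (q : ℝ) * s ≤ 1 := by
      have : ((q : ℝ) * s) ^ 2 ≤ 1 ^ 2 := by rw [mul_pow, hs2]; linarith
      exact le_of_sq_le_sq this zero_le_one
    simp only [Set.mem_iUnion]
    refine ⟨q, Finset.mem_Icc.2 ⟨by exact_mod_cast hq, ?_⟩, p, Finset.mem_Icc.2 ⟨?_, ?_⟩, ?_, ?_⟩
    · exact Nat.le_floor (by rw [le_div_iff₀ hs0]; exact hqs)
    · rw [Int.ceil_le]
      have : (q : ℝ) * a ≤ q * x := by gcongr; exact hx.1
      linarith
    · rw [Int.le_floor]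
      have : (q : ℝ) * x ≤ q * b := by gcongr; exact hx.2
      linarith
    · rw [← sub_div, div_lt_iff₀ hq0]; linarith
    · rw [← add_div, lt_div_iff₀ hq0]; linarith
  · have hq : ∀ q ∈ Finset.Icc 1 n, volume.real (⋃ p ∈ R q, J q p) ≤
        2 * k * s * (b - a) + 6 * k * s * (q : ℝ)⁻¹ := by
      intro q hq
      have hq0 : (0 : ℝ) < q := by exact_mod_cast (Finset.mem_Icc.1 hq).1
      refine (measureReal_biUnion_finset_le _ _).trans ?_
      have hv : ∀ p ∈ R q, volume.real (J q p) = 2 * k * s / q := by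
        intro p _
        rw [hJ, Real.volume_real_Ioo_of_le]
        · ring
        · have : 0 ≤ k * s / q := by positivity
          linarith
      rw [Finset.sum_congr rfl hv, Finset.sum_const, nsmul_eq_mul]
      have hcard : ((R q).card : ℝ) ≤ q * (b - a) + 3 := by
        rw [hR]
        simp only [Int.card_Icc]
        have h0 : (0 : ℝ) ≤ q * (b - a) + 3 := by
          have : 0 ≤ (q : ℝ) * (b - a) := mul_nonneg hq0.le (by linarith)
          linarith
        have h1 := Int.floor_le ((q : ℝ) * b + 1)
        have h2 := Int.le_ceil ((q : ℝ) * a - 1)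
        rw [← Int.cast_natCast, Int.toNat_eq_max, Int.cast_max]
        apply max_le
        · push_cast
          linarith
        · simpa using h0
      calc ((R q).card : ℝ) * (2 * k * s / q) ≤ (q * (b - a) + 3) * (2 * k * s / q) := by
            gcongr
        _ = _ := by field_simp; ring
    refine (measureReal_biUnion_finset_le _ _).trans ((Finset.sum_le_sum hq).trans ?_)
    rw [Finset.sum_add_distrib, Finset.sum_const, Nat.card_Icc, nsmul_eq_mul, ← Finset.mul_sum]
    have hh : ∑ q ∈ Finset.Icc 1 n, (q : ℝ)⁻¹ ≤ 1 + Real.log (1 / s) := by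
      have h1 := harmonic_le_one_add_log n
      rw [harmonic_eq_sum_Icc] at h1
      push_cast at h1
      have h2 : Real.log n ≤ Real.log (1 / s) := Real.log_le_log (by exact_mod_cast hn0) hn1
      linarith
    have h3 : (n : ℝ) * s ≤ 1 := by rwa [le_div_iff₀ hs0] at hn1
    have h4 : ((n + 1 - 1 : ℕ) : ℝ) * (2 * k * s * (b - a)) ≤ 2 * k * (b - a) := by
      rw [Nat.add_sub_cancel]
      have : 0 ≤ 2 * k * (b - a) := mul_nonneg (by positivity) (by linarith)
      nlinarith
    have h5 : 6 * k * s * ∑ q ∈ Finset.Icc 1 n, (q : ℝ)⁻¹ ≤ 6 * k * s * (1 + Real.log (1 / s)) := by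
      gcongr
    linarith

set_option maxHeartbeats 800000 in
lemma main (hf : Good f Y) (η : ℝ) (hη : 0 < η) : ∃ e κ : ℝ, 0 < e ∧ 0 < κ ∧
    ∀ ε L a b : ℝ, 0 < ε → 0 < L → L ≤ 1 → a ≤ b → ε ≤ e * L →
      Real.sqrt L * (1 + Real.log (1 / Real.sqrt L)) ≤ κ * (b - a) →
      |∫ t in a..b, gg f ε t| ≤ η * (b - a) := by
  obtain ⟨C, hC0, hC⟩ := gg_bdd hf
  set k : ℝ := min 1 (η / (8 * C)) with hk
  have hk0 : 0 < k := by positivity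
  have hk1 : k ≤ 1 := min_le_left _ _
  have hk2 : k ≤ η / (8 * C) := min_le_right _ _
  have hkC : k * C ≤ η / 8 := by
    calc k * C ≤ η / (8 * C) * C := by gcongr
      _ = η / 8 := by field_simp
  obtain ⟨ρ, e, hρ0, hρ1, he, hw⟩ := window hf k (η / 4) hk0 hk1 (by linarith)
  refine ⟨e, η / (32 * C), he, by positivity, ?_⟩
  intro ε L a b hε hL hL1 hab hεL hκ
  set s := Real.sqrt L with hs
  have hs0 : 0 < s := Real.sqrt_pos.2 hL
  have hs1 : s ≤ 1 := Real.sqrt_le_one.2 hL1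
  have hs2 : s ^ 2 = L := Real.sq_sqrt hL.le
  have hlog : 0 ≤ Real.log (1 / s) := Real.log_nonneg (by rw [le_div_iff₀ hs0]; linarith)
  obtain ⟨S, hSm, hSt, hS, hSv⟩ := bad L k a b hL hL1 hk0 hk1 hab
  rw [← hs] at hSv
  set E := s * (1 + Real.log (1 / s)) with hE
  have hLE : L ≤ E := by
    rw [← hs2, hE]
    nlinarith
  have hE0 : 0 ≤ E := hL.le.trans hLE
  have hCE : 32 * C * E ≤ η * (b - a) := by
    rw [div_mul_eq_mul_div, le_div_iff₀ (by positivity)] at hκ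
    linarith
  have hg := gg_cont hf ε hε
  set R := ρ * L with hR
  have hR0 : 0 < R := by positivity
  have hRL : R ≤ L := by rw [hR]; nlinarith
  set W : ℝ → ℝ := fun x => ∫ τ in (0 : ℝ)..R, gg f ε (x + τ) with hW
  have hWc : Continuous W := intervalIntegral.continuous_parametric_intervalIntegral_of_continuous'
      (f := fun x τ : ℝ => gg f ε (x + τ)) (by fun_prop) 0 R
  have hWb : ∀ x, |W x| ≤ C * R := by
    intro x
    have := intervalIntegral.norm_integral_le_of_norm_le_const (a := 0) (b := R) (C := C)
      (f := fun τ => gg f ε (x + τ)) fun τ _ => hC ε hε _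
    rwa [sub_zero, abs_of_pos hR0] at this
  have hWg : ∀ x ∈ Set.Icc a b, x ∉ S → |W x| ≤ η / 4 * R := by
    intro x hx hxS
    obtain ⟨p, q, hpq, hq, hqL, hPL⟩ := dirich x L hL hL1
    refine hw L ε x p q hL hε hεL hpq hq hqL ?_ hPL
    by_contra h
    exact hxS (hS x hx p q hq hqL (not_le.1 h))
  -- integral of W
  have hI : |∫ x in a..b, W x| ≤ η / 4 * R * (b - a) + C * R * volume.real S := by
    have hi1 : IntegrableOn (S.indicator fun _ => C * R) (Set.Ioc a b) :=
      ((integrable_const _).indicator hSm)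
    have h1 : |∫ x in a..b, W x| ≤ ∫ x in a..b, (η / 4 * R + S.indicator (fun _ => C * R) x) := by
      rw [← Real.norm_eq_abs]
      apply intervalIntegral.norm_integral_le_of_norm_le hab
      · refine Filter.Eventually.of_forall fun x hx => ?_
        rw [Real.norm_eq_abs]
        by_cases hxS : x ∈ S
        · rw [Set.indicator_of_mem hxS]
          have := hWb x
          have : 0 < η / 4 * R := by positivity
          linarith
        · rw [Set.indicator_of_notMem hxS, add_zero]
          exact hWg x ⟨hx.1.le, hx.2⟩ hxS
      · rw [intervalIntegrable_iff_integrableOn_Ioc_of_le hab]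
        exact (integrable_const _).add hi1
    refine h1.trans ?_
    rw [intervalIntegral.integral_of_le hab, integral_add (integrable_const _) hi1,
      setIntegral_indicator hSm, setIntegral_const, setIntegral_const, smul_eq_mul, smul_eq_mul,
      Real.volume_real_Ioc_of_le hab]
    have h2 : volume.real (Set.Ioc a b ∩ S) ≤ volume.real S :=
      measureReal_mono Set.inter_subset_right hSt
    have h3 : 0 ≤ C * R := by positivity
    nlinarith
  have hsw : ∫ x in a..b, W x = ∫ τ in (0 : ℝ)..R, ∫ x in a..b, gg f ε (x + τ) :=
    swap_cont (fun x τ => gg f ε (x + τ)) (by unfold Function.uncurry; fun_prop) a b 0 R hR0.le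
  have hcs : Continuous fun τ : ℝ => ∫ s in a..b, gg f ε (s + τ) :=
    intervalIntegral.continuous_parametric_intervalIntegral_of_continuous'
      (f := fun τ s : ℝ => gg f ε (s + τ)) (by fun_prop) a b
  have hd : |R * (∫ t in a..b, gg f ε t) - ∫ x in a..b, W x| ≤ 2 * C * R * R := by
    have e1 : R * (∫ t in a..b, gg f ε t) = ∫ τ in (0 : ℝ)..R, ∫ t in a..b, gg f ε t := by
      rw [intervalIntegral.integral_const, sub_zero, smul_eq_mul]
    rw [e1, hsw, ← intervalIntegral.integral_sub (by simp) (hcs.intervalIntegrable _ _)]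
    have := intervalIntegral.norm_integral_le_of_norm_le_const (a := 0) (b := R) (C := 2 * C * R)
      (f := fun τ => (∫ t in a..b, gg f ε t) - ∫ x in a..b, gg f ε (x + τ)) fun τ hτ => by
        rw [Set.uIoc_of_le hR0.le] at hτ
        refine (shift_bd _ hg C (hC ε hε) a b τ).trans ?_
        rw [abs_of_pos hτ.1]
        have := hτ.2
        gcongr
    rwa [sub_zero, abs_of_pos hR0] at this
  have hfin : R * |∫ t in a..b, gg f ε t| ≤ R * (η * (b - a)) := by
    have e1 : R * |∫ t in a..b, gg f ε t| = |R * ∫ t in a..b, gg f ε t| := by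
      rw [abs_mul, abs_of_pos hR0]
    rw [e1]
    have h1 : |R * ∫ t in a..b, gg f ε t| ≤ 2 * C * R * R + (η / 4 * R * (b - a) + C * R * volume.real S) := by
      have := abs_le.1 hd
      have := abs_le.1 hI
      rw [abs_le]
      constructor <;> linarith
    refine h1.trans ?_
    have h2 : 2 * C * R + η / 4 * (b - a) + C * volume.real S ≤ η * (b - a) := by
      have h3 : C * volume.real S ≤ C * (2 * k * (b - a) + 6 * k * E) := by gcongr
      have h4 : k * C * (b - a) ≤ η / 8 * (b - a) := by
        apply mul_le_mul_of_nonneg_right hkC; linarith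
      have h5 : C * R ≤ C * E := by gcongr; linarith
      have h6 : C * (k * E) ≤ C * E := by
        gcongr
        nlinarith
      have h7 : 0 ≤ η * (b - a) := mul_nonneg hη.le (by linarith)
      linarith
    calc 2 * C * R * R + (η / 4 * R * (b - a) + C * R * volume.real S) =
        R * (2 * C * R + η / 4 * (b - a) + C * volume.real S) := by ring
      _ ≤ _ := mul_le_mul_of_nonneg_left h2 hR0.le
  exact le_of_mul_le_mul_left hfin hR0

lemma finale (hf : Good f Y) (δ : ℝ) (hδ : 0 < δ) (α β : ℝ → ℝ)
    (hαβ : ∀ ε : ℝ, ε ∈ Set.Ioo (0 : ℝ) 1 → ε ^ ((1 : ℝ) / 2 - δ) ≤ β ε - α ε) :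
    Filter.Tendsto
      (fun ε : ℝ =>
        (1 / (β ε - α ε)) * ∫ x in (α ε)..(β ε), f ((x : ℂ) + ε * Complex.I))
      (nhdsWithin 0 (Set.Ioi 0)) (nhds (MM f)) := by
  set d : ℝ := min δ (1 / 2) with hd
  have hd0 : 0 < d := by positivity
  have hd1 : d ≤ δ := min_le_left _ _
  have hd2 : d ≤ 1 / 2 := min_le_right _ _
  rw [Metric.tendsto_nhds]
  intro η hη
  obtain ⟨e, κ, he, hκ, hm⟩ := main hf (η / 2) (by linarith)
  have ev0 : ∀ᶠ ε : ℝ in nhdsWithin 0 (Set.Ioi 0), ε ∈ Set.Ioo (0 : ℝ) 1 :=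
    Ioo_mem_nhdsGT one_pos
  have t1 : Filter.Tendsto (fun ε : ℝ => ε ^ d) (nhdsWithin 0 (Set.Ioi 0)) (nhds 0) := by
    have := (Real.continuousAt_rpow_const 0 d (Or.inr hd0.le)).tendsto
    rw [Real.zero_rpow hd0.ne'] at this
    exact this.mono_left nhdsWithin_le_nhds
  have t1' : Filter.Tendsto (fun ε : ℝ => ε ^ (d / 2)) (nhdsWithin 0 (Set.Ioi 0)) (nhds 0) := by
    have := (Real.continuousAt_rpow_const 0 (d / 2) (Or.inr (by positivity))).tendsto
    rw [Real.zero_rpow (by positivity)] at this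
    exact this.mono_left nhdsWithin_le_nhds
  have t2 : Filter.Tendsto (fun ε : ℝ => ε ^ (d / 2) - (1 - d) / 2 * (Real.log ε * ε ^ (d / 2)))
      (nhdsWithin 0 (Set.Ioi 0)) (nhds 0) := by
    have := t1'.sub ((tendsto_log_mul_rpow_nhdsGT_zero (r := d / 2) (by positivity)).const_mul ((1 - d) / 2))
    simpa using this
  filter_upwards [ev0, t1.eventually (ge_mem_nhds he), t2.eventually (ge_mem_nhds hκ)] with ε hε h1 h2
  obtain ⟨hε0, hε1⟩ := hε
  have hlen := hαβ ε ⟨hε0, hε1⟩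
  have hlen' : ε ^ ((1 : ℝ) / 2 - d) ≤ β ε - α ε :=
    (Real.rpow_le_rpow_of_exponent_ge hε0 hε1.le (by linarith)).trans hlen
  have hpos : 0 < β ε - α ε := lt_of_lt_of_le (Real.rpow_pos_of_pos hε0 _) hlen
  set L := ε ^ (1 - d) with hL
  have hL0 : 0 < L := Real.rpow_pos_of_pos hε0 _
  have hL1 : L ≤ 1 := Real.rpow_le_one hε0.le hε1.le (by linarith)
  have hs : Real.sqrt L = ε ^ ((1 - d) / 2) := by
    rw [Real.sqrt_eq_rpow, hL, ← Real.rpow_mul hε0.le]; congr 1; ring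
  have key := hm ε L (α ε) (β ε) hε0 hL0 hL1 (by linarith) (by
    calc ε = ε ^ d * L := by
          rw [hL, ← Real.rpow_add hε0, show d + (1 - d) = 1 by ring, Real.rpow_one]
      _ ≤ e * L := by gcongr) (by
    rw [hs, one_div, Real.log_inv, Real.log_rpow hε0]
    calc ε ^ ((1 - d) / 2) * (1 + -((1 - d) / 2 * Real.log ε)) =
        ε ^ ((1 : ℝ) / 2 - d) * (ε ^ (d / 2) - (1 - d) / 2 * (Real.log ε * ε ^ (d / 2))) := by
          rw [show (1 - d) / 2 = ((1 : ℝ) / 2 - d) + d / 2 by ring, Real.rpow_add hε0]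
          ring
      _ ≤ ε ^ ((1 : ℝ) / 2 - d) * κ := by gcongr
      _ ≤ (β ε - α ε) * κ := by gcongr
      _ = _ := mul_comm _ _)
  have e1 : (∫ t in α ε..β ε, gg f ε t) = (∫ x in (α ε)..(β ε), f ((x : ℂ) + ε * Complex.I)) -
      (β ε - α ε) * MM f := by
    unfold gg
    rw [intervalIntegral.integral_sub ((ff_cont hf ε hε0).intervalIntegrable _ _) (by simp),
      intervalIntegral.integral_const, smul_eq_mul]
  rw [e1] at key
  rw [Real.dist_eq]
  have e2 : 1 / (β ε - α ε) * (∫ x in (α ε)..(β ε), f ((x : ℂ) + ε * Complex.I)) - MM f =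
      ((∫ x in (α ε)..(β ε), f ((x : ℂ) + ε * Complex.I)) - (β ε - α ε) * MM f) / (β ε - α ε) := by
    field_simp
  rw [e2, abs_div, abs_of_pos hpos, div_lt_iff₀ hpos]
  refine key.trans_lt ?_
  nlinarith

lemma mk_good (hcont : ContinuousOn f {z : ℂ | 0 < z.im})
    (hinv : ∀ a b c d : ℤ, a * d - b * c = 1 → ∀ z : ℂ, 0 < z.im →
      f (((a : ℂ) * z + b) / ((c : ℂ) * z + d)) = f z)
    (hsupp : ∃ Y : ℝ, 0 < Y ∧ ∀ z : ℂ, 0 < z.im →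
      (∃ a b c d : ℤ, a * d - b * c = 1 ∧
        Y < ((((a : ℂ) * z + b) / ((c : ℂ) * z + d)).im)) → f z = 0) : ∃ Y, Good f Y := by
  obtain ⟨Y, hY, h⟩ := hsupp
  refine ⟨max Y 1, hcont, hinv, le_max_right _ _, fun z hz => ?_⟩
  apply h z
  · exact lt_trans (lt_of_lt_of_le one_pos (le_max_right _ _)) hz
  · refine ⟨1, 0, 0, 1, by norm_num, ?_⟩
    simpa using lt_of_le_of_lt (le_max_left _ _) hz

end Horo
end

theorem horocycles_equidistribute_shrinking_intervals
    (f : ℂ → ℝ)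
    (hcont : ContinuousOn f {z : ℂ | 0 < z.im})
    (hinv : ∀ a b c d : ℤ, a * d - b * c = 1 → ∀ z : ℂ, 0 < z.im →
      f (((a : ℂ) * z + b) / ((c : ℂ) * z + d)) = f z)
    (hsupp : ∃ Y : ℝ, 0 < Y ∧ ∀ z : ℂ, 0 < z.im →
      (∃ a b c d : ℤ, a * d - b * c = 1 ∧
        Y < ((((a : ℂ) * z + b) / ((c : ℂ) * z + d)).im)) → f z = 0)
    (δ : ℝ) (hδ : 0 < δ)
    (α β : ℝ → ℝ)
    (hαβ : ∀ ε : ℝ, ε ∈ Set.Ioo (0 : ℝ) 1 → ε ^ ((1 : ℝ) / 2 - δ) ≤ β ε - α ε) :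
    Filter.Tendsto
      (fun ε : ℝ =>
        (1 / (β ε - α ε)) * ∫ x in (α ε)..(β ε), f ((x : ℂ) + ε * Complex.I))
      (nhdsWithin 0 (Set.Ioi 0))
      (nhds ((3 / Real.pi) * ∫ p in fundDom, f ((p.1 : ℂ) + p.2 * Complex.I) / p.2 ^ 2)) := by
  obtain ⟨Y, hf⟩ := Horo.mk_good hcont hinv hsupp
  exact Horo.finale hf δ hδ α β hαβ
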